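/- There is an absolute constant c > 0 such that for every completely multiplicative function f : ℕ → [−1,1] and every real x ≥ 3, one has L_f(x) ≥ −c/(log x)^{1−2/π}. -/

import Mathlib

/-!
All sums are studied on the logarithmic scale `v = log x`; `mconv a ρ v` denotes
`∑_{n ≤ e^v} a(n)/n · ρ(v - log n)`, so that `L_f(e^v)` is `mconv f 1 v`.

*Reduction.* Since `1 * f ≥ 0`, one has `mconv (1 * f) q ≥ 0` for every kernel `q ≥ 0`. The kernel `qker`
is a mixture of two differences of exponentials, the mixing parameter being adjusted by means of Euler's
constant so that `rker = 1_{v ≥ 0} - mconv 1 qker` is `O(e^{-v})`, is Lipschitz with constant `O(e^{-v})`,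
and has a Laplace transform `r̂(s) = 1/s - ζ(1+s) q̂(s)` that vanishes at `s = 0`. Hence
`L_f(e^X) ≥ E(X)` with `E = mconv f rker` (`Lsum_ge`), and it suffices to show `|E(X)| ≪ X^{2/π - 1}`
(`E_decay`).

*The transform of `E`* is `F(1+s) r̂(s)`, with `F` the Dirichlet series of `f`. From
`log |F(1+σ+it)| = ∑_p f(p) p^{-1-σ} cos(t log p) + O(1)` and `f(p) cos θ ≤ |cos θ|`, the Fourier expansion
of `|cos|` bounds `log |F|` by a combination of values of `log |ζ(1+σ+2int)|`. The mean value `2/π` of `|cos|`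
is the coefficient of `log (1/σ)`, and the other coefficients have absolute sum `2/π`, whence
`F(1+σ+it) r̂(σ+it) ≪ σ^{-2/π} (1+|t|)^{-(1-3/(2π))}` (`transform_bound`). The bound for `log |ζ|`
near the 1-line comes from the 3-4-1 inequality.

*Mean values.* As `f log = (Λ f) * f`, one has `v E(v) = mconv (Λ f) E v + O(1)` (`mul_E_eq`). By Plancherel
the mean square of `mconv (Λ f) E` with weight `e^{-2σv}` is an integral over `t` of
`|∑ Λ(n) f(n) n^{-1-s}|² |F(1+s) r̂(s)|²`. Chebyshev's bound and Plancherel give mean squares `O(1/σ)` for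
the first factor over each unit window of `t`, and the second factor squared is summable over the windows because
`2 - 3/π > 1`; the result is `O(σ^{-4/π-1})` (`L2_bound`). Passing from second to first moments on dyadic blocks yields
`∫_0^X |E| ≪ X^{2/π}` (`L1_bound`).

*Pointwise bound.* In `X |E(X)| ≤ ∑_d Λ(d)/d |E(X - log d)| + O(1)` the terms with `log d ≤ X^{2/π} + 1` contribute
`O(X^{2/π})` by Mertens. In the others `E` is replaced by its average over a window of length
`η = X^{-(1-2/π)}`, by the Lipschitz property, and a Brun–Titchmarsh bound for `Λ` in windows of length `η`
(deduced here from Selberg's symmetry formula) bounds the sum by `∫_0^X |E| + O(X^{2/π})`.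
-/


open Finset

noncomputable def Lsum (h : ℕ → ℝ) (x : ℝ) : ℝ := ∑ n ∈ Finset.Icc 1 ⌊x⌋₊, h n / n

def IsCM (f : ℕ → ℝ) : Prop := f 1 = 1 ∧ ∀ m n : ℕ, f (m * n) = f m * f n

/-! ### Plancherel's theorem -/

section
open MeasureTheory FourierTransform SchwartzMap
open scoped ContDiff

/-- On `L¹ ∩ L²` the Fourier integral agrees almost everywhere with the `L²` Fourier transform, by testing
both against smooth compactly supported functions. -/
theorem fourier_l1_ae_eq (φ : ℝ → ℂ) (h1 : Integrable φ) (h2 : MemLp φ 2) :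
    (𝓕 φ) =ᵐ[volume] (𝓕 (h2.toLp φ) : Lp (α := ℝ) ℂ 2) := by
  have hcont : Continuous (𝓕 φ) := by
    exact VectorFourier.fourierIntegral_continuous Real.continuous_fourierChar (by fun_prop) h1
  apply ae_eq_of_integral_contDiff_smul_eq
  · exact hcont.locallyIntegrable
  · exact (Lp.memLp _).locallyIntegrable (by norm_num)
  intro g hg hgs
  let gc : ℝ → ℂ := fun x => (g x : ℂ)
  have hgc : ContDiff ℝ ∞ gc := Complex.ofRealCLM.contDiff.comp hg
  have hgcs : HasCompactSupport gc := hgs.comp_left (g := fun x : ℝ => (x : ℂ)) (by simp)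
  let G : 𝓢(ℝ, ℂ) := hgcs.toSchwartzMap hgc
  have key := DFunLike.congr_fun (Lp.fourier_toTemperedDistribution_eq (h2.toLp φ)) G
  erw [TemperedDistribution.fourier_apply, MeasureTheory.Lp.toTemperedDistribution_apply (μ := volume), MeasureTheory.Lp.toTemperedDistribution_apply (μ := volume)] at key
  have e1 : ∫ x, g x • (𝓕 (h2.toLp φ) : Lp ℂ 2 (volume : Measure ℝ)) x =
      ∫ x, G x • (𝓕 (h2.toLp φ) : Lp ℂ 2 (volume : Measure ℝ)) x := by congr 1
  rw [e1, ← key]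
  have e2 : ∫ x, (𝓕 G) x • (h2.toLp φ) x = ∫ x, (𝓕 G) x • φ x := by
    apply integral_congr_ae
    filter_upwards [h2.coeFn_toLp] with x hx
    rw [hx]
  rw [e2]
  have := VectorFourier.integral_fourierIntegral_smul_eq_flip (L := innerₗ ℝ) (μ := volume) (ν := volume) (e := Real.fourierChar) (f := (G : ℝ → ℂ)) (g := φ) Real.continuous_fourierChar (by fun_prop) G.integrable h1
  rw [show ((𝓕 G : 𝓢(ℝ, ℂ)) : ℝ → ℂ) = 𝓕 (G : ℝ → ℂ) from SchwartzMap.fourier_coe G]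
  simp only [flip_innerₗ] at this
  exact this.symm

theorem plancherel (φ : ℝ → ℂ) (h1 : Integrable φ) (h2 : MemLp φ 2) :
    MemLp (𝓕 φ) 2 ∧ ∫ ξ, ‖𝓕 φ ξ‖ ^ 2 = ∫ v, ‖φ v‖ ^ 2 := by
  have h := fourier_l1_ae_eq φ h1 h2
  have hm : MemLp (𝓕 φ) 2 := (memLp_congr_ae h).2 (Lp.memLp _)
  refine ⟨hm, ?_⟩
  have n1 := Lp.norm_fourier_eq (h2.toLp φ)
  have n2 : ‖h2.toLp φ‖ ^ 2 = ∫ v, ‖φ v‖ ^ 2 := by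
    rw [← @inner_self_eq_norm_sq ℂ, L2.inner_def, ← integral_re (L2.integrable_inner _ _)]
    apply integral_congr_ae
    filter_upwards [h2.coeFn_toLp] with x hx
    rw [hx, inner_self_eq_norm_sq]
  have n3 : ‖𝓕 (h2.toLp φ)‖ ^ 2 = ∫ v, ‖𝓕 φ v‖ ^ 2 := by
    rw [← @inner_self_eq_norm_sq ℂ, L2.inner_def, ← integral_re (L2.integrable_inner _ _)]
    apply integral_congr_ae
    filter_upwards [h] with x hx
    rw [hx, inner_self_eq_norm_sq]
  rw [← n2, ← n3, n1]

/-- Plancherel for the Fourier integral with angular frequency `t = 2πξ`, which is the source of the factor `2π`. -/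
theorem plancherel_angular (φ : ℝ → ℂ) (h1 : Integrable φ) (h2 : MemLp φ 2) :
    Integrable (fun t : ℝ => ‖∫ v, φ v * Complex.exp (-(Complex.I * t * v))‖ ^ 2) ∧
    ∫ t : ℝ, ‖∫ v, φ v * Complex.exp (-(Complex.I * t * v))‖ ^ 2 =
      2 * Real.pi * ∫ v, ‖φ v‖ ^ 2 := by
  obtain ⟨ha, hb⟩ := plancherel φ h1 h2
  have e : ∀ t : ℝ, ∫ v, φ v * Complex.exp (-(Complex.I * t * v)) = 𝓕 φ (t * (2 * Real.pi)⁻¹) := by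
    intro t
    rw [Real.fourier_real_eq_integral_exp_smul]
    congr 1; ext v
    rw [smul_eq_mul, mul_comm]
    congr 2
    have : (Real.pi : ℂ) ≠ 0 := by exact_mod_cast Real.pi_ne_zero
    push_cast
    field_simp
  simp only [e]
  have hp : (2 * Real.pi)⁻¹ ≠ 0 := by positivity
  have hi : Integrable (fun ξ => ‖𝓕 φ ξ‖ ^ 2) := ha.integrable_norm_pow (by norm_num)
  refine ⟨hi.comp_mul_right' hp, ?_⟩
  rw [Measure.integral_comp_mul_right (fun ξ => ‖𝓕 φ ξ‖ ^ 2), hb, smul_eq_mul, inv_inv, abs_of_pos (by positivity)]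

end

/-! ### Chebyshev and Mertens estimates -/

section
open Finset
open scoped ArithmeticFunction.vonMangoldt ArithmeticFunction.Moebius

/-- Summation over pairs `d * m ≤ x`, arranged by `d` or by the product. -/
theorem sum_hyperbola {M : Type*} [AddCommMonoid M] (x : ℝ) (G : ℕ → ℕ → M) :
    ∑ d ∈ Icc 1 ⌊x⌋₊, ∑ m ∈ Icc 1 ⌊x / d⌋₊, G d m =
      ∑ n ∈ Icc 1 ⌊x⌋₊, ∑ p ∈ n.divisorsAntidiagonal, G p.1 p.2 := by
  rw [sum_sigma', sum_sigma']
  refine sum_bij' (fun a _ => ⟨a.1 * a.2, (a.1, a.2)⟩) (fun b _ => ⟨b.2.1, b.2.2⟩) ?_ ?_ ?_ ?_ ?_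
  · rintro ⟨d, m⟩ h
    simp only [mem_sigma, mem_Icc, Nat.floor_div_natCast] at h
    obtain ⟨⟨h1, h2⟩, h3, h4⟩ := h
    have := (Nat.le_div_iff_mul_le h1).1 h4
    simp only [mem_sigma, mem_Icc, Nat.mem_divisorsAntidiagonal]
    have hp : 0 < d * m := Nat.mul_pos h1 h3
    refine ⟨⟨hp, by rwa [mul_comm]⟩, trivial, hp.ne'⟩
  · rintro ⟨n, d, m⟩ h
    simp only [mem_sigma, mem_Icc, Nat.mem_divisorsAntidiagonal] at h
    obtain ⟨⟨h1, h2⟩, h3, h4⟩ := h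
    simp only [mem_sigma, mem_Icc, Nat.floor_div_natCast]
    have hd : 0 < d := Nat.pos_of_ne_zero (by rintro rfl; simp at h3; omega)
    have hm : 0 < m := Nat.pos_of_ne_zero (by rintro rfl; simp at h3; omega)
    refine ⟨⟨hd, ?_⟩, hm, ?_⟩
    · nlinarith
    · rw [Nat.le_div_iff_mul_le hd, mul_comm, h3]; exact h2
  · rintro ⟨d, m⟩ h; rfl
  · rintro ⟨n, d, m⟩ h
    simp only [mem_sigma, Nat.mem_divisorsAntidiagonal] at h
    obtain ⟨_, rfl, _⟩ := h; rfl
  · rintro ⟨d, m⟩ h; rfl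

theorem sum_log_bounds (N : ℕ) (hN : 1 ≤ N) :
    N * Real.log N - N + 1 ≤ ∑ n ∈ Icc 1 N, Real.log n ∧
    ∑ n ∈ Icc 1 N, Real.log n ≤ N * Real.log N - N + 1 + Real.log N := by
  induction N, hN using Nat.le_induction with
  | base => simp
  | succ N hN ih =>
    rw [sum_Icc_succ_top (by omega)]
    have hN0 : (0 : ℝ) < N := by exact_mod_cast hN
    have h1 : Real.log ((N + 1 : ℝ) / N) ≤ (N + 1 : ℝ) / N - 1 := Real.log_le_sub_one_of_pos (by positivity)
    have h2 : Real.log (N / (N + 1 : ℝ)) ≤ N / (N + 1 : ℝ) - 1 := Real.log_le_sub_one_of_pos (by positivity)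
    rw [Real.log_div (by positivity) (by positivity)] at h1 h2
    have e1 : (N : ℝ) * ((N + 1 : ℝ) / N - 1) = 1 := by field_simp; ring
    have e2 : (N + 1 : ℝ) * (N / (N + 1 : ℝ) - 1) = -1 := by field_simp; ring
    have g1 := mul_le_mul_of_nonneg_left h1 hN0.le
    have g2 := mul_le_mul_of_nonneg_left h2 (by positivity : (0 : ℝ) ≤ N + 1)
    rw [e1] at g1
    rw [e2] at g2
    push_cast
    constructor <;> nlinarith [ih.1, ih.2]

theorem abs_sum_log_sub_le (x : ℝ) (hx : 1 ≤ x) :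
    |∑ n ∈ Icc 1 ⌊x⌋₊, Real.log n - (x * Real.log x - x)| ≤ 1 + Real.log x := by
  have hN : 1 ≤ ⌊x⌋₊ := Nat.le_floor (by simpa using hx)
  obtain ⟨h1, h2⟩ := sum_log_bounds _ hN
  have h3 : (⌊x⌋₊ : ℝ) ≤ x := Nat.floor_le (by linarith)
  have h4 : x < ⌊x⌋₊ + 1 := Nat.lt_floor_add_one x
  generalize ⌊x⌋₊ = N at *
  have hN0 : (0 : ℝ) < N := by exact_mod_cast hN
  have hN1 : (1 : ℝ) ≤ N := by exact_mod_cast hN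
  have hx0 : 0 < x := by linarith
  have k1 : Real.log (x / N) ≤ x / N - 1 := Real.log_le_sub_one_of_pos (by positivity)
  have k2 : Real.log (N / x) ≤ N / x - 1 := Real.log_le_sub_one_of_pos (by positivity)
  rw [Real.log_div (by positivity) (by positivity)] at k1 k2
  have e1 : (N : ℝ) * (x / N - 1) = x - N := by field_simp
  have e2 : x * (N / x - 1) = N - x := by field_simp
  have g1 := mul_le_mul_of_nonneg_left k1 hN0.le
  have g2 := mul_le_mul_of_nonneg_left k2 hx0.le
  rw [e1] at g1; rw [e2] at g2
  have l1 : 0 ≤ Real.log N := Real.log_nonneg hN1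
  have l2 : 0 ≤ Real.log x := Real.log_nonneg hx
  have l3 : Real.log N ≤ Real.log x := Real.log_le_log hN0 h3
  rw [abs_le]
  constructor <;> nlinarith

theorem sum_log_eq_sum_psi (x : ℝ) : ∑ n ∈ Icc 1 ⌊x⌋₊, Real.log n =
    ∑ m ∈ Icc 1 ⌊x⌋₊, Chebyshev.psi (x / m) := by
  have := sum_hyperbola x (fun _ m => Λ m)
  calc _ = ∑ n ∈ Icc 1 ⌊x⌋₊, ∑ p ∈ n.divisorsAntidiagonal, Λ p.2 := by
        refine sum_congr rfl fun n _ => ?_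
        rw [← ArithmeticFunction.vonMangoldt_sum, Nat.sum_divisorsAntidiagonal' (f := fun _ m => Λ m)]
    _ = _ := by
        rw [← this]; rfl

theorem sum_log_eq_sum_floor (x : ℝ) : ∑ n ∈ Icc 1 ⌊x⌋₊, Real.log n =
    ∑ d ∈ Icc 1 ⌊x⌋₊, Λ d * ⌊x / d⌋₊ := by
  have := sum_hyperbola x (fun d _ => Λ d)
  calc _ = ∑ n ∈ Icc 1 ⌊x⌋₊, ∑ p ∈ n.divisorsAntidiagonal, Λ p.1 := by
        refine sum_congr rfl fun n _ => ?_
        rw [← ArithmeticFunction.vonMangoldt_sum, Nat.sum_divisorsAntidiagonal (f := fun d _ => Λ d)]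
    _ = _ := by
        rw [← this]; simp [mul_comm]

theorem psi_bound : ∃ C : ℝ, 1 ≤ C ∧ ∀ x : ℝ, 0 ≤ x → Chebyshev.psi x ≤ C * x := by
  refine ⟨max 1 (Real.log 4 + 4), le_max_left _ _, fun x hx => ?_⟩
  exact (Chebyshev.psi_le_const_mul_self hx).trans (mul_le_mul_of_nonneg_right (le_max_right _ _) hx)

/-- Mertens' first theorem for `Λ`. -/
theorem mertens : ∃ C : ℝ, 0 < C ∧ ∀ x : ℝ, 1 ≤ x →
    |∑ d ∈ Icc 1 ⌊x⌋₊, Λ d / d - Real.log x| ≤ C := by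
  obtain ⟨C, hC, hψ⟩ := psi_bound
  refine ⟨C + 3, by linarith, fun x hx => ?_⟩
  have hx0 : 0 < x := by linarith
  have h1 := abs_sum_log_sub_le x hx
  rw [sum_log_eq_sum_floor] at h1
  have h2 : ∑ d ∈ Icc 1 ⌊x⌋₊, Λ d * ⌊x / d⌋₊ ≤ x * ∑ d ∈ Icc 1 ⌊x⌋₊, Λ d / d := by
    rw [mul_sum]
    refine sum_le_sum fun d _ => ?_
    have := Nat.floor_le (show 0 ≤ x / d by positivity)
    calc Λ d * ⌊x / d⌋₊ ≤ Λ d * (x / d) := mul_le_mul_of_nonneg_left this (by simp)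
      _ = _ := by ring
  have h3 : x * ∑ d ∈ Icc 1 ⌊x⌋₊, Λ d / d - Chebyshev.psi x ≤ ∑ d ∈ Icc 1 ⌊x⌋₊, Λ d * ⌊x / d⌋₊ := by
    rw [mul_sum, show Chebyshev.psi x = ∑ d ∈ Icc 1 ⌊x⌋₊, Λ d from rfl, ← sum_sub_distrib]
    refine sum_le_sum fun d _ => ?_
    have := (Nat.lt_floor_add_one (x / d)).le
    have := mul_le_mul_of_nonneg_left this (show 0 ≤ Λ d by simp)
    calc x * (Λ d / d) - Λ d = Λ d * (x / d) - Λ d := by ring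
      _ ≤ _ := by linarith
  have h4 := hψ x hx0.le
  have h5 : Real.log x ≤ x - 1 := Real.log_le_sub_one_of_pos hx0
  rw [abs_le] at h1 ⊢
  constructor
  · refine le_of_mul_le_mul_left ?_ hx0
    nlinarith
  · refine le_of_mul_le_mul_left ?_ hx0
    nlinarith

/-- Harmonic sums to accuracy `1 / x`, with Euler's constant. -/
theorem harmonic_bounds (x : ℝ) (hx : 1 ≤ x) :
    |∑ n ∈ Icc 1 ⌊x⌋₊, (1 : ℝ) / n - Real.log x - Real.eulerMascheroniConstant| ≤ 1 / x := by
  have hN : 1 ≤ ⌊x⌋₊ := Nat.le_floor (by simpa using hx)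
  have h3 : (⌊x⌋₊ : ℝ) ≤ x := Nat.floor_le (by linarith)
  have h4 : x < ⌊x⌋₊ + 1 := Nat.lt_floor_add_one x
  generalize ⌊x⌋₊ = N at *
  have hx0 : 0 < x := by linarith
  have hN0 : (0 : ℝ) < N := by exact_mod_cast hN
  have e : ∑ n ∈ Icc 1 N, (1 : ℝ) / n = (harmonic N : ℝ) := by
    rw [harmonic_eq_sum_Icc]; push_cast; simp
  have a1 := Real.eulerMascheroniSeq_lt_eulerMascheroniConstant N
  have a2 := Real.eulerMascheroniConstant_lt_eulerMascheroniSeq' N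
  rw [Real.eulerMascheroniSeq] at a1
  rw [Real.eulerMascheroniSeq', if_neg (by omega)] at a2
  rw [e]
  have k1 : Real.log ((N + 1 : ℝ) / x) ≤ (N + 1 : ℝ) / x - 1 := Real.log_le_sub_one_of_pos (by positivity)
  have k2 : Real.log (x / N) ≥ 0 := Real.log_nonneg (by rw [le_div_iff₀ hN0]; linarith)
  rw [Real.log_div (by positivity) (by positivity)] at k1 k2 
  have k4 : (N + 1 : ℝ) / x - 1 ≤ 1 / x := by
    rw [div_sub_one hx0.ne', div_le_div_iff_of_pos_right hx0]; linarith
  -- lower bound uses monotonicity of `harmonic N - log N` refined at `N + 1`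
  have b2 := Real.eulerMascheroniConstant_lt_eulerMascheroniSeq' (N + 1)
  rw [Real.eulerMascheroniSeq', if_neg (by omega), harmonic_succ] at b2
  push_cast at b2
  have k5 : Real.log (x / (N + 1)) ≤ 0 := Real.log_nonpos (by positivity) (by rw [div_le_one (by positivity)]; linarith)
  rw [Real.log_div (by positivity) (by positivity)] at k5
  have k6 : ((N : ℝ) + 1)⁻¹ ≤ 1 / x := by
    rw [one_div]; exact inv_anti₀ hx0 h4.le
  rw [abs_le]
  constructor
  · linarith
  · linarith

end

/-! ### Selberg's formula and primes in short intervals -/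

section
open Finset
open scoped ArithmeticFunction.vonMangoldt ArithmeticFunction.Moebius

/-- The Tatuzawa–Iseki identity: Möbius inversion with a logarithmic weight. -/
theorem tatuzawa_iseki (h : ℝ → ℝ) (x : ℝ) (hx : 1 ≤ x) :
    ∑ d ∈ Icc 1 ⌊x⌋₊, (μ d : ℝ) * Real.log (x / d) * ∑ m ∈ Icc 1 ⌊x / d⌋₊, h (x / d / m) =
      h x * Real.log x + ∑ n ∈ Icc 1 ⌊x⌋₊, Λ n * h (x / n) := by
  have hx0 : 0 < x := by linarith
  have hN : 1 ≤ ⌊x⌋₊ := Nat.le_floor (by simpa using hx)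
  simp only [mul_sum]
  rw [sum_hyperbola x (fun d m => (μ d : ℝ) * Real.log (x / d) * h (x / d / m))]
  have key : ∀ n ∈ Icc 1 ⌊x⌋₊, ∑ p ∈ n.divisorsAntidiagonal, (μ p.1 : ℝ) * Real.log (x / p.1) * h (x / p.1 / p.2) =
      (if n = 1 then h x * Real.log x else 0) + Λ n * h (x / n) := by
    intro n hn
    have hn1 : 1 ≤ n := (mem_Icc.1 hn).1
    have hn0 : (0 : ℝ) < n := by exact_mod_cast hn1
    have e1 : ∀ p ∈ n.divisorsAntidiagonal, (μ p.1 : ℝ) * Real.log (x / p.1) * h (x / p.1 / p.2) =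
        (μ p.1 : ℝ) * (Real.log (x / n) * h (x / n)) + (μ p.1 : ℝ) * Real.log p.2 * h (x / n) := by
      intro p hp
      obtain ⟨hp, hne⟩ := Nat.mem_divisorsAntidiagonal.1 hp
      have hp' : (n : ℝ) = p.1 * p.2 := by rw [← hp]; push_cast; rfl
      have p1 : (p.1 : ℝ) ≠ 0 := by intro h0; rw [h0, zero_mul] at hp'; exact hn0.ne' hp'
      have p2 : (p.2 : ℝ) ≠ 0 := by intro h0; rw [h0, mul_zero] at hp'; exact hn0.ne' hp'
      rw [div_div, ← hp', Real.log_div hx0.ne' p1, Real.log_div hx0.ne' hn0.ne', hp', Real.log_mul p1 p2]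
      ring
    rw [sum_congr rfl e1, sum_add_distrib, ← sum_mul, ← sum_mul]
    have e2 : ∑ p ∈ n.divisorsAntidiagonal, (μ p.1 : ℝ) = if n = 1 then 1 else 0 := by
      rw [Nat.sum_divisorsAntidiagonal (f := fun d _ => (μ d : ℝ))]
      have := congrArg (fun F => F n) (ArithmeticFunction.moebius_mul_coe_zeta)
      simp only [ArithmeticFunction.coe_mul_zeta_apply, ArithmeticFunction.one_apply] at this
      exact_mod_cast this
    have e3 : ∑ p ∈ n.divisorsAntidiagonal, (μ p.1 : ℝ) * Real.log p.2 = Λ n := by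
      rw [← ArithmeticFunction.moebius_mul_log_eq_vonMangoldt, ArithmeticFunction.mul_apply]
      simp
    rw [e2, e3]
    split_ifs with h1
    · subst h1; simp; ring
    · simp
  rw [sum_congr rfl key, sum_add_distrib, sum_ite_eq' (Icc 1 ⌊x⌋₊) 1, if_pos (by simp [hN])]

end

section
open Finset
open scoped ArithmeticFunction.vonMangoldt ArithmeticFunction.Moebius

theorem sum_inv_sqrt_le (N : ℕ) : ∑ d ∈ Icc 1 N, 1 / √(d : ℝ) ≤ 2 * √(N : ℝ) := by
  induction N with
  | zero => simp
  | succ N ih =>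
    rw [sum_Icc_succ_top (by omega)]
    push_cast
    have h1 : √((N : ℝ) + 1) ^ 2 = N + 1 := Real.sq_sqrt (by positivity)
    have h2 : √(N : ℝ) ^ 2 = N := Real.sq_sqrt (by positivity)
    have h3 : 0 < √((N : ℝ) + 1) := by positivity
    have h4 : 0 ≤ √(N : ℝ) := by positivity
    have : 1 / √((N : ℝ) + 1) ≤ 2 * (√((N : ℝ) + 1) - √(N : ℝ)) := by
      rw [div_le_iff₀ h3]
      nlinarith [sq_nonneg (√((N : ℝ) + 1) - √(N : ℝ))]
    linarith

theorem sum_sqrt_div_le (x : ℝ) (hx : 0 ≤ x) : ∑ d ∈ Icc 1 ⌊x⌋₊, √(x / d) ≤ 2 * x := by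
  have h : ∀ d ∈ Icc 1 ⌊x⌋₊, √(x / d) = √x * (1 / √(d : ℝ)) := by
    intro d _
    rw [Real.sqrt_div hx]; ring
  rw [sum_congr rfl h, ← mul_sum]
  have h1 := sum_inv_sqrt_le ⌊x⌋₊
  have h2 : √(⌊x⌋₊ : ℝ) ≤ √x := Real.sqrt_le_sqrt (Nat.floor_le hx)
  have h3 : √x * √x = x := Real.mul_self_sqrt hx
  nlinarith [Real.sqrt_nonneg x]

theorem log_mul_log_le (z : ℝ) (hz : 1 ≤ z) : Real.log z * (Real.log z + 4) ≤ 32 * √z := by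
  have h0 : 0 ≤ Real.log z := Real.log_nonneg hz
  have h1 : Real.log z ≤ 4 * √(√z) := by
    have : Real.log z = 4 * Real.log (√(√z)) := by
      rw [Real.log_sqrt (by positivity), Real.log_sqrt (by positivity)]; ring
    rw [this]
    have := Real.log_le_sub_one_of_pos (show 0 < √(√z) by positivity)
    linarith
  have h2 : √(√z) ^ 2 = √z := Real.sq_sqrt (by positivity)
  have h3 : 1 ≤ √(√z) := by
    rw [Real.one_le_sqrt, Real.one_le_sqrt]; exact hz
  nlinarith

/-- Selberg's symmetry formula, from the Tatuzawa–Iseki identity applied to `h(y) = ψ(y) - y + γ + 1`, whose sums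
`∑_{m ≤ z} h(z/m)` are `O(log z)`. -/
theorem selberg_formula : ∃ C : ℝ, 0 < C ∧ ∀ x : ℝ, 1 ≤ x →
    |Chebyshev.psi x * Real.log x + ∑ n ∈ Icc 1 ⌊x⌋₊, Λ n * Chebyshev.psi (x / n) -
      2 * x * Real.log x| ≤ C * x := by
  obtain ⟨C1, hC1, hψ⟩ := psi_bound
  obtain ⟨C2, hC2, hM⟩ := mertens
  refine ⟨64 + C2 + 2 * (1 + C1), by linarith, fun x hx => ?_⟩
  have hx0 : 0 < x := by linarith
  set γ := Real.eulerMascheroniConstant with hγ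
  have hγ1 : 1 / 2 < γ := Real.one_half_lt_eulerMascheroniConstant
  have hγ2 : γ < 2 / 3 := Real.eulerMascheroniConstant_lt_two_thirds
  let h : ℝ → ℝ := fun y => Chebyshev.psi y - y + (γ + 1)
  have hH : ∀ z : ℝ, 1 ≤ z → |∑ m ∈ Icc 1 ⌊z⌋₊, h (z / m)| ≤ Real.log z + 4 := by
    intro z hz
    have hz0 : 0 < z := by linarith
    have a1 := abs_sum_log_sub_le z hz
    rw [sum_log_eq_sum_psi] at a1
    have a2 := harmonic_bounds z hz
    have e : ∑ m ∈ Icc 1 ⌊z⌋₊, h (z / m) = ∑ m ∈ Icc 1 ⌊z⌋₊, Chebyshev.psi (z / m)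
        - z * ∑ m ∈ Icc 1 ⌊z⌋₊, (1 : ℝ) / m + (γ + 1) * ⌊z⌋₊ := by
      simp only [h, sum_add_distrib, sum_sub_distrib, mul_sum]
      simp [mul_comm, div_eq_mul_inv]
      ring
    rw [e]
    have a3 : (⌊z⌋₊ : ℝ) ≤ z := Nat.floor_le hz0.le
    have a4 : z < ⌊z⌋₊ + 1 := Nat.lt_floor_add_one z
    generalize ∑ m ∈ Icc 1 ⌊z⌋₊, (1 : ℝ) / m = S at *
    have a5 : |z * (S - Real.log z - γ)| ≤ 1 := by
      rw [abs_mul, abs_of_pos hz0]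
      calc z * |S - Real.log z - γ| ≤ z * (1 / z) := mul_le_mul_of_nonneg_left a2 hz0.le
        _ = 1 := by field_simp
    rw [abs_le] at a1 a5 ⊢
    constructor <;> nlinarith
  have hT := tatuzawa_iseki h x hx
  have hE : |∑ d ∈ Icc 1 ⌊x⌋₊, (μ d : ℝ) * Real.log (x / d) * ∑ m ∈ Icc 1 ⌊x / d⌋₊, h (x / d / m)| ≤ 64 * x := by
    calc _ ≤ ∑ d ∈ Icc 1 ⌊x⌋₊, |(μ d : ℝ) * Real.log (x / d) * ∑ m ∈ Icc 1 ⌊x / d⌋₊, h (x / d / m)| :=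
          abs_sum_le_sum_abs _ _
      _ ≤ ∑ d ∈ Icc 1 ⌊x⌋₊, 32 * √(x / d) := by
          refine sum_le_sum fun d hd => ?_
          obtain ⟨hd1, hd2⟩ := mem_Icc.1 hd
          have hd0 : (0 : ℝ) < d := by exact_mod_cast hd1
          have hz : 1 ≤ x / d := by
            rw [le_div_iff₀ hd0, one_mul]
            exact (Nat.le_floor_iff hx0.le).1 hd2
          have hl : 0 ≤ Real.log (x / d) := Real.log_nonneg hz
          rw [abs_mul, abs_mul, abs_of_nonneg hl]
          have m1 : |(μ d : ℝ)| ≤ 1 := by exact_mod_cast ArithmeticFunction.abs_moebius_le_one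
          have m2 := hH _ hz
          have m3 := log_mul_log_le _ hz
          calc |(μ d : ℝ)| * Real.log (x / d) * _ ≤ 1 * Real.log (x / d) * (Real.log (x / d) + 4) := by
                gcongr
            _ ≤ _ := by linarith
      _ = 32 * ∑ d ∈ Icc 1 ⌊x⌋₊, √(x / d) := by rw [mul_sum]
      _ ≤ _ := by linarith [sum_sqrt_div_le x hx0.le]
  rw [hT] at hE
  have e : ∑ n ∈ Icc 1 ⌊x⌋₊, Λ n * h (x / n) = ∑ n ∈ Icc 1 ⌊x⌋₊, Λ n * Chebyshev.psi (x / n)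
      - x * ∑ n ∈ Icc 1 ⌊x⌋₊, Λ n / n + (γ + 1) * Chebyshev.psi x := by
    rw [show Chebyshev.psi x = ∑ d ∈ Icc 1 ⌊x⌋₊, Λ d from rfl, mul_sum, mul_sum, ← sum_sub_distrib,
      ← sum_add_distrib]
    refine sum_congr rfl fun n _ => ?_
    simp only [h]; ring
  rw [e] at hE
  simp only [h] at hE
  have b1 := hM x hx
  have b2 := hψ x hx0.le
  have b3 := Chebyshev.psi_nonneg x
  have b4 : Real.log x ≤ x - 1 := Real.log_le_sub_one_of_pos hx0
  have b5 : 0 ≤ Real.log x := Real.log_nonneg hx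
  generalize ∑ n ∈ Icc 1 ⌊x⌋₊, Λ n / n = S at *
  have b6 : |x * (S - Real.log x)| ≤ x * C2 := by
    rw [abs_mul, abs_of_pos hx0]; exact mul_le_mul_of_nonneg_left b1 hx0.le
  rw [abs_le] at hE b6 ⊢
  constructor <;> nlinarith

/-- A bound of Brun–Titchmarsh type: `Λ(d)/d` has mass `O(η)` on `D < d ≤ D e^η` as soon as `η ≥ 1 / log D`.
The second term of Selberg's formula is monotone in `x`, so the first one cannot grow faster than the main term. -/
theorem brun_titchmarsh : ∃ C : ℝ, 0 < C ∧ ∀ D η : ℝ, 1 < D → 1 / Real.log D ≤ η → η ≤ 1 →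
    ∑ d ∈ Ioc ⌊D⌋₊ ⌊D * Real.exp η⌋₊, Λ d / d ≤ C * η := by
  obtain ⟨C, hC, hS⟩ := selberg_formula
  refine ⟨4 * C + 24, by linarith, fun D η hD h1 h2 => ?_⟩
  have hD0 : 0 < D := by linarith
  have hl : 0 < Real.log D := Real.log_pos hD
  have hη : 0 < η := lt_of_lt_of_le (by positivity) h1
  have hηl : 1 ≤ η * Real.log D := by rwa [div_le_iff₀ hl] at h1
  have he1 : Real.exp η ≤ 1 + 2 * η := by
    have := Real.abs_exp_sub_one_le (x := η) (by rw [abs_of_pos hη]; exact h2)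
    rw [abs_of_pos hη] at this
    linarith [le_abs_self (Real.exp η - 1)]
  have he0 : 1 ≤ Real.exp η := Real.one_le_exp hη.le
  set D' := D * Real.exp η with hD'
  have hDD : D ≤ D' := by nlinarith
  have hl' : Real.log D' = Real.log D + η := by
    rw [hD', Real.log_mul hD0.ne' (Real.exp_pos _).ne', Real.log_exp]
  have s1 := abs_le.1 (hS D hD.le)
  have s2 := abs_le.1 (hS D' (by linarith))
  have hmono : ∑ n ∈ Icc 1 ⌊D⌋₊, Λ n * Chebyshev.psi (D / n) ≤ ∑ n ∈ Icc 1 ⌊D'⌋₊, Λ n * Chebyshev.psi (D' / n) := by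
    calc _ ≤ ∑ n ∈ Icc 1 ⌊D⌋₊, Λ n * Chebyshev.psi (D' / n) := by
          refine sum_le_sum fun n _ => mul_le_mul_of_nonneg_left (Chebyshev.psi_mono ?_) (by simp)
          gcongr
      _ ≤ _ := by
          refine sum_le_sum_of_subset_of_nonneg (Icc_subset_Icc le_rfl (Nat.floor_mono hDD)) ?_
          intro n _ _
          exact mul_nonneg (by simp) (Chebyshev.psi_nonneg _)
  have hpsi : (Chebyshev.psi D' - Chebyshev.psi D) * Real.log D ≤ (4 * C + 24) * η * (D * Real.log D) := by
    have p1 := Chebyshev.psi_nonneg D'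
    have hD3 : D' ≤ 3 * D := by nlinarith
    have q : Chebyshev.psi D' * Real.log D ≤ Chebyshev.psi D' * Real.log D' := by
      rw [hl']; nlinarith
    have q2 : D' * Real.log D' - D * Real.log D ≤ 2 * η * D * Real.log D + 3 * D * η := by
      rw [hl', hD']
      have : D * Real.exp η * (Real.log D + η) - D * Real.log D = D * (Real.exp η - 1) * Real.log D + D * Real.exp η * η := by ring
      rw [this]
      have t1 : D * (Real.exp η - 1) * Real.log D ≤ D * (2 * η) * Real.log D := by gcongr; linarith
      have t2 : D * Real.exp η * η ≤ D * 3 * η := by gcongr; linarith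
      linarith
    have q3 : (Chebyshev.psi D' - Chebyshev.psi D) * Real.log D ≤ 2 * (2 * η * D * Real.log D + 3 * D * η) + 4 * C * D := by
      nlinarith
    have q4 : 4 * C * D ≤ 4 * C * D * (η * Real.log D) := le_mul_of_one_le_right (by positivity) hηl
    have q5 : 3 * D * η ≤ 3 * D * (η * Real.log D) := by nlinarith
    nlinarith [mul_pos (mul_pos hη hD0) hl]
  have hpsi2 : Chebyshev.psi D' - Chebyshev.psi D ≤ (4 * C + 24) * η * D := by
    refine le_of_mul_le_mul_right ?_ hl
    linarith
  have hsum : ∑ d ∈ Ioc ⌊D⌋₊ ⌊D'⌋₊, Λ d = Chebyshev.psi D' - Chebyshev.psi D := by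
    rw [show Chebyshev.psi D = ∑ d ∈ Ioc 0 ⌊D⌋₊, Λ d from rfl, show Chebyshev.psi D' = ∑ d ∈ Ioc 0 ⌊D'⌋₊, Λ d from rfl,
      eq_sub_iff_add_eq, add_comm]
    exact sum_Ioc_consecutive _ (Nat.zero_le _) (Nat.floor_mono hDD)
  calc ∑ d ∈ Ioc ⌊D⌋₊ ⌊D'⌋₊, Λ d / d ≤ ∑ d ∈ Ioc ⌊D⌋₊ ⌊D'⌋₊, Λ d / D := by
        refine sum_le_sum fun d hd => ?_
        have := (Nat.floor_lt hD0.le).1 (mem_Ioc.1 hd).1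
        exact div_le_div_of_nonneg_left (by simp) hD0 this.le
    _ = (Chebyshev.psi D' - Chebyshev.psi D) / D := by rw [← sum_div, hsum]
    _ ≤ _ := by rw [div_le_iff₀ hD0]; linarith

end

/-! ### The Riemann zeta function near the 1-line -/

section
open Finset Complex

/-- One Euler–Maclaurin step: a single term of the zeta series against the integral of `x ^ (-s)` over
`[n, n + 1]`. -/
theorem cpow_step (s : ℂ) (hs : 1 < s.re) (n : ℕ) (hn : 1 ≤ n) :
    ‖1 / ((n + 1 : ℝ) : ℂ) ^ s - (((n : ℝ) : ℂ) ^ (1 - s) / (s - 1) - ((n + 1 : ℝ) : ℂ) ^ (1 - s) / (s - 1))‖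
      ≤ ‖s‖ / (n : ℝ) ^ 2 := by
  have hn0 : (0 : ℝ) < n := by exact_mod_cast hn
  have hs1 : s - 1 ≠ 0 := by
    intro h; have := congrArg Complex.re h; simp at this; linarith
  -- first-order bound for `x ↦ x ^ (-s)`
  have hder : ∀ (w : ℂ) (x : ℝ), 0 < x → HasDerivAt (fun y : ℝ => (y : ℂ) ^ w) (w * (x : ℂ) ^ (w - 1)) x := by
    intro w x hx
    by_cases hw : w = 0
    · subst hw; simpa using hasDerivAt_const x (1 : ℂ)
    · exact hasDerivAt_ofReal_cpow_const hx.ne' hw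
  have h1 : ∀ x ∈ Set.Icc (n : ℝ) (n + 1), ‖((n + 1 : ℝ) : ℂ) ^ (-s) - (x : ℂ) ^ (-s)‖ ≤ ‖s‖ / (n : ℝ) ^ 2 := by
    intro x hx
    have hb := (convex_Icc (n : ℝ) (n + 1)).norm_image_sub_le_of_norm_hasDerivWithin_le
      (f := fun y : ℝ => (y : ℂ) ^ (-s)) (f' := fun y => (-s) * (y : ℂ) ^ (-s - 1)) (C := ‖s‖ / (n : ℝ) ^ 2)
      (fun y hy => (hder (-s) y (by linarith [hy.1])).hasDerivWithinAt) ?_ hx (Set.right_mem_Icc.2 (by linarith))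
    · refine hb.trans ?_
      have : ‖((n : ℝ) + 1) - x‖ ≤ 1 := by
        rw [Real.norm_eq_abs, abs_le]; constructor <;> linarith [hx.1, hx.2]
      exact mul_le_of_le_one_right (by positivity) this
    · intro y hy
      have hy0 : 0 < y := by linarith [hy.1]
      rw [norm_mul, norm_neg, Complex.norm_cpow_eq_rpow_re_of_pos hy0, div_eq_mul_inv]
      gcongr
      simp only [sub_re, neg_re, one_re]
      have hy1 : 1 ≤ y := by
        have : (1 : ℝ) ≤ n := by exact_mod_cast hn
        linarith [hy.1]
      calc y ^ (-s.re - 1) ≤ y ^ (-2 : ℝ) := Real.rpow_le_rpow_of_exponent_le hy1 (by linarith)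
        _ = (y ^ 2)⁻¹ := by rw [Real.rpow_neg hy0.le]; norm_num
        _ ≤ _ := by gcongr; exact hy.1
  have hb := (convex_Icc (n : ℝ) (n + 1)).norm_image_sub_le_of_norm_hasDerivWithin_le
      (f := fun y : ℝ => (y : ℂ) * ((n + 1 : ℝ) : ℂ) ^ (-s) + (y : ℂ) ^ (1 - s) / (s - 1))
      (f' := fun y => ((n + 1 : ℝ) : ℂ) ^ (-s) - (y : ℂ) ^ (-s)) (C := ‖s‖ / (n : ℝ) ^ 2)
      (fun y hy => ?_) h1 (Set.left_mem_Icc.2 (by linarith)) (Set.right_mem_Icc.2 (by linarith))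
  · simp only [add_sub_cancel_left, norm_one, mul_one] at hb
    refine le_trans (le_of_eq ?_) hb
    congr 1
    rw [Complex.cpow_neg]
    push_cast
    ring
  · have d1 : HasDerivAt (fun y : ℝ => (y : ℂ) * ((n + 1 : ℝ) : ℂ) ^ (-s)) (1 * ((n + 1 : ℝ) : ℂ) ^ (-s)) y :=
      (Complex.ofRealCLM.hasDerivAt).mul_const _
    have d2 := (hder (1 - s) y (by linarith [hy.1])).div_const (s - 1)
    have d3 := (d1.add d2).hasDerivWithinAt (s := Set.Icc (n : ℝ) (n + 1))
    refine d3.congr_deriv ?_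
    rw [show (1 - s - 1 : ℂ) = -s by ring, show (1 - s : ℂ) = -(s - 1) by ring]
    field_simp
    ring

theorem tail_inv_sq (N : ℕ) (hN : 1 ≤ N) : Summable (fun k : ℕ => 1 / ((k + N : ℕ) : ℝ) ^ 2) ∧
    ∑' k : ℕ, 1 / ((k + N : ℕ) : ℝ) ^ 2 ≤ 2 / (N : ℝ) := by
  have hs : Summable (fun k : ℕ => 1 / ((k + N : ℕ) : ℝ) ^ 2) :=
    (summable_nat_add_iff (f := fun k : ℕ => 1 / (k : ℝ) ^ 2) N).2 (Real.summable_one_div_nat_pow.2 (by norm_num))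
  refine ⟨hs, ?_⟩
  refine hs.tsum_le_of_sum_range_le fun n => ?_
  have hN1 : (1 : ℝ) ≤ N := by exact_mod_cast hN
  have h2 : 1 / ((N : ℝ) - 1 / 2) ≤ 2 / N := by
    rw [div_le_div_iff₀ (by linarith) (by linarith)]; linarith
  have : ∑ i ∈ range n, 1 / ((i + N : ℕ) : ℝ) ^ 2 ≤ 1 / ((N : ℝ) - 1 / 2) - 1 / (n + N - 1 / 2) := by
    induction n with
    | zero => simp
    | succ n ih =>
      rw [sum_range_succ]
      refine (add_le_add_left ih _).trans ?_
      push_cast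
      have h0 : (0 : ℝ) ≤ n := by positivity
      have e : 1 / ((n : ℝ) + N - 1 / 2) - 1 / (n + 1 + N - 1 / 2) = 1 / ((n + N) ^ 2 - 1 / 4) := by
        have a1 : (n : ℝ) + N - 1 / 2 ≠ 0 := by linarith
        have a2 : (n : ℝ) + 1 + N - 1 / 2 ≠ 0 := by linarith
        have a3 : ((n : ℝ) + N) ^ 2 - 1 / 4 ≠ 0 := by nlinarith
        rw [div_sub_div _ _ a1 a2, div_eq_div_iff (mul_ne_zero a1 a2) a3]
        ring
      have : 1 / ((n : ℝ) + N) ^ 2 ≤ 1 / ((n + N) ^ 2 - 1 / 4) :=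
        one_div_le_one_div_of_le (by nlinarith) (by linarith)
      linarith
  have : 0 ≤ 1 / ((n : ℝ) + N - 1 / 2) := by
    have : (0 : ℝ) ≤ n := by positivity
    apply div_nonneg <;> linarith
  linarith

/-- Truncation of the zeta series at `N`; the term `1 / ‖s - 1‖` absorbs the integral over the tail. -/
theorem zeta_sub_partial_sum (s : ℂ) (hs : 1 < s.re) (N : ℕ) (hN : 1 ≤ N) :
    ‖riemannZeta s - ∑ n ∈ range N, 1 / ((n : ℂ) + 1) ^ s‖ ≤ 1 / ‖s - 1‖ + 2 * ‖s‖ / N := by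
  have hN0 : (0 : ℝ) < N := by exact_mod_cast hN
  set a : ℕ → ℂ := fun n => 1 / ((n : ℂ) + 1) ^ s with ha
  have hsum : Summable a := by
    have := (summable_nat_add_iff (f := fun n : ℕ => 1 / (n : ℂ) ^ s) 1).2 (Complex.summable_one_div_nat_cpow.2 hs)
    simpa [ha] using this
  rw [zeta_eq_tsum_one_div_nat_add_one_cpow hs, ← hsum.sum_add_tsum_nat_add N, add_sub_cancel_left]
  set b : ℕ → ℂ := fun n => ((n : ℝ) : ℂ) ^ (1 - s) / (s - 1) with hb
  have hbn : ∀ n : ℕ, 1 ≤ n → ‖b n‖ ≤ (n : ℝ) ^ (1 - s.re) / ‖s - 1‖ := by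
    intro n hn
    have : (0 : ℝ) < n := by exact_mod_cast hn
    simp only [hb]
    rw [norm_div, Complex.norm_cpow_eq_rpow_re_of_pos this]
    simp
  have hb0 : Filter.Tendsto (fun k => b (k + N)) Filter.atTop (nhds 0) := by
    apply squeeze_zero_norm (a := fun k => ((k + N : ℕ) : ℝ) ^ (1 - s.re) / ‖s - 1‖)
    · intro k; exact hbn _ (by omega)
    · have t1 : Filter.Tendsto (fun k : ℕ => ((k + N : ℕ) : ℝ)) Filter.atTop Filter.atTop :=
        tendsto_natCast_atTop_atTop.comp (Filter.tendsto_add_atTop_nat N)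
      have t2 := ((tendsto_rpow_neg_atTop (y := s.re - 1) (by linarith)).comp t1).div_const ‖s - 1‖
      simpa using t2
  have htel : HasSum (fun k => b (k + N) - b (k + 1 + N)) (b N) := by
    have hsumm : Summable (fun k => b (k + N) - b (k + 1 + N)) := by
      have e : (fun k => b (k + N) - b (k + 1 + N)) = fun k => a (k + N) - (a (k + N) - (b (k + N) - b (k + 1 + N))) := by
        ext k; ring
      rw [e]
      refine ((summable_nat_add_iff N).2 hsum).sub ?_
      refine Summable.of_norm_bounded (g := fun k : ℕ => ‖s‖ * (1 / ((k + N : ℕ) : ℝ) ^ 2)) ((tail_inv_sq N hN).1.mul_left _) fun k => ?_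
      have := cpow_step s hs (k + N) (by omega)
      simp only [ha, hb]
      rw [mul_one_div]
      rw [show k + 1 + N = k + N + 1 by ring]
      push_cast at this ⊢
      exact this
    rw [hsumm.hasSum_iff_tendsto_nat]
    have : ∀ n : ℕ, ∑ k ∈ range n, (b (k + N) - b (k + 1 + N)) = b N - b (n + N) := by
      intro n
      rw [sum_range_sub' (fun k => b (k + N))]
      simp
    simp only [this]
    simpa using tendsto_const_nhds.sub hb0
  have hdiff : Summable (fun k => a (k + N) - (b (k + N) - b (k + 1 + N))) :=
    ((summable_nat_add_iff N).2 hsum).sub htel.summable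
  have e : ∑' k, a (k + N) = b N + ∑' k, (a (k + N) - (b (k + N) - b (k + 1 + N))) := by
    rw [((summable_nat_add_iff N).2 hsum).tsum_sub htel.summable, htel.tsum_eq]; ring
  rw [e]
  refine (norm_add_le _ _).trans (add_le_add ?_ ?_)
  · refine (hbn N hN).trans ?_
    gcongr
    exact Real.rpow_le_one_of_one_le_of_nonpos (by exact_mod_cast hN) (by linarith)
  · have h1 := tail_inv_sq N hN
    refine (tsum_of_norm_bounded (g := fun k : ℕ => ‖s‖ * (1 / ((k + N : ℕ) : ℝ) ^ 2)) (h1.1.mul_left _).hasSum fun k => ?_).trans ?_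
    · have := cpow_step s hs (k + N) (by omega)
      simp only [ha, hb]
      rw [mul_one_div]
      rw [show k + 1 + N = k + N + 1 by ring]
      push_cast at this ⊢
      exact this
    · rw [tsum_mul_left]
      calc _ ≤ ‖s‖ * (2 / N) := mul_le_mul_of_nonneg_left h1.2 (norm_nonneg _)
        _ = _ := by ring

end

section
open Finset Complex

theorem zeta_one_mul (s : ℂ) (hs : s ≠ 1) : riemannZeta₁ s = (s - 1) * riemannZeta s := by
  have : s - 1 ≠ 0 := sub_ne_zero.2 hs
  rw [riemannZeta₁, riemannZeta_eq_inv_sub_add hs]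
  field_simp

/-- `(s - 1) ζ(s)` is bounded above and below on compact parts of `Re s ≥ 1`, being continuous and nonvanishing. -/
theorem zeta_one_compact (R : ℝ) : ∃ C : ℝ, 1 ≤ C ∧ ∀ σ u : ℝ, 0 ≤ σ → σ ≤ 1 → |u| ≤ R →
    ‖riemannZeta₁ (1 + σ + I * u)‖ ≤ C ∧ C⁻¹ ≤ ‖riemannZeta₁ (1 + σ + I * u)‖ := by
  let f : ℝ × ℝ → ℂ := fun p => riemannZeta₁ (1 + p.1 + I * p.2)
  have hf : Continuous f := differentiable_riemannZeta₁.continuous.comp (by fun_prop)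
  have hK : IsCompact (Set.Icc (0 : ℝ) 1 ×ˢ Set.Icc (-R) R) := isCompact_Icc.prod isCompact_Icc
  have hne : ∀ p ∈ Set.Icc (0 : ℝ) 1 ×ˢ Set.Icc (-R) R, f p ≠ 0 := by
    rintro ⟨σ, u⟩ ⟨⟨h1, h2⟩, -⟩
    simp only [f]
    by_cases hs : (1 + σ + I * u : ℂ) = 1
    · rw [hs]; simp
    · rw [zeta_one_mul _ hs]
      refine mul_ne_zero (sub_ne_zero.2 hs) (riemannZeta_ne_zero_of_one_le_re ?_)
      simpa using h1
  obtain ⟨A, hA⟩ := hK.exists_bound_of_continuousOn hf.continuousOn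
  obtain ⟨B, hB⟩ := hK.exists_bound_of_continuousOn (f := fun p => (f p)⁻¹) (hf.continuousOn.inv₀ hne)
  refine ⟨max 1 (max A B), le_max_left _ _, fun σ u h1 h2 h3 => ?_⟩
  have hm : ((σ, u) : ℝ × ℝ) ∈ Set.Icc (0 : ℝ) 1 ×ˢ Set.Icc (-R) R := ⟨⟨h1, h2⟩, abs_le.1 h3⟩
  refine ⟨(hA _ hm).trans ((le_max_left _ _).trans (le_max_right _ _)), ?_⟩
  have := hB _ hm
  rw [norm_inv] at this
  refine inv_le_of_inv_le₀ (norm_pos_iff.2 (hne _ hm)) ?_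
  exact this.trans ((le_max_right _ _).trans (le_max_right _ _))

theorem zeta_real_le : ∃ C : ℝ, 1 ≤ C ∧ ∀ σ : ℝ, 0 < σ → σ ≤ 1 → ‖riemannZeta (1 + σ)‖ ≤ C / σ := by
  obtain ⟨C, hC, h⟩ := zeta_one_compact 0
  refine ⟨C, hC, fun σ h0 h1 => ?_⟩
  have := (h σ 0 h0.le h1 (by simp)).1
  rw [zeta_one_mul _ (by simp [h0.ne'])] at this
  simp only [ofReal_zero, mul_zero, add_zero, add_sub_cancel_left, norm_mul, norm_real, Real.norm_eq_abs, abs_of_pos h0] at this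
  rw [le_div_iff₀ h0]; linarith

theorem one_add_ne (σ u : ℝ) (h0 : 0 < σ) : (1 + σ + I * u : ℂ) ≠ 1 := by
  intro h; have := congrArg Complex.re h; simp at this; linarith

theorem log_zeta_small (R : ℝ) : ∃ C : ℝ, ∀ σ u : ℝ, 0 < σ → σ ≤ 1 → u ≠ 0 → |u| ≤ R →
    |Real.log ‖riemannZeta (1 + σ + I * u)‖| ≤ Real.posLog (1 / |u|) + C := by
  obtain ⟨C, hC, h⟩ := zeta_one_compact R
  refine ⟨Real.log C + Real.posLog (1 + R), fun σ u h0 h1 hu hR => ?_⟩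
  obtain ⟨a1, a2⟩ := h σ u h0.le h1 hR
  have hne := one_add_ne σ u h0
  have hs1 : (1 + σ + I * u - 1 : ℂ) = σ + I * u := by ring
  have hu0 : 0 < |u| := abs_pos.2 hu
  have b1 : |u| ≤ ‖(σ + I * u : ℂ)‖ := by
    have := Complex.abs_im_le_norm (σ + I * u : ℂ); simpa using this
  have b2 : ‖(σ + I * u : ℂ)‖ ≤ 1 + R := by
    refine (norm_add_le _ _).trans ?_
    simp [abs_of_pos h0]; linarith
  have hz : riemannZeta (1 + σ + I * u) ≠ 0 := riemannZeta_ne_zero_of_one_le_re (by simp [h0.le])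
  have hz0 : 0 < ‖riemannZeta (1 + σ + I * u)‖ := norm_pos_iff.2 hz
  rw [zeta_one_mul _ hne, norm_mul, hs1] at a1 a2
  have hn0 : 0 < ‖(σ + I * u : ℂ)‖ := hu0.trans_le b1
  have l1 := Real.log_le_log (by positivity) a1
  have l2 := Real.log_le_log (by positivity) a2
  rw [Real.log_mul hn0.ne' hz0.ne'] at l1 l2
  rw [Real.log_inv] at l2
  have l3 : Real.log ‖(σ + I * u : ℂ)‖ ≤ Real.posLog (1 + R) :=
    (Real.log_le_log hn0 b2).trans (le_max_right _ _)
  have l4 : - Real.log ‖(σ + I * u : ℂ)‖ ≤ Real.posLog (1 / |u|) := by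
    have := Real.log_le_log hu0 b1
    have : -Real.log |u| ≤ Real.posLog (1 / |u|) := by
      rw [← Real.log_inv, ← one_div]; exact le_max_right _ _
    linarith
  have p1 : 0 ≤ Real.posLog (1 / |u|) := Real.posLog_nonneg
  have p2 : 0 ≤ Real.posLog (1 + R) := Real.posLog_nonneg
  rw [abs_le]; constructor <;> linarith

theorem harmonic_range_le (N : ℕ) : ∑ n ∈ range N, 1 / ((n : ℝ) + 1) ≤ 1 + Real.log N := by
  have := harmonic_le_one_add_log N
  rw [harmonic] at this
  push_cast at this
  simpa using this

theorem log_ceil_sq (u : ℝ) (hu : 1 ≤ |u|) : Real.log (⌈u ^ 2⌉₊ : ℝ) ≤ 1 + 2 * Real.log |u| := by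
  have hu2 : 1 ≤ u ^ 2 := by rw [← sq_abs]; nlinarith
  have h1 : (⌈u ^ 2⌉₊ : ℝ) ≤ 2 * u ^ 2 := by
    have := (Nat.ceil_lt_add_one (show 0 ≤ u ^ 2 by positivity)).le
    linarith
  have h0 : (0 : ℝ) < ⌈u ^ 2⌉₊ := lt_of_lt_of_le (by linarith) (Nat.le_ceil (u ^ 2))
  have h3 := Real.log_le_log h0 h1
  rw [Real.log_mul (by norm_num) (by linarith), ← sq_abs, Real.log_pow] at h3
  have := Real.log_two_lt_d9
  push_cast at h3
  rw [← sq_abs u]; linarith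

theorem zeta_trunc (σ u : ℝ) (h0 : 0 < σ) (h1 : σ ≤ 1) (hu : 1 ≤ |u|) :
    ‖riemannZeta (1 + σ + I * u) - ∑ n ∈ range ⌈u ^ 2⌉₊, 1 / ((n : ℂ) + 1) ^ (1 + σ + I * u : ℂ)‖ ≤ 7 / |u| := by
  have hu2 : 1 ≤ u ^ 2 := by rw [← sq_abs]; nlinarith
  have hN : 1 ≤ ⌈u ^ 2⌉₊ := Nat.one_le_ceil_iff.2 (by linarith)
  have h := zeta_sub_partial_sum (1 + σ + I * u) (by simp [h0]) _ hN
  refine h.trans ?_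
  have hu0 : 0 < |u| := by linarith
  have b1 : |u| ≤ ‖(1 + σ + I * u - 1 : ℂ)‖ := by
    have := Complex.abs_im_le_norm (1 + σ + I * u - 1 : ℂ); simpa using this
  have b2 : ‖(1 + σ + I * u : ℂ)‖ ≤ 3 * |u| := by
    refine (norm_add_le _ _).trans ?_
    have : ‖(1 + σ : ℂ)‖ ≤ 2 := (norm_add_le _ _).trans (by simp [abs_of_pos h0]; linarith)
    simp; linarith
  have b3 : (u ^ 2 : ℝ) ≤ ⌈u ^ 2⌉₊ := Nat.le_ceil _
  calc _ ≤ 1 / |u| + 2 * (3 * |u|) / u ^ 2 := by gcongr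
    _ = 7 / |u| := by rw [← sq_abs]; field_simp; norm_num

theorem norm_term (σ u : ℝ) (n : ℕ) : ‖1 / ((n : ℂ) + 1) ^ (1 + σ + I * u : ℂ)‖ = ((n : ℝ) + 1) ^ (-(1 + σ)) := by
  have h : (0 : ℝ) < (n : ℝ) + 1 := by positivity
  rw [norm_div, show ((n : ℂ) + 1) = (((n : ℝ) + 1 : ℝ) : ℂ) by push_cast; rfl,
    Complex.norm_cpow_eq_rpow_re_of_pos h, Real.rpow_neg h.le]
  simp

theorem zeta_upper (σ u : ℝ) (h0 : 0 < σ) (h1 : σ ≤ 1) (hu : 1 ≤ |u|) :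
    ‖riemannZeta (1 + σ + I * u)‖ ≤ 9 + 2 * Real.log |u| := by
  have h := zeta_trunc σ u h0 h1 hu
  have h7 : 7 / |u| ≤ 7 := div_le_self (by norm_num) hu
  have hs : ‖∑ n ∈ range ⌈u ^ 2⌉₊, 1 / ((n : ℂ) + 1) ^ (1 + σ + I * u : ℂ)‖ ≤ 1 + Real.log (⌈u ^ 2⌉₊ : ℝ) := by
    refine (norm_sum_le _ _).trans ((sum_le_sum fun n _ => ?_).trans (harmonic_range_le _))
    rw [norm_term, one_div, ← Real.rpow_neg_one]
    exact Real.rpow_le_rpow_of_exponent_le (by linarith [(Nat.cast_nonneg n : (0 : ℝ) ≤ n)]) (by linarith)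
  have := log_ceil_sq u hu
  have := norm_le_norm_add_norm_sub' (riemannZeta (1 + σ + I * u)) (∑ n ∈ range ⌈u ^ 2⌉₊, 1 / ((n : ℂ) + 1) ^ (1 + σ + I * u : ℂ))
  linarith

/-- Comparison of zeta at two abscissae on the same height, through the truncated series of `zeta_trunc`. -/
theorem zeta_diff (σ σ0 u : ℝ) (h0 : 0 < σ) (h01 : σ ≤ σ0) (h1 : σ0 ≤ 1) (hu : 1 ≤ |u|) :
    ‖riemannZeta (1 + σ + I * u) - riemannZeta (1 + σ0 + I * u)‖ ≤ 14 / |u| + σ0 * (2 + 2 * Real.log |u|) ^ 2 := by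
  have t1 := zeta_trunc σ u h0 (h01.trans h1) hu
  have t2 := zeta_trunc σ0 u (h0.trans_le h01) h1 hu
  have hl := log_ceil_sq u hu
  have hu2 : 1 ≤ u ^ 2 := by rw [← sq_abs]; nlinarith
  have hN : 1 ≤ ⌈u ^ 2⌉₊ := Nat.one_le_ceil_iff.2 (by linarith)
  have hh := harmonic_range_le ⌈u ^ 2⌉₊
  have hlN : 0 ≤ Real.log (⌈u ^ 2⌉₊ : ℝ) := Real.log_nonneg (by exact_mod_cast hN)
  generalize hNN : ⌈u ^ 2⌉₊ = N at *
  have hd : ‖∑ n ∈ range N, 1 / ((n : ℂ) + 1) ^ (1 + σ + I * u : ℂ) - ∑ n ∈ range N, 1 / ((n : ℂ) + 1) ^ (1 + σ0 + I * u : ℂ)‖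
      ≤ σ0 * Real.log N * (1 + Real.log N) := by
    rw [← sum_sub_distrib]
    refine (norm_sum_le _ _).trans ?_
    calc _ ≤ ∑ n ∈ range N, σ0 * Real.log N * (1 / ((n : ℝ) + 1)) := by
          refine sum_le_sum fun n hn => ?_
          have hp : (0 : ℝ) < (n : ℝ) + 1 := by positivity
          have hc : ((n : ℂ) + 1) = (((n : ℝ) + 1 : ℝ) : ℂ) := by push_cast; rfl
          have hc0 : ((n : ℂ) + 1) ≠ 0 := by rw [hc]; exact_mod_cast hp.ne'
          have e : 1 / ((n : ℂ) + 1) ^ (1 + σ + I * u : ℂ) - 1 / ((n : ℂ) + 1) ^ (1 + σ0 + I * u : ℂ)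
              = (1 / ((n : ℂ) + 1) ^ (1 + σ + I * u : ℂ)) * (1 - (((n : ℝ) + 1 : ℝ) : ℂ) ^ (((σ - σ0 : ℝ) : ℂ))) := by
            rw [← hc, mul_sub, mul_one, one_div, one_div, ← Complex.cpow_neg, ← Complex.cpow_neg, ← Complex.cpow_add _ _ hc0]
            congr 2
            push_cast; ring
          rw [e, norm_mul, norm_term, ← Complex.ofReal_cpow hp.le, ← Complex.ofReal_one, ← Complex.ofReal_sub, Complex.norm_real]
          have hn1 : (1 : ℝ) ≤ n + 1 := by linarith [(Nat.cast_nonneg n : (0 : ℝ) ≤ n)]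
          have hnN : ((n : ℝ) + 1) ≤ N := by exact_mod_cast mem_range.1 hn
          have b1 : ((n : ℝ) + 1) ^ (-(1 + σ)) ≤ 1 / ((n : ℝ) + 1) := by
            rw [one_div, ← Real.rpow_neg_one]
            exact Real.rpow_le_rpow_of_exponent_le hn1 (by linarith)
          have b2 : ‖1 - ((n : ℝ) + 1) ^ (σ - σ0)‖ ≤ σ0 * Real.log N := by
            have c1 : ((n : ℝ) + 1) ^ (σ - σ0) ≤ 1 := Real.rpow_le_one_of_one_le_of_nonpos hn1 (by linarith)
            rw [Real.norm_eq_abs, abs_of_nonneg (by linarith), Real.rpow_def_of_pos hp]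
            have := Real.add_one_le_exp (Real.log ((n : ℝ) + 1) * (σ - σ0))
            have l1 : Real.log ((n : ℝ) + 1) ≤ Real.log N := Real.log_le_log hp hnN
            have l0 : 0 ≤ Real.log ((n : ℝ) + 1) := Real.log_nonneg hn1
            nlinarith
          rw [mul_comm]
          have : 0 ≤ σ0 * Real.log N := mul_nonneg (by linarith) hlN
          gcongr
      _ = σ0 * Real.log N * ∑ n ∈ range N, (1 / ((n : ℝ) + 1)) := by rw [mul_sum]
      _ ≤ _ := by
        have : 0 ≤ σ0 := by linarith
        gcongr
  have hd2 : σ0 * Real.log N * (1 + Real.log N) ≤ σ0 * (2 + 2 * Real.log |u|) ^ 2 := by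
    have : 0 ≤ σ0 := by linarith
    have h3 : Real.log N * (1 + Real.log N) ≤ (2 + 2 * Real.log |u|) ^ 2 := by nlinarith
    rw [mul_assoc]; gcongr
  set A := riemannZeta (1 + σ + I * u)
  set B := riemannZeta (1 + σ0 + I * u)
  set a := ∑ n ∈ range N, 1 / ((n : ℂ) + 1) ^ (1 + σ + I * u : ℂ)
  set b := ∑ n ∈ range N, 1 / ((n : ℂ) + 1) ^ (1 + σ0 + I * u : ℂ)
  have e : A - B = (A - a) + (a - b) - (B - b) := by ring
  rw [e]
  have n1 := norm_sub_le ((A - a) + (a - b)) (B - b)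
  have n2 := norm_add_le (A - a) (a - b)
  have : 14 / |u| = 7 / |u| + 7 / |u| := by ring
  linarith

end

section
open Finset Complex Filter

/-- The 3-4-1 inequality. -/
theorem three_four_one (σ u : ℝ) (h0 : 0 < σ) :
    1 ≤ ‖riemannZeta (1 + σ)‖ ^ 3 * ‖riemannZeta (1 + σ + I * u)‖ ^ 4 * ‖riemannZeta (1 + σ + I * (2 * u : ℝ))‖ := by
  have := DirichletCharacter.norm_LFunction_product_ge_one (N := 1) 1 h0 u
  rw [one_pow, DirichletCharacter.LFunctionTrivChar, DirichletCharacter.LFunction_modOne_eq,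
    norm_mul, norm_mul, norm_pow, norm_pow] at this
  rw [show (1 + σ + I * (2 * u : ℝ) : ℂ) = 1 + σ + 2 * I * u by push_cast; ring]
  exact this

/-- Polynomial bounds for `ζ` and `1/ζ` at large heights. The exponent `3/4` is what remains of the 3-4-1 inequality;
any exponent below `π/4` would serve, since it makes the bound in `transform_bound` square integrable in `t`. -/
theorem zeta_lower_large : ∃ R : ℝ, 1 ≤ R ∧ ∀ σ u : ℝ, 0 < σ → σ ≤ 1 → R ≤ |u| →
    |u| ^ (-(3 / 4) : ℝ) ≤ ‖riemannZeta (1 + σ + I * u)‖ ∧ ‖riemannZeta (1 + σ + I * u)‖ ≤ |u| ^ (3 / 4 : ℝ) := by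
  obtain ⟨C, hC, hz⟩ := zeta_real_le
  have hlog : ∀ a b c : ℝ, ∀ r : ℝ, 0 < r → ∀ k : ℕ, ∀ᶠ U : ℝ in atTop, a * (b + c * Real.log U) ^ k ≤ U ^ r := by
    intro a b c r hr k
    have hr' : 0 < r / (k + 1) := by positivity
    have t := tendsto_rpow_atTop hr'
    have o1 : (fun U : ℝ => b + c * Real.log U) =o[atTop] fun U : ℝ => U ^ (r / (k + 1)) := by
      refine Asymptotics.IsLittleO.add ?_ ((isLittleO_log_rpow_atTop hr').const_mul_left c)
      refine Asymptotics.isLittleO_const_left.2 (Or.inr ?_)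
      exact tendsto_norm_atTop_atTop.comp t
    filter_upwards [o1.bound one_pos, t.eventually_ge_atTop |a|, eventually_gt_atTop 0] with U h1 h2 h3
    have hp : 0 < U ^ (r / (k + 1)) := Real.rpow_pos_of_pos h3 _
    rw [one_mul, Real.norm_eq_abs, Real.norm_eq_abs, abs_of_pos hp] at h1
    calc a * (b + c * Real.log U) ^ k ≤ |a * (b + c * Real.log U) ^ k| := le_abs_self _
      _ = |a| * |b + c * Real.log U| ^ k := by rw [abs_mul, abs_pow]
      _ ≤ U ^ (r / (k + 1)) * (U ^ (r / (k + 1))) ^ k := by gcongr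
      _ = U ^ r := by
        rw [← pow_succ', ← Real.rpow_natCast, ← Real.rpow_mul h3.le]
        congr 1
        push_cast
        field_simp
  obtain ⟨R, hR⟩ := eventually_atTop.1 (((hlog 1 9 2 (3 / 4) (by norm_num) 1).and
    (hlog (16 * C ^ 3) 11 2 (3 / 10) (by norm_num) 1)).and
    (((hlog 2 2 2 (3 / 20) (by norm_num) 2)).and ((hlog 1 28 0 (1 / 4) (by norm_num) 1))))
  refine ⟨max 1 R, le_max_left _ _, fun σ u h0 h1 hu => ?_⟩
  have hu1 : 1 ≤ |u| := (le_max_left _ _).trans hu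
  obtain ⟨⟨r1, r2⟩, r3, r4⟩ := hR |u| ((le_max_right _ _).trans hu)
  have hU0 : 0 < |u| := by linarith
  have hlogu : 0 ≤ Real.log |u| := Real.log_nonneg hu1
  set U := |u| with hU
  refine ⟨?_, ?_⟩
  swap
  · refine (zeta_upper σ u h0 h1 hu1).trans ?_
    rw [one_mul, pow_one] at r1
    exact r1
  -- lower bound for `σ ≥ U ^ (-9/10)`
  have low : ∀ σ : ℝ, 0 < σ → σ ≤ 1 → U ^ (-(9 / 10) : ℝ) ≤ σ → 2 * U ^ (-(3 / 4) : ℝ) ≤ ‖riemannZeta (1 + σ + I * u)‖ := by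
    intro σ h0 h1 hσ
    have t := three_four_one σ u h0
    have z1 := hz σ h0 h1
    have z2 := zeta_upper σ (2 * u) h0 h1 (by rw [abs_mul, abs_two]; linarith)
    rw [abs_mul, abs_two, Real.log_mul two_ne_zero (by positivity)] at z2
    have z3 : ‖riemannZeta (1 + σ + I * (2 * u : ℝ))‖ ≤ 11 + 2 * Real.log U := by
      linarith [Real.log_two_lt_d9]
    set Z := ‖riemannZeta (1 + σ + I * u)‖
    have hZ : 0 ≤ Z := norm_nonneg _
    rw [pow_one] at r2
    have hC0 : 0 < C := by linarith
    have key : 1 ≤ (C / σ) ^ 3 * Z ^ 4 * (11 + 2 * Real.log U) :=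
      t.trans (by gcongr)
    have hσ3 : U ^ (-(27 / 10) : ℝ) ≤ σ ^ 3 := by
      calc U ^ (-(27 / 10) : ℝ) = (U ^ (-(9 / 10) : ℝ)) ^ 3 := by
            rw [← Real.rpow_natCast, ← Real.rpow_mul hU0.le]; norm_num
        _ ≤ σ ^ 3 := by gcongr
    have k2 : σ ^ 3 * 16 ≤ U ^ (3 / 10 : ℝ) * Z ^ 4 := by
      have : σ ^ 3 ≤ C ^ 3 * Z ^ 4 * (11 + 2 * Real.log U) := by
        have h3 : σ ^ 3 * 1 ≤ σ ^ 3 * ((C / σ) ^ 3 * Z ^ 4 * (11 + 2 * Real.log U)) := by gcongr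
        calc σ ^ 3 = σ ^ 3 * 1 := by ring
          _ ≤ _ := h3
          _ = _ := by field_simp
      calc σ ^ 3 * 16 ≤ (16 * C ^ 3 * (11 + 2 * Real.log U)) * Z ^ 4 := by linarith
        _ ≤ _ := by gcongr
    have k3 : (2 * U ^ (-(3 / 4) : ℝ)) ^ 4 ≤ Z ^ 4 := by
      have e : (2 * U ^ (-(3 / 4) : ℝ)) ^ 4 = U ^ (-(3 / 10) : ℝ) * (U ^ (-(27 / 10) : ℝ) * 16) := by
        rw [mul_pow, ← Real.rpow_natCast (U ^ _), ← Real.rpow_mul hU0.le, mul_comm _ (16 : ℝ), mul_left_comm,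
          ← Real.rpow_add hU0]
        norm_num
      have e2 : Z ^ 4 = U ^ (-(3 / 10) : ℝ) * (U ^ (3 / 10 : ℝ) * Z ^ 4) := by
        rw [← mul_assoc, ← Real.rpow_add hU0]
        norm_num
      rw [e, e2]
      exact mul_le_mul_of_nonneg_left (by linarith) (Real.rpow_nonneg hU0.le _)
    exact le_of_pow_le_pow_left₀ (by norm_num) hZ k3
  set σ0 := U ^ (-(9 / 10) : ℝ) with hσ0
  have hσ01 : σ0 ≤ 1 := Real.rpow_le_one_of_one_le_of_nonpos hu1 (by norm_num)
  have hσ00 : 0 < σ0 := Real.rpow_pos_of_pos hU0 _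
  have hP : 0 < U ^ (-(3 / 4) : ℝ) := Real.rpow_pos_of_pos hU0 _
  rcases le_total σ0 σ with h | h
  · linarith [low σ h0 h1 h]
  · have l0 := low σ0 hσ00 hσ01 le_rfl
    have d := zeta_diff σ σ0 u h0 h hσ01 hu1
    have e1 : σ0 * (2 + 2 * Real.log U) ^ 2 ≤ U ^ (-(3 / 4) : ℝ) / 2 := by
      have : U ^ (-(3 / 4) : ℝ) = σ0 * U ^ (3 / 20 : ℝ) := by
        rw [hσ0, ← Real.rpow_add hU0]; norm_num
      rw [this]
      nlinarith
    have e2 : 14 / U ≤ U ^ (-(3 / 4) : ℝ) / 2 := by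
      have : U ^ (-(3 / 4) : ℝ) = U⁻¹ * U ^ (1 / 4 : ℝ) := by
        rw [← Real.rpow_neg_one, ← Real.rpow_add hU0]; norm_num
      rw [this, div_eq_mul_inv]
      have : 0 < U⁻¹ := by positivity
      simp at r4
      norm_num
      nlinarith
    have n := norm_sub_norm_le (riemannZeta (1 + σ0 + I * u)) (riemannZeta (1 + σ + I * u))
    rw [norm_sub_rev] at n
    linarith

theorem log_zeta_bound : ∃ C : ℝ, 0 < C ∧ ∀ σ u : ℝ, 0 < σ → σ ≤ 1 → u ≠ 0 →
    |Real.log ‖riemannZeta (1 + σ + I * u)‖| ≤ Real.posLog (1 / |u|) + 3 / 4 * Real.posLog |u| + C := by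
  obtain ⟨R, hR, h⟩ := zeta_lower_large
  obtain ⟨C, hC⟩ := log_zeta_small R
  refine ⟨max C 1, lt_max_of_lt_right one_pos, fun σ u h0 h1 hu => ?_⟩
  have p1 : 0 ≤ Real.posLog (1 / |u|) := Real.posLog_nonneg
  have p2 : 0 ≤ Real.posLog |u| := Real.posLog_nonneg
  rcases le_total |u| R with hle | hle
  · have := hC σ u h0 h1 hu hle
    linarith [le_max_left C 1]
  · obtain ⟨a, b⟩ := h σ u h0 h1 hle
    have hu0 : 0 < |u| := abs_pos.2 hu
    have l1 := Real.log_le_log (Real.rpow_pos_of_pos hu0 _) a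
    have l2 := Real.log_le_log (lt_of_lt_of_le (Real.rpow_pos_of_pos hu0 _) a) b
    rw [Real.log_rpow hu0] at l1 l2
    have p3 : Real.log |u| ≤ Real.posLog |u| := le_max_right _ _
    rw [abs_le]
    constructor <;> linarith [le_max_right C 1]

end

/-! ### Fourier expansion of the absolute value of the cosine -/

section
open Finset Complex Filter MeasureTheory

/-- The `n`-th Fourier coefficient of the `π`-periodic function `|cos|` with respect to `e^{2inx}`; the factor
`cos (nπ)` is the sign `(-1)^n`. -/
noncomputable def cosCoeff (n : ℤ) : ℝ := 2 / Real.pi * Real.cos (n * Real.pi) / (1 - 4 * n ^ 2)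

theorem four_sq_ne (n : ℤ) : (1 - 4 * (n : ℝ) ^ 2) ≠ 0 := by
  intro h
  have : (1 - 4 * n ^ 2 : ℤ) = 0 := by exact_mod_cast h
  omega

theorem abs_cosCoeff (n : ℤ) : |cosCoeff n| = 2 / Real.pi / |1 - 4 * (n : ℝ) ^ 2| := by
  rw [cosCoeff, abs_div, abs_mul, Real.abs_cos_int_mul_pi, mul_one, abs_of_pos (by positivity)]

theorem abs_cosCoeff_le (n : ℤ) (hn : n ≠ 0) : |cosCoeff n| ≤ 1 / (n : ℝ) ^ 2 := by
  rw [abs_cosCoeff]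
  have h1 : (1 : ℝ) ≤ (n : ℝ) ^ 2 := by
    have : (1 : ℤ) ≤ n ^ 2 := by
      have := sq_nonneg n
      have : n ^ 2 ≠ 0 := by positivity
      omega
    exact_mod_cast this
  have h2 : |1 - 4 * (n : ℝ) ^ 2| = 4 * (n : ℝ) ^ 2 - 1 := by
    rw [abs_of_neg (by linarith)]; ring
  rw [h2]
  have h3 : 2 / Real.pi ≤ 1 := by
    rw [div_le_one Real.pi_pos]; linarith [Real.pi_gt_three]
  calc 2 / Real.pi / (4 * (n : ℝ) ^ 2 - 1) ≤ 1 / (4 * (n : ℝ) ^ 2 - 1) := by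
        gcongr; linarith
    _ ≤ _ := by gcongr; linarith

theorem summable_cosCoeff_log : Summable fun n : ℤ => |cosCoeff n| * Real.log |2 * (n : ℝ)| := by
  have key : Summable fun n : ℤ => 4 * |(n : ℝ)| ^ (-(3 / 2) : ℝ) :=
    (Real.summable_abs_int_rpow (by norm_num)).mul_left _
  refine Summable.of_norm_bounded key fun n => ?_
  rcases eq_or_ne n 0 with rfl | hn
  · simp [Real.zero_rpow]
  have hn0 : 0 < |(n : ℝ)| := abs_pos.2 (by exact_mod_cast hn)
  have hn1 : 1 ≤ |(n : ℝ)| := by exact_mod_cast Int.one_le_abs hn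
  have hl : 0 ≤ Real.log |2 * (n : ℝ)| := Real.log_nonneg (by rw [abs_mul, abs_two]; linarith)
  rw [Real.norm_eq_abs, abs_mul, abs_abs, abs_of_nonneg hl]
  have h1 : Real.log |2 * (n : ℝ)| ≤ 4 * |(n : ℝ)| ^ (1 / 2 : ℝ) := by
    rw [abs_mul, abs_two, Real.log_mul two_ne_zero hn0.ne']
    have a := Real.log_le_rpow_div hn0.le (show (0 : ℝ) < 1 / 2 by norm_num)
    have b : 1 ≤ |(n : ℝ)| ^ (1 / 2 : ℝ) := Real.one_le_rpow hn1 (by norm_num)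
    linarith [Real.log_two_lt_d9]
  calc |cosCoeff n| * Real.log |2 * (n : ℝ)| ≤ 1 / (n : ℝ) ^ 2 * (4 * |(n : ℝ)| ^ (1 / 2 : ℝ)) := by
        gcongr
        exact abs_cosCoeff_le n hn
    _ = 4 * |(n : ℝ)| ^ (-(3 / 2) : ℝ) := by
        rw [← sq_abs, show (-(3 / 2) : ℝ) = -2 + 1 / 2 by norm_num, Real.rpow_add hn0, Real.rpow_neg hn0.le]
        norm_num
        ring

theorem summable_abs_cosCoeff : Summable fun n : ℤ => |cosCoeff n| := by
  rw [← Finset.summable_compl_iff {(0 : ℤ)}]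
  have := (Real.summable_one_div_int_pow (p := 2)).2 (by norm_num)
  refine Summable.of_norm_bounded ((Finset.summable_compl_iff {(0 : ℤ)}).2 this) fun n => ?_
  rw [Real.norm_eq_abs, abs_abs]
  exact abs_cosCoeff_le n.1 (by simpa using n.2)

theorem fourier_integral_cos (n : ℤ) :
    ∫ x in (-(Real.pi / 2))..(Real.pi / 2), Complex.exp (-(2 * n * I) * x) * Complex.cos x
      = 2 * Complex.cos (n * Real.pi) / (1 - 4 * n ^ 2) := by
  have hne : (1 - 4 * (n : ℂ) ^ 2) ≠ 0 := by exact_mod_cast four_sq_ne n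
  have hd : ∀ x : ℝ, HasDerivAt (fun x : ℝ => Complex.exp (-(2 * n * I) * x) *
      (-(2 * n * I) * Complex.cos x + Complex.sin x) / (1 - 4 * n ^ 2))
      (Complex.exp (-(2 * n * I) * x) * Complex.cos x) x := by
    intro x
    have h1 : HasDerivAt (fun z : ℂ => Complex.exp (-(2 * n * I) * z) *
      (-(2 * n * I) * Complex.cos z + Complex.sin z) / (1 - 4 * n ^ 2))
      (Complex.exp (-(2 * n * I) * x) * Complex.cos x) (x : ℂ) := by
      have a1 : HasDerivAt (fun z : ℂ => Complex.exp (-(2 * n * I) * z)) (Complex.exp (-(2 * n * I) * x) * (-(2 * n * I))) (x : ℂ) := by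
        have := ((hasDerivAt_id (x : ℂ)).const_mul (-(2 * n * I))).cexp
        simpa using this
      have a2 : HasDerivAt (fun z : ℂ => (-(2 * n * I) * Complex.cos z + Complex.sin z)) (-(2 * n * I) * (-Complex.sin x) + Complex.cos x) (x : ℂ) :=
        ((Complex.hasDerivAt_cos _).const_mul _).add (Complex.hasDerivAt_sin _)
      refine ((a1.mul a2).div_const (1 - 4 * (n : ℂ) ^ 2)).congr_deriv ?_
      rw [div_eq_iff hne]
      linear_combination (4 * n ^ 2 * Complex.exp (-(2 * n * I) * x) * Complex.cos x) * I_sq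
    exact h1.comp_ofReal
  rw [intervalIntegral.integral_eq_sub_of_hasDerivAt (fun x _ => hd x)
    ((by fun_prop : Continuous fun x : ℝ => Complex.exp (-(2 * n * I) * x) * Complex.cos x).intervalIntegrable _ _)]
  push_cast
  rw [Complex.cos_neg, Complex.sin_neg, Complex.cos_pi_div_two, Complex.sin_pi_div_two, Complex.cos]
  rw [show -(2 * n * I) * (Real.pi / 2 : ℂ) = -(n * Real.pi) * I by ring,
    show -(2 * n * I) * (-(Real.pi / 2) : ℂ) = (n * Real.pi) * I by ring]
  ring

theorem hasSum_abs_cos (x : ℝ) : HasSum (fun n : ℤ => cosCoeff n * Real.cos (2 * n * x)) |Real.cos x| := by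
  have : Fact (0 < Real.pi) := ⟨Real.pi_pos⟩
  have hper : Function.Periodic (fun x : ℝ => ((|Real.cos x| : ℝ) : ℂ)) Real.pi := by
    intro x
    simp [Real.cos_add_pi]
  have hc : Continuous hper.lift := by
    refine Continuous.quotient_liftOn' ?_ _
    fun_prop
  let f : C(AddCircle Real.pi, ℂ) := ⟨hper.lift, hc⟩
  have hf : ∀ x : ℝ, f x = ((|Real.cos x| : ℝ) : ℂ) := fun x => hper.lift_coe x
  have hcoef : ∀ n, fourierCoeff f n = cosCoeff n := by
    intro n
    rw [fourierCoeff_eq_intervalIntegral f n (-(Real.pi / 2)), show -(Real.pi / 2) + Real.pi = Real.pi / 2 by ring]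
    have : ∫ x in (-(Real.pi / 2))..(Real.pi / 2), (fourier (-n) : C(AddCircle Real.pi, ℂ)) x • f x =
        ∫ x in (-(Real.pi / 2))..(Real.pi / 2), Complex.exp (-(2 * n * I) * x) * Complex.cos x := by
      refine intervalIntegral.integral_congr fun x hx => ?_
      rw [Set.uIcc_of_le (by linarith [Real.pi_pos])] at hx
      rw [hf, abs_of_nonneg (Real.cos_nonneg_of_mem_Icc hx), fourier_coe_apply, smul_eq_mul, Complex.ofReal_cos]
      congr 2
      have : (Real.pi : ℂ) ≠ 0 := by exact_mod_cast Real.pi_ne_zero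
      push_cast
      field_simp
    rw [this, fourier_integral_cos, cosCoeff, Complex.real_smul]
    push_cast
    ring
  have hs : Summable (fourierCoeff f) := by
    refine Summable.of_norm ?_
    simp only [hcoef, norm_real, Real.norm_eq_abs]
    exact summable_abs_cosCoeff
  have := has_pointwise_sum_fourier_series_of_summable hs (x : AddCircle Real.pi)
  have := Complex.hasSum_re this
  rw [hf, ofReal_re] at this
  convert this using 2 with n
  rw [hcoef, smul_eq_mul, re_ofReal_mul, fourier_coe_apply]
  congr 1
  have : (Real.pi : ℂ) ≠ 0 := by exact_mod_cast Real.pi_ne_zero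
  rw [show (2 * Real.pi * I * n * x / Real.pi : ℂ) = ((2 * n * x : ℝ) : ℂ) * I by push_cast; field_simp,
    Complex.exp_ofReal_mul_I_re]

/-- The nonconstant Fourier coefficients of `|cos|` have absolute sum `2/π`, the mean value of `|cos|`: this is the
expansion at `x = π / 2`, where all of them have the same sign. -/
theorem hasSum_abs_cosCoeff : HasSum (fun n : ℤ => if n = 0 then 0 else |cosCoeff n|) (2 / Real.pi) := by
  have h := hasSum_abs_cos (Real.pi / 2)
  rw [Real.cos_pi_div_two, abs_zero] at h
  have h2 := (hasSum_ite_eq (0 : ℤ) (2 / Real.pi)).sub h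
  rw [sub_zero] at h2
  refine h2.congr_fun fun n => ?_
  rw [show 2 * (n : ℝ) * (Real.pi / 2) = n * Real.pi by ring]
  have hcos : Real.cos (n * Real.pi) * Real.cos (n * Real.pi) = 1 := by
    rw [← abs_mul_abs_self, Real.abs_cos_int_mul_pi]; norm_num
  have e : cosCoeff n * Real.cos (n * Real.pi) = 2 / Real.pi / (1 - 4 * (n : ℝ) ^ 2) := by
    rw [cosCoeff]
    calc _ = 2 / Real.pi * (Real.cos (n * Real.pi) * Real.cos (n * Real.pi)) / (1 - 4 * (n : ℝ) ^ 2) := by ring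
      _ = _ := by rw [hcos, mul_one]
  rw [e]
  split_ifs with h
  · simp [h]
  · rw [abs_cosCoeff, abs_of_neg, div_neg]
    · ring
    · have : (1 : ℤ) ≤ n ^ 2 := by
        have := sq_nonneg n
        have : n ^ 2 ≠ 0 := by positivity
        omega
      have : (1 : ℝ) ≤ (n : ℝ) ^ 2 := by exact_mod_cast this
      linarith

end

/-! ### Upper bounds for the Dirichlet series -/

section
open Finset Complex Filter MeasureTheory

/-- The Dirichlet series `∑ c(n) n^{-s}` (equal to `0` where it does not converge absolutely). -/
noncomputable def dsum (c : ℕ → ℂ) (s : ℂ) : ℂ := ∑' n : ℕ, c n * (n : ℂ) ^ (-s)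

theorem norm_log_sub_le {w : ℂ} (hw : ‖w‖ ≤ 1 / 2) : ‖-Complex.log (1 - w) - w‖ ≤ ‖w‖ ^ 2 := by
  have h := Complex.norm_log_one_add_sub_self_le (z := -w) (by rw [norm_neg]; linarith)
  rw [norm_neg, ← sub_eq_add_neg, sub_neg_eq_add] at h
  rw [show -Complex.log (1 - w) - w = -(Complex.log (1 - w) + w) by ring, norm_neg]
  refine h.trans ?_
  have : (1 - ‖w‖)⁻¹ ≤ 2 := by
    rw [inv_le_comm₀ (by linarith) (by norm_num)]; linarith
  have := mul_le_mul_of_nonneg_left this (sq_nonneg ‖w‖)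
  linarith

/-- Logarithm of an Euler product: up to the bounded contribution of higher prime powers, `log |∑ g(n)|` is the
sum of `Re g(p)` over primes. -/
theorem euler_log (g : ℕ →*₀ ℂ) (hs : Summable fun n => ‖g n‖) (hb : ∀ n, ‖g n‖ ≤ 1 / n) :
    |Real.log ‖∑' n, g n‖ - ∑' p : Nat.Primes, (g p).re| ≤ ∑' n : ℕ, 1 / (n : ℝ) ^ 2 := by
  have hp2 : ∀ p : Nat.Primes, ‖g p‖ ≤ 1 / 2 := fun p => (hb p).trans <| by
    gcongr
    exact_mod_cast p.2.two_le
  have hsq : Summable fun n : ℕ => 1 / (n : ℝ) ^ 2 := Real.summable_one_div_nat_pow.2 (by norm_num)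
  have hgp : Summable fun p : Nat.Primes => g p := (hs.comp_injective Nat.Primes.coe_nat_injective).of_norm
  have hd : ∀ p : Nat.Primes, ‖-Complex.log (1 - g p) - g p‖ ≤ 1 / (p : ℝ) ^ 2 := fun p =>
    (norm_log_sub_le (hp2 p)).trans <| by
      rw [show 1 / (p : ℝ) ^ 2 = (1 / (p : ℝ)) ^ 2 by rw [div_pow, one_pow]]
      exact pow_le_pow_left₀ (norm_nonneg _) (hb p) 2
  have hsqp : Summable fun p : Nat.Primes => 1 / (p : ℝ) ^ 2 := hsq.comp_injective Nat.Primes.coe_nat_injective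
  have hds : Summable fun p : Nat.Primes => -Complex.log (1 - g p) - g p := Summable.of_norm_bounded hsqp hd
  have hls : Summable fun p : Nat.Primes => -Complex.log (1 - g p) := by
    simpa using hds.add hgp
  rw [← EulerProduct.exp_tsum_primes_log_eq_tsum hs, Complex.norm_exp, Real.log_exp, ← Complex.re_tsum hgp,
    ← Complex.sub_re, ← hls.tsum_sub hgp]
  calc _ ≤ ‖∑' p : Nat.Primes, (-Complex.log (1 - g p) - g p)‖ := Complex.abs_re_le_norm _
    _ ≤ ∑' p : Nat.Primes, 1 / (p : ℝ) ^ 2 := tsum_of_norm_bounded hsqp.hasSum hd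
    _ ≤ _ := hsqp.tsum_le_tsum_of_inj _ Nat.Primes.coe_nat_injective (fun _ _ => by positivity) (fun _ => le_rfl) hsq

theorem norm_natCast_cpow (n : ℕ) (σ t : ℝ) (h0 : 0 < σ) :
    ‖(n : ℂ) ^ (-(1 + σ + I * t))‖ = (n : ℝ) ^ (-(1 + σ)) := by
  have hre : (-(1 + σ + I * t) : ℂ).re = -(1 + σ) := by simp
  rcases Nat.eq_zero_or_pos n with rfl | hn
  · rw [Nat.cast_zero, zero_cpow, norm_zero, Nat.cast_zero, Real.zero_rpow]
    · linarith
    · intro h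
      rw [h] at hre
      simp at hre
      linarith
  · rw [Complex.norm_natCast_cpow_of_pos hn, hre]

theorem re_natCast_cpow (n : ℕ) (hn : 0 < n) (σ t : ℝ) :
    ((n : ℂ) ^ (-(1 + σ + I * t))).re = (n : ℝ) ^ (-(1 + σ)) * Real.cos (t * Real.log n) := by
  have hn' : (0 : ℝ) < n := by exact_mod_cast hn
  rw [Complex.cpow_def_of_ne_zero (by exact_mod_cast hn.ne'), Complex.exp_re, ← Complex.natCast_log,
    Real.rpow_def_of_pos hn']
  have e : (Real.log n : ℂ) * (-(1 + σ + I * t)) = ((Real.log n * (-(1 + σ)) : ℝ) : ℂ) + ((-(t * Real.log n) : ℝ) : ℂ) * I := by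
    push_cast; ring
  rw [e, Complex.add_re, Complex.add_im, Complex.re_ofReal_mul, Complex.im_ofReal_mul, Complex.ofReal_re,
    Complex.ofReal_im, I_re, I_im, mul_zero, add_zero, mul_one, zero_add, Real.cos_neg]

theorem summable_rpow (σ : ℝ) (h0 : 0 < σ) : Summable fun n : ℕ => (n : ℝ) ^ (-(1 + σ)) :=
  Real.summable_nat_rpow.2 (by linarith)

theorem tsum_rpow_le : ∃ C : ℝ, 1 ≤ C ∧ ∀ σ : ℝ, 0 < σ → σ ≤ 1 → ∑' n : ℕ, (n : ℝ) ^ (-(1 + σ)) ≤ C / σ := by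
  obtain ⟨C, hC, h⟩ := zeta_real_le
  refine ⟨C, hC, fun σ h0 h1 => (le_of_eq ?_).trans (h σ h0 h1)⟩
  rw [zeta_eq_tsum_one_div_nat_cpow (by simpa using h0)]
  have : ∀ n : ℕ, 1 / (n : ℂ) ^ (1 + σ : ℂ) = (((n : ℝ) ^ (-(1 + σ)) : ℝ) : ℂ) := by
    intro n
    rw [Complex.ofReal_cpow (by positivity), one_div, ← Complex.cpow_neg]
    push_cast
    rfl
  rw [tsum_congr this, ← Complex.ofReal_tsum, Complex.norm_real, Real.norm_eq_abs,
    abs_of_nonneg (tsum_nonneg fun n => by positivity)]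

/-- The completely multiplicative function `n ↦ f(n) n^{-s}`, bundled as a monoid-with-zero homomorphism; `s ≠ 0`
makes it vanish at `0`. -/
noncomputable def twist (f : ℕ → ℝ) (hf : IsCM f) (s : ℂ) (hs : s ≠ 0) : ℕ →*₀ ℂ where
  toFun n := f n * (n : ℂ) ^ (-s)
  map_zero' := by simp [hs]
  map_one' := by simp [hf.1]
  map_mul' m n := by
    rw [hf.2, Nat.cast_mul, Complex.natCast_mul_natCast_cpow]
    push_cast; ring

theorem one_add_ne_zero' (σ t : ℝ) (h0 : 0 < σ) : (1 + σ + I * t : ℂ) ≠ 0 := fun h => by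
  have := congrArg Complex.re h
  simp at this
  linarith

theorem norm_twist_le (f : ℕ → ℝ) (hb : ∀ n, f n ∈ Set.Icc (-1 : ℝ) 1) (σ t : ℝ) (h0 : 0 < σ) (n : ℕ) :
    ‖(f n : ℂ) * (n : ℂ) ^ (-(1 + σ + I * t))‖ ≤ (n : ℝ) ^ (-(1 + σ)) := by
  rw [norm_mul, norm_natCast_cpow n σ t h0, Complex.norm_real, Real.norm_eq_abs]
  exact mul_le_of_le_one_left (by positivity) (abs_le.2 (hb n))

theorem dsum_norm_le : ∃ C : ℝ, 1 ≤ C ∧ ∀ f : ℕ → ℝ, (∀ n, f n ∈ Set.Icc (-1 : ℝ) 1) → ∀ σ t : ℝ, 0 < σ → σ ≤ 1 →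
    ‖dsum (fun n => f n) (1 + σ + I * t)‖ ≤ C / σ := by
  obtain ⟨C, hC, h⟩ := tsum_rpow_le
  exact ⟨C, hC, fun f hb σ t h0 h1 => (tsum_of_norm_bounded (summable_rpow σ h0).hasSum
    (norm_twist_le f hb σ t h0)).trans (h σ h0 h1)⟩

theorem log_dsum (f : ℕ → ℝ) (hb : ∀ n, f n ∈ Set.Icc (-1 : ℝ) 1) (hf : IsCM f) (σ t : ℝ) (h0 : 0 < σ) :
    |Real.log ‖dsum (fun n => f n) (1 + σ + I * t)‖ -
      ∑' p : Nat.Primes, f p * ((p : ℝ) ^ (-(1 + σ)) * Real.cos (t * Real.log p))| ≤ ∑' n : ℕ, 1 / (n : ℝ) ^ 2 := by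
  have h := euler_log (twist f hf _ (one_add_ne_zero' σ t h0))
    (Summable.of_nonneg_of_le (fun _ => norm_nonneg _) (norm_twist_le f hb σ t h0) (summable_rpow σ h0)) ?_
  · have e : ∀ p : Nat.Primes, f p * ((p : ℝ) ^ (-(1 + σ)) * Real.cos (t * Real.log p)) =
        (twist f hf _ (one_add_ne_zero' σ t h0) p).re := by
      intro p
      change _ = ((f p : ℂ) * (p : ℂ) ^ (-(1 + σ + I * t))).re
      rw [re_ofReal_mul, re_natCast_cpow _ p.2.pos]
    rw [tsum_congr e]
    exact h
  · intro n
    refine (norm_twist_le f hb σ t h0 n).trans ?_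
    rcases Nat.eq_zero_or_pos n with rfl | hn
    · rw [Nat.cast_zero, Real.zero_rpow (by linarith)]; simp
    · rw [one_div, ← Real.rpow_neg_one]
      exact Real.rpow_le_rpow_of_exponent_le (by exact_mod_cast hn) (by linarith)

theorem dsum_one (s : ℂ) (hs : 1 < s.re) : dsum (fun _ => ((1 : ℝ) : ℂ)) s = riemannZeta s := by
  rw [zeta_eq_tsum_one_div_nat_cpow hs, dsum]
  refine tsum_congr fun n => ?_
  rw [Complex.cpow_neg]; simp

theorem log_zeta_primes (σ u : ℝ) (h0 : 0 < σ) :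
    |Real.log ‖riemannZeta (1 + σ + I * u)‖ -
      ∑' p : Nat.Primes, ((p : ℝ) ^ (-(1 + σ)) * Real.cos (u * Real.log p))| ≤ ∑' n : ℕ, 1 / (n : ℝ) ^ 2 := by
  have := log_dsum (fun _ => 1) (fun _ => by norm_num) ⟨rfl, fun _ _ => by norm_num⟩ σ u h0
  rw [dsum_one _ (by simpa using h0)] at this
  simpa only [one_mul] using this

/-- The inequality `f(p) cos θ ≤ |cos θ|` summed over primes, with `|cos|` expanded in its Fourier series. -/
theorem prime_sum_le (f : ℕ → ℝ) (hb : ∀ n, f n ∈ Set.Icc (-1 : ℝ) 1) (σ t : ℝ) (h0 : 0 < σ) :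
    Summable (fun n : ℤ => cosCoeff n * ∑' p : Nat.Primes, ((p : ℝ) ^ (-(1 + σ)) * Real.cos (2 * n * t * Real.log p))) ∧
    ∑' p : Nat.Primes, f p * ((p : ℝ) ^ (-(1 + σ)) * Real.cos (t * Real.log p)) ≤
      ∑' n : ℤ, cosCoeff n * ∑' p : Nat.Primes, ((p : ℝ) ^ (-(1 + σ)) * Real.cos (2 * n * t * Real.log p)) := by
  have hsp : Summable fun p : Nat.Primes => ((p : ℕ) : ℝ) ^ (-(1 + σ)) :=
    (summable_rpow σ h0).comp_injective Nat.Primes.coe_nat_injective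
  have hprod : Summable fun q : Nat.Primes × ℤ => ((q.1 : ℕ) : ℝ) ^ (-(1 + σ)) * (cosCoeff q.2 * Real.cos (2 * q.2 * (t * Real.log (q.1 : ℕ)))) := by
    refine Summable.of_norm_bounded (hsp.mul_of_nonneg summable_abs_cosCoeff (fun p => by positivity) fun n => abs_nonneg _) ?_
    rintro ⟨p, n⟩
    rw [Real.norm_eq_abs, abs_mul, abs_mul, abs_of_nonneg (by positivity)]
    gcongr
    exact mul_le_of_le_one_right (abs_nonneg _) (Real.abs_cos_le_one _)
  have e : ∀ n : ℤ, cosCoeff n * ∑' p : Nat.Primes, ((p : ℝ) ^ (-(1 + σ)) * Real.cos (2 * n * t * Real.log p)) =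
      ∑' p : Nat.Primes, ((p : ℕ) : ℝ) ^ (-(1 + σ)) * (cosCoeff n * Real.cos (2 * n * (t * Real.log (p : ℕ)))) := by
    intro n
    rw [← tsum_mul_left]
    refine tsum_congr fun p => ?_
    rw [mul_assoc (2 * (n : ℝ)) t]; ring
  have e2 : ∀ p : Nat.Primes, ∑' n : ℤ, ((p : ℕ) : ℝ) ^ (-(1 + σ)) * (cosCoeff n * Real.cos (2 * n * (t * Real.log (p : ℕ)))) =
      ((p : ℕ) : ℝ) ^ (-(1 + σ)) * |Real.cos (t * Real.log p)| := by
    intro p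
    rw [tsum_mul_left, (hasSum_abs_cos _).tsum_eq]
  rw [funext e]
  refine ⟨hprod.prod_symm.prod, ?_⟩
  rw [hprod.tsum_comm, tsum_congr e2]
  have hle : ∀ a c : ℝ, a ∈ Set.Icc (-1 : ℝ) 1 → a * c ≤ |c| := fun a c ha => by
    refine (le_abs_self _).trans ?_
    rw [abs_mul]
    exact mul_le_of_le_one_left (abs_nonneg _) (abs_le.2 ha)
  refine Summable.tsum_le_tsum (fun p => ?_) ?_ ?_
  · rw [mul_left_comm]
    exact mul_le_mul_of_nonneg_left (hle _ _ (hb _)) (by positivity)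
  · refine Summable.of_norm_bounded hsp fun p => ?_
    rw [Real.norm_eq_abs, abs_mul, abs_mul, abs_of_nonneg (a := ((p : ℕ) : ℝ) ^ (-(1 + σ))) (by positivity)]
    have := Real.abs_cos_le_one (t * Real.log p)
    have h3 := abs_le.2 (hb p)
    have : ((p : ℕ) : ℝ) ^ (-(1 + σ)) * |Real.cos (t * Real.log p)| ≤ ((p : ℕ) : ℝ) ^ (-(1 + σ)) :=
      mul_le_of_le_one_right (by positivity) this
    exact (mul_le_of_le_one_left (by positivity) h3).trans this
  · have := hprod.prod
    rwa [funext e2] at this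

/-- The bound `|F(1+σ+it)| ≪ (σ · min(1,|t|))^{-2/π} max(1,|t|)^{3/(2π)}`, uniform in `f`. -/
theorem dsum_bound : ∃ C : ℝ, 0 < C ∧ ∀ f : ℕ → ℝ, (∀ n, f n ∈ Set.Icc (-1 : ℝ) 1) → IsCM f →
    ∀ σ t : ℝ, 0 < σ → σ ≤ 1 → t ≠ 0 → ‖dsum (fun n => f n) (1 + σ + I * t)‖ ≤
      Real.exp (C + 2 / Real.pi * (Real.log (1 / σ) + Real.posLog (1 / |t|) + 3 / 4 * Real.posLog |t|)) := by
  obtain ⟨C1, hC1, h1⟩ := log_zeta_bound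
  obtain ⟨C2, hC2, h2⟩ := zeta_real_le
  set C0 := ∑' n : ℕ, 1 / (n : ℝ) ^ 2 with hC0
  have hC00 : 0 ≤ C0 := tsum_nonneg fun n => by positivity
  set T := ∑' n : ℤ, |cosCoeff n| * Real.log |2 * (n : ℝ)| with hT
  have hT0 : 0 ≤ T := tsum_nonneg fun n => by
    rcases eq_or_ne n 0 with rfl | hn
    · simp
    have hn1 : 1 ≤ |(n : ℝ)| := by exact_mod_cast Int.one_le_abs hn
    exact mul_nonneg (abs_nonneg _) (Real.log_nonneg (by rw [abs_mul, abs_two]; linarith))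
  have hpi : 0 < 2 / Real.pi := by positivity
  refine ⟨C0 + T + 2 / Real.pi * (Real.log C2 + C0 + C1 + C0), ?_, fun f hb hf σ t h0 hσ ht => ?_⟩
  · have := Real.log_nonneg hC2
    positivity
  obtain ⟨hs, hle⟩ := prime_sum_le f hb σ t h0
  set S : ℝ → ℝ := fun u => ∑' p : Nat.Primes, ((p : ℝ) ^ (-(1 + σ)) * Real.cos (u * Real.log p)) with hS
  have hd := (abs_le.1 (log_dsum f hb hf σ t h0)).2
  have hz : ∀ u : ℝ, |Real.log ‖riemannZeta (1 + σ + I * u)‖ - S u| ≤ C0 := fun u => log_zeta_primes σ u h0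
  set B := Real.posLog (1 / |t|) + 3 / 4 * Real.posLog |t| + C1 + C0 with hB
  have hz0 : S 0 ≤ Real.log C2 + Real.log (1 / σ) + C0 := by
    have a := (abs_le.1 (hz 0)).1
    have b := h2 σ h0 hσ
    rw [show (1 + σ + I * (0 : ℝ) : ℂ) = 1 + σ by simp] at a
    have : Real.log ‖riemannZeta (1 + σ)‖ ≤ Real.log (C2 / σ) := by
      refine Real.log_le_log ?_ b
      rw [norm_pos_iff]
      exact riemannZeta_ne_zero_of_one_le_re (by simpa using h0.le)
    rw [div_eq_mul_one_div, Real.log_mul (by positivity) (by positivity)] at this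
    linarith
  have hterm : ∀ n : ℤ, cosCoeff n * S (2 * n * t) ≤ (if n = 0 then 2 / Real.pi * S 0 else 0) +
      ((if n = 0 then 0 else |cosCoeff n|) * B + |cosCoeff n| * Real.log |2 * (n : ℝ)|) := by
    intro n
    rcases eq_or_ne n 0 with rfl | hn
    · simp [cosCoeff]
    rw [if_neg hn, if_neg hn, zero_add, ← mul_add]
    refine (le_abs_self _).trans ?_
    rw [abs_mul]
    refine mul_le_mul_of_nonneg_left ?_ (abs_nonneg _)
    have hn1 : 1 ≤ |(n : ℝ)| := by exact_mod_cast Int.one_le_abs hn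
    have h2n : 1 ≤ |2 * (n : ℝ)| := by rw [abs_mul, abs_two]; linarith
    have ht0 : 0 < |t| := abs_pos.2 ht
    have hne : 2 * (n : ℝ) * t ≠ 0 := by
      have : (n : ℝ) ≠ 0 := by exact_mod_cast hn
      positivity
    have a := h1 σ (2 * n * t) h0 hσ hne
    have b := hz (2 * n * t)
    have c := abs_sub_abs_le_abs_sub (S (2 * n * t)) (Real.log ‖riemannZeta (1 + σ + I * (2 * n * t : ℝ))‖)
    rw [abs_sub_comm (S _)] at c
    have p1 : Real.posLog (1 / |2 * n * t|) ≤ Real.posLog (1 / |t|) := by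
      refine Real.posLog_le_posLog (by positivity) ?_
      refine one_div_le_one_div_of_le ht0 ?_
      rw [abs_mul]
      exact le_mul_of_one_le_left ht0.le h2n
    have p2 : Real.posLog |2 * n * t| ≤ Real.log |2 * (n : ℝ)| + Real.posLog |t| := by
      rw [abs_mul]
      refine Real.posLog_mul.trans ?_
      rw [Real.posLog_eq_log (by rwa [abs_abs])]
    have : 0 ≤ Real.log |2 * (n : ℝ)| := Real.log_nonneg h2n
    linarith
  have hsum : HasSum (fun n : ℤ => (if n = 0 then 2 / Real.pi * S 0 else 0) +
      ((if n = 0 then 0 else |cosCoeff n|) * B + |cosCoeff n| * Real.log |2 * (n : ℝ)|)) (2 / Real.pi * S 0 + (2 / Real.pi * B + T)) :=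
    (hasSum_ite_eq 0 _).add ((hasSum_abs_cosCoeff.mul_right B).add summable_cosCoeff_log.hasSum)
  have hfin := (hs.tsum_le_tsum hterm hsum.summable).trans_eq hsum.tsum_eq
  have hfin2 : Real.log ‖dsum (fun n => f n) (1 + σ + I * t)‖ ≤ C0 + T + 2 / Real.pi * (Real.log C2 + C0 + C1 + C0) + 2 / Real.pi * (Real.log (1 / σ) + Real.posLog (1 / |t|) + 3 / 4 * Real.posLog |t|) := by
    have := mul_le_mul_of_nonneg_left hz0 hpi.le
    rw [hB] at hfin
    linarith
  exact (Real.le_exp_log _).trans (Real.exp_le_exp.2 hfin2)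

end

/-! ### Convolution on the logarithmic scale and its Laplace transform -/

section
open Finset Complex Filter MeasureTheory

/-- Convolution on the logarithmic scale: `∑_{n ≤ e^v} a(n)/n · ρ(v - log n)`. It vanishes for `v < 0`. -/
noncomputable def mconv {𝕜 : Type*} [Field 𝕜] (a : ℕ → 𝕜) (ρ : ℝ → 𝕜) (v : ℝ) : 𝕜 :=
  ∑ n ∈ Icc 1 ⌊Real.exp v⌋₊, a n / n * ρ (v - Real.log n)

theorem exp_sub_log (v : ℝ) (d : ℕ) (hd : 1 ≤ d) : Real.exp (v - Real.log d) = Real.exp v / d := by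
  rw [Real.exp_sub, Real.exp_log (by exact_mod_cast hd)]

/-- Iterated convolution corresponds to Dirichlet convolution of the coefficients. -/
theorem mconv_assoc {𝕜 : Type*} [Field 𝕜] [CharZero 𝕜] (a b : ℕ → 𝕜) (ρ : ℝ → 𝕜) (v : ℝ) :
    mconv a (mconv b ρ) v = mconv (fun n => ∑ p ∈ n.divisorsAntidiagonal, a p.1 * b p.2) ρ v := by
  have h := sum_hyperbola (Real.exp v) fun d m => a d / d * (b m / m * ρ (v - Real.log (d * m)))
  have l : mconv a (mconv b ρ) v = ∑ d ∈ Icc 1 ⌊Real.exp v⌋₊, ∑ m ∈ Icc 1 ⌊Real.exp v / d⌋₊,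
      a d / d * (b m / m * ρ (v - Real.log (d * m))) := by
    refine Finset.sum_congr rfl fun d hd => ?_
    have hd1 := (mem_Icc.1 hd).1
    rw [mconv, Finset.mul_sum, exp_sub_log v d hd1]
    refine Finset.sum_congr rfl fun m hm => ?_
    have hm1 := (mem_Icc.1 hm).1
    rw [Real.log_mul (by exact_mod_cast (by omega : d ≠ 0)) (by exact_mod_cast (by omega : m ≠ 0)), sub_sub]
  rw [l, h, mconv]
  refine Finset.sum_congr rfl fun n hn => ?_
  rw [Finset.sum_div, Finset.sum_mul]
  refine Finset.sum_congr rfl fun p hp => ?_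
  obtain ⟨hp1, hp2⟩ := Nat.mem_divisorsAntidiagonal.1 hp
  rw [← hp1]
  push_cast
  rw [mul_div_mul_comm]
  ring

theorem mconv_ofReal (a : ℕ → ℝ) (ρ : ℝ → ℝ) (v : ℝ) :
    ((mconv a ρ v : ℝ) : ℂ) = mconv (fun n => (a n : ℂ)) (fun u => (ρ u : ℂ)) v := by
  simp [mconv]

theorem floor_exp_of_neg {v : ℝ} (hv : v < 0) : ⌊Real.exp v⌋₊ = 0 :=
  Nat.floor_eq_zero.2 (by rw [← Real.exp_zero]; exact Real.exp_lt_exp.2 hv)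

theorem mconv_neg {𝕜 : Type*} [Field 𝕜] (a : ℕ → 𝕜) (ρ : ℝ → 𝕜) {v : ℝ} (hv : v < 0) : mconv a ρ v = 0 := by
  rw [mconv, floor_exp_of_neg hv]; simp

theorem mconv_measurable {𝕜 : Type*} [RCLike 𝕜] (a : ℕ → 𝕜) (ρ : ℝ → 𝕜) (hρ : Measurable ρ) :
    Measurable (mconv a ρ) := by
  have h : Measurable fun q : ℕ × ℝ => ∑ n ∈ Icc 1 q.1, a n / n * ρ (q.2 - Real.log n) := by
    refine measurable_from_prod_countable_right fun N => ?_
    refine Finset.measurable_fun_sum (Icc 1 N) fun n _ => ?_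
    exact (hρ.comp (measurable_id.sub_const _)).const_mul _
  exact h.comp ((Nat.measurable_floor.comp Real.measurable_exp).prodMk measurable_id)

theorem mem_Icc_floor_exp {v : ℝ} {n : ℕ} : n ∈ Icc 1 ⌊Real.exp v⌋₊ ↔ 1 ≤ n ∧ 0 ≤ v - Real.log n := by
  rw [mem_Icc, Nat.le_floor_iff (Real.exp_pos v).le]
  refine and_congr_right fun hn => ?_
  rw [sub_nonneg, Real.log_le_iff_le_exp (by exact_mod_cast hn)]

/-- The (two-sided) Laplace transform; it is applied to functions vanishing on the negative axis. -/
noncomputable def lap (ρ : ℝ → ℂ) (s : ℂ) : ℂ := ∫ v : ℝ, ρ v * Complex.exp (-(s * v))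

theorem integrable_bdd_exp (ρ : ℝ → ℂ) (hρ : Measurable ρ) (h0 : ∀ v < 0, ρ v = 0) (K : ℝ)
    (hK : ∀ v, 0 ≤ v → ‖ρ v‖ ≤ K * (1 + v)) (s : ℂ) (hs : 0 < s.re) :
    Integrable fun v : ℝ => ρ v * Complex.exp (-(s * v)) := by
  have hK0 : 0 ≤ K := by
    have := (norm_nonneg _).trans (hK 0 le_rfl); linarith
  have h1 : IntegrableOn (fun v : ℝ => K * (1 + 2 / s.re) * Real.exp (-(s.re / 2) * v)) (Set.Ioi 0) :=
    (exp_neg_integrableOn_Ioi 0 (by positivity)).const_mul _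
  have h2 : IntegrableOn (fun v : ℝ => ρ v * Complex.exp (-(s * v))) (Set.Ioi 0) := by
    refine Integrable.mono' h1 (by fun_prop) ?_
    refine (ae_restrict_iff' measurableSet_Ioi).2 (ae_of_all _ fun v hv => ?_)
    have hv0 : 0 < v := hv
    have hre : (-(s * v)).re = -(s.re / 2) * v + -(s.re / 2) * v := by simp; ring
    rw [norm_mul, Complex.norm_exp, hre, Real.exp_add, ← mul_assoc]
    refine mul_le_mul_of_nonneg_right ?_ (Real.exp_pos _).le
    have e1 : (1 + v) * Real.exp (-(s.re / 2) * v) ≤ 1 + 2 / s.re := by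
      have e2 : v * (s.re / 2) ≤ Real.exp (s.re / 2 * v) := by
        linarith [Real.add_one_le_exp (s.re / 2 * v)]
      have e4 : 1 ≤ Real.exp (s.re / 2 * v) := Real.one_le_exp (by positivity)
      have e3 : Real.exp (-(s.re / 2) * v) = (Real.exp (s.re / 2 * v))⁻¹ := by
        rw [← Real.exp_neg]; ring_nf
      rw [e3, ← div_eq_mul_inv, div_le_iff₀ (Real.exp_pos _)]
      have e5 : v ≤ 2 / s.re * Real.exp (s.re / 2 * v) := by
        calc v = 2 / s.re * (v * (s.re / 2)) := by field_simp
          _ ≤ _ := by gcongr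
      linarith
    calc ‖ρ v‖ * Real.exp (-(s.re / 2) * v) ≤ K * (1 + v) * Real.exp (-(s.re / 2) * v) := by
          gcongr; exact hK v hv0.le
      _ = K * ((1 + v) * Real.exp (-(s.re / 2) * v)) := by ring
      _ ≤ _ := by gcongr
  have h3 : IntegrableOn (fun v : ℝ => ρ v * Complex.exp (-(s * v))) (Set.Ici 0) :=
    (integrableOn_Ici_iff_integrableOn_Ioi (by finiteness)).2 h2
  rw [← integrableOn_univ]
  refine h3.of_forall_sdiff_eq_zero MeasurableSet.univ fun v hv => ?_
  rw [h0 v (by simpa using hv.2), zero_mul]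

/-- The Laplace transform turns `mconv` into a product with the Dirichlet series at `1 + s`. -/
theorem lap_mconv (a : ℕ → ℂ) (ρ : ℝ → ℂ) (hρ : Measurable ρ) (h0 : ∀ v < 0, ρ v = 0) (K : ℝ)
    (hK : ∀ v, 0 ≤ v → ‖ρ v‖ ≤ K * (1 + v)) (σ t : ℝ) (hσ : 0 < σ)
    (ha : Summable fun n : ℕ => ‖a n‖ * (n : ℝ) ^ (-(1 + σ))) :
    lap (mconv a ρ) (σ + I * t) = dsum a (1 + σ + I * t) * lap ρ (σ + I * t) := by
  set s : ℂ := σ + I * t with hs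
  have hre : s.re = σ := by simp [hs]
  have hInt := integrable_bdd_exp ρ hρ h0 K hK s (by rw [hre]; exact hσ)
  let F : ℕ → ℝ → ℂ := fun n v => if n = 0 then 0 else a n / n * ρ (v - Real.log n) * Complex.exp (-(s * v))
  have hF : ∀ n v, n ≠ 0 → F n v = (a n * (n : ℂ) ^ (-(1 + σ + I * t))) *
      (ρ (v - Real.log n) * Complex.exp (-(s * (v - Real.log n : ℝ)))) := by
    intro n v hn
    have hn' : (n : ℂ) ≠ 0 := by exact_mod_cast hn
    have e1 : (n : ℂ) ^ (-(1 + σ + I * t)) = (n : ℂ)⁻¹ * Complex.exp (-(s * Real.log n)) := by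
      rw [show -(1 + σ + I * t : ℂ) = -1 + -s by rw [hs]; ring, Complex.cpow_add _ _ hn', Complex.cpow_neg_one,
        Complex.cpow_def_of_ne_zero hn', ← Complex.natCast_log]
      congr 2; ring
    have e2 : Complex.exp (-(s * v)) = Complex.exp (-(s * Real.log n)) * Complex.exp (-(s * (v - Real.log n : ℝ))) := by
      rw [← Complex.exp_add]; congr 1; push_cast; ring
    simp only [F, if_neg hn]
    rw [e1, e2]
    ring
  have hFi : ∀ n, Integrable (F n) := by
    intro n
    rcases eq_or_ne n 0 with rfl | hn
    · simp [F]
    · rw [funext fun v => hF n v hn]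
      exact (hInt.comp_sub_right (Real.log n)).const_mul _
  have hFn : ∀ n, ∫ v, ‖F n v‖ = ‖a n‖ * (n : ℝ) ^ (-(1 + σ)) * ∫ v, ‖ρ v * Complex.exp (-(s * v))‖ := by
    intro n
    rcases eq_or_ne n 0 with rfl | hn
    · rw [Nat.cast_zero, Real.zero_rpow (by linarith)]
      simp [F]
    · simp_rw [hF n _ hn, norm_mul (a n * _)]
      rw [integral_const_mul, norm_mul, norm_natCast_cpow n σ t hσ]
      congr 1
      exact integral_sub_right_eq_self (fun v => ‖ρ v * Complex.exp (-(s * v))‖) (Real.log n)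
  have hFe : ∀ n, ∫ v, F n v = a n * (n : ℂ) ^ (-(1 + σ + I * t)) * lap ρ s := by
    intro n
    rcases eq_or_ne n 0 with rfl | hn
    · have := one_add_ne_zero' σ t hσ
      rw [Nat.cast_zero, Complex.zero_cpow (neg_ne_zero.2 this)]
      simp [F]
    · simp_rw [hF n _ hn]
      rw [integral_const_mul]
      congr 1
      exact integral_sub_right_eq_self (fun v => ρ v * Complex.exp (-(s * v))) (Real.log n)
  have hsum := hasSum_integral_of_summable_integral_norm hFi (by
    rw [funext hFn]; exact ha.mul_right _)
  rw [funext hFe] at hsum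
  have hmc : ∀ v, ∑' n, F n v = mconv a ρ v * Complex.exp (-(s * v)) := by
    intro v
    rw [tsum_eq_sum (s := Icc 1 ⌊Real.exp v⌋₊), mconv, Finset.sum_mul]
    · refine Finset.sum_congr rfl fun n hn => ?_
      simp only [F]
      rw [if_neg (by have := (mem_Icc.1 hn).1; omega)]
    · intro n hn
      rw [mem_Icc_floor_exp, not_and] at hn
      rcases eq_or_ne n 0 with rfl | hn0
      · simp [F]
      · have := hn (by omega)
        simp only [F, if_neg hn0]
        rw [h0 _ (not_le.1 this)]
        simp
  rw [lap, ← funext hmc, ← hsum.tsum_eq, tsum_mul_right, dsum]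

end

section
open Finset Complex Filter MeasureTheory

/-- Plancherel's theorem on the vertical line `Re s = σ`. -/
theorem lap_plancherel (Φ : ℝ → ℂ) (hΦ : Measurable Φ) (h0 : ∀ v < 0, Φ v = 0) (K : ℝ)
    (hK : ∀ v, 0 ≤ v → ‖Φ v‖ ≤ K * (1 + v)) (σ : ℝ) (hσ : 0 < σ) :
    Integrable (fun v : ℝ => ‖Φ v‖ ^ 2 * Real.exp (-(2 * σ * v))) ∧
    Integrable (fun t : ℝ => ‖lap Φ (σ + I * t)‖ ^ 2) ∧
    ∫ t : ℝ, ‖lap Φ (σ + I * t)‖ ^ 2 = 2 * Real.pi * ∫ v, ‖Φ v‖ ^ 2 * Real.exp (-(2 * σ * v)) := by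
  set φ : ℝ → ℂ := fun v => Φ v * Complex.exp (-((σ : ℂ) * v)) with hφ
  have hInt : Integrable φ := integrable_bdd_exp Φ hΦ h0 K hK σ (by simpa using hσ)
  have hn : ∀ v, ‖φ v‖ = ‖Φ v‖ * Real.exp (-(σ * v)) := by
    intro v
    rw [hφ]
    simp [Complex.norm_exp]
  have hK0 : 0 ≤ K := by
    have := (norm_nonneg _).trans (hK 0 le_rfl); linarith
  have hbd : ∀ v, ‖φ v‖ ≤ K * (1 + 1 / σ) := by
    intro v
    rcases lt_or_ge v 0 with hv | hv
    · rw [hn, h0 v hv, norm_zero, zero_mul]; positivity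
    · rw [hn]
      have e : (1 + v) * Real.exp (-(σ * v)) ≤ 1 + 1 / σ := by
        have e2 := Real.add_one_le_exp (σ * v)
        have e3 : 1 ≤ Real.exp (σ * v) := Real.one_le_exp (by positivity)
        rw [Real.exp_neg, ← div_eq_mul_inv, div_le_iff₀ (Real.exp_pos _)]
        have : v ≤ 1 / σ * Real.exp (σ * v) := by
          calc v = 1 / σ * (σ * v) := by field_simp
            _ ≤ _ := by gcongr; linarith
        linarith
      calc ‖Φ v‖ * Real.exp (-(σ * v)) ≤ K * (1 + v) * Real.exp (-(σ * v)) := by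
            gcongr; exact hK v hv
        _ = K * ((1 + v) * Real.exp (-(σ * v))) := by ring
        _ ≤ _ := by gcongr
  have hsq : Integrable fun v => ‖φ v‖ ^ 2 := by
    refine Integrable.mono' (hInt.norm.const_mul (K * (1 + 1 / σ))) (hInt.1.norm.pow 2) (ae_of_all _ fun v => ?_)
    rw [Real.norm_eq_abs, abs_of_nonneg (by positivity), sq]
    exact mul_le_mul_of_nonneg_right (hbd v) (norm_nonneg _)
  have h2 : MemLp φ 2 := (memLp_two_iff_integrable_sq_norm hInt.1).2 hsq
  have hsqe : ∀ v, ‖φ v‖ ^ 2 = ‖Φ v‖ ^ 2 * Real.exp (-(2 * σ * v)) := by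
    intro v
    rw [hn, mul_pow, ← Real.exp_nat_mul]
    congr 2
    push_cast; ring
  have hl : ∀ t : ℝ, (∫ v, φ v * Complex.exp (-(Complex.I * t * v))) = lap Φ (σ + I * t) := by
    intro t
    rw [lap]
    refine integral_congr_ae (ae_of_all _ fun v => ?_)
    simp only [hφ]
    rw [mul_assoc, ← Complex.exp_add]
    congr 2
    ring
  have hp := plancherel_angular φ hInt h2
  simp_rw [hl, hsqe] at hp
  simp_rw [hsqe] at hsq
  exact ⟨hsq, hp⟩

end

/-! ### The smoothing kernel and the remainder -/

section
open Finset Complex Filter MeasureTheory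

theorem pow_diff_bounds (k : ℕ) (x y : ℝ) (hx : 0 ≤ x) (hxy : x ≤ y) :
    (k + 1) * ((y - x) * x ^ k) ≤ y ^ (k + 1) - x ^ (k + 1) ∧
    y ^ (k + 1) - x ^ (k + 1) ≤ (k + 1) * ((y - x) * y ^ k) := by
  have hy : 0 ≤ y := hx.trans hxy
  have hd : 0 ≤ y - x := sub_nonneg.2 hxy
  induction k with
  | zero => constructor <;> simp
  | succ k ih =>
    obtain ⟨h1, h2⟩ := ih
    have e1 : y ^ (k + 1 + 1) - x ^ (k + 1 + 1) = x * (y ^ (k + 1) - x ^ (k + 1)) + (y - x) * y ^ (k + 1) := by ring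
    have e2 : y ^ (k + 1 + 1) - x ^ (k + 1 + 1) = y * (y ^ (k + 1) - x ^ (k + 1)) + (y - x) * x ^ (k + 1) := by ring
    have hp : x ^ (k + 1) ≤ y ^ (k + 1) := by gcongr
    constructor
    · rw [e1]
      have a := mul_le_mul_of_nonneg_left h1 hx
      have b := mul_le_mul_of_nonneg_left hp hd
      have c : ((k + 1 : ℕ) + 1 : ℝ) * ((y - x) * x ^ (k + 1)) = x * ((k + 1) * ((y - x) * x ^ k)) + (y - x) * x ^ (k + 1) := by
        push_cast; ring
      linarith
    · rw [e2]
      have a := mul_le_mul_of_nonneg_left h2 hy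
      have b := mul_le_mul_of_nonneg_left hp hd
      have c : ((k + 1 : ℕ) + 1 : ℝ) * ((y - x) * y ^ (k + 1)) = y * ((k + 1) * ((y - x) * y ^ k)) + (y - x) * y ^ (k + 1) := by
        push_cast; ring
      linarith

theorem sum_pow_bounds (k N : ℕ) :
    (N : ℝ) ^ (k + 1) ≤ (k + 1) * ∑ n ∈ Icc 1 N, (n : ℝ) ^ k ∧
    (k + 1) * ∑ n ∈ Icc 1 N, (n : ℝ) ^ k ≤ (N + 1 : ℝ) ^ (k + 1) - 1 := by
  induction N with
  | zero => simp
  | succ N ih =>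
    rw [Finset.sum_Icc_succ_top (by omega)]
    have a := (pow_diff_bounds k N (N + 1) (by positivity) (by linarith)).2
    have b := (pow_diff_bounds k (N + 1) (N + 1 + 1) (by positivity) (by linarith)).1
    simp only [add_sub_cancel_left, one_mul] at a b
    push_cast
    constructor <;> linarith [ih.1, ih.2]

/-- The convolution of `1` with the exponential `e^{-jv}`. -/
noncomputable def powS (j : ℕ) (v : ℝ) : ℝ := ∑ n ∈ Icc 1 ⌊Real.exp v⌋₊, (1 : ℝ) / n * Real.exp (-(j * (v - Real.log n)))

theorem powS_eq (k : ℕ) (v : ℝ) :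
    powS (k + 1) v = (∑ n ∈ Icc 1 ⌊Real.exp v⌋₊, (n : ℝ) ^ k) / Real.exp v ^ (k + 1) := by
  rw [powS, Finset.sum_div]
  refine Finset.sum_congr rfl fun n hn => ?_
  have hn1 : (0 : ℝ) < n := by exact_mod_cast (mem_Icc.1 hn).1
  have : Real.exp (-((k + 1 : ℕ) * (v - Real.log n))) = (n : ℝ) ^ (k + 1) / Real.exp v ^ (k + 1) := by
    rw [show -(((k + 1 : ℕ) : ℝ) * (v - Real.log n)) = (k + 1 : ℕ) * Real.log n - (k + 1 : ℕ) * v by ring, Real.exp_sub,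
      Real.exp_nat_mul, Real.exp_nat_mul, Real.exp_log hn1]
  rw [this, pow_succ]
  field_simp

/-- The convolution of `1` with `(k+1) e^{-(k+1)v}` is `1 + O(e^{-v})`, by comparing power sums with integrals. -/
theorem powS_bound (k : ℕ) (hk : k ≤ 4) (v : ℝ) (hv : 0 ≤ v) : |(k + 1) * powS (k + 1) v - 1| ≤ 31 * Real.exp (-v) := by
  set z := Real.exp v with hz
  have hz1 : 1 ≤ z := Real.one_le_exp hv
  have hz0 : 0 < z := by linarith
  set N := ⌊z⌋₊ with hN
  have hN1 : (N : ℝ) ≤ z := Nat.floor_le hz0.le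
  have hN2 : z < N + 1 := Nat.lt_floor_add_one z
  obtain ⟨h1, h2⟩ := sum_pow_bounds k N
  have hk' : (k : ℝ) + 1 ≤ 5 := by
    have : (k : ℝ) ≤ 4 := by exact_mod_cast hk
    linarith
  have hzk : 0 < z ^ k := by positivity
  have up : (N + 1 : ℝ) ^ (k + 1) ≤ z ^ (k + 1) + 31 * z ^ k := by
    have : (N + 1 : ℝ) ^ (k + 1) ≤ (z + 1) ^ (k + 1) := by gcongr
    refine this.trans ?_
    interval_cases k
    · norm_num
    · norm_num; nlinarith
    · norm_num; nlinarith
    · norm_num; nlinarith [pow_nonneg hz0.le 2, pow_nonneg hz0.le 3, mul_nonneg (pow_nonneg hz0.le 2) (sub_nonneg.2 hz1), mul_nonneg (pow_nonneg hz0.le 1) (sub_nonneg.2 hz1)]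
    · norm_num; nlinarith [pow_nonneg hz0.le 2, pow_nonneg hz0.le 3, mul_nonneg (pow_nonneg hz0.le 3) (sub_nonneg.2 hz1), mul_nonneg (pow_nonneg hz0.le 2) (sub_nonneg.2 hz1), mul_nonneg (pow_nonneg hz0.le 1) (sub_nonneg.2 hz1)]
  have lo : z ^ (k + 1) - 31 * z ^ k ≤ (N : ℝ) ^ (k + 1) := by
    have := (pow_diff_bounds k N z (by positivity) hN1).2
    have h3 : (k + 1 : ℝ) * ((z - N) * z ^ k) ≤ 5 * (1 * z ^ k) := by
      gcongr
      linarith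
    linarith
  have e : (k + 1) * powS (k + 1) v - 1 = ((k + 1) * (∑ n ∈ Icc 1 N, (n : ℝ) ^ k) - z ^ (k + 1)) / z ^ (k + 1) := by
    rw [powS_eq, sub_div, div_self (by positivity), mul_div_assoc]
  rw [e, Real.exp_neg, abs_div, abs_of_pos (pow_pos hz0 (k + 1)), div_le_iff₀ (by positivity), abs_le]
  have e2 : 31 * z⁻¹ * z ^ (k + 1) = 31 * z ^ k := by rw [pow_succ]; field_simp
  rw [← hz, e2]
  constructor <;> linarith

/-- The mixing parameter `θ` in `qker`. It solves `θ (1/2 + 1/3) + (1 - θ) (1/4 + 1/5) = γ`, the condition that the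
first moment of `qker` be Euler's constant `γ`; equivalently, `1/s - ζ(1+s) q̂(s)` vanishes at `s = 0`. -/
noncomputable def kTheta : ℝ := (Real.eulerMascheroniConstant - 9 / 20) / (23 / 60)

theorem kTheta_pos : 0 < kTheta := by
  have := Real.one_half_lt_eulerMascheroniConstant
  rw [kTheta]; exact div_pos (by linarith) (by norm_num)

theorem kTheta_lt : kTheta < 1 := by
  have := Real.eulerMascheroniConstant_lt_two_thirds
  rw [kTheta, div_lt_one (by norm_num)]; linarith

/-- A nonnegative continuous kernel of total mass `1` on `[0, ∞)` with first moment Euler's constant. The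
truncation `max v 0` makes it vanish on the negative axis. -/
noncomputable def qker (v : ℝ) : ℝ :=
  6 * kTheta * (Real.exp (-(2 * max v 0)) - Real.exp (-(3 * max v 0))) +
    20 * (1 - kTheta) * (Real.exp (-(4 * max v 0)) - Real.exp (-(5 * max v 0)))

theorem qker_nonneg (v : ℝ) : 0 ≤ qker v := by
  have h := kTheta_pos
  have h' := kTheta_lt
  have hm : 0 ≤ max v 0 := le_max_right _ _
  have a : Real.exp (-(3 * max v 0)) ≤ Real.exp (-(2 * max v 0)) := Real.exp_le_exp.2 (by linarith)
  have b : Real.exp (-(5 * max v 0)) ≤ Real.exp (-(4 * max v 0)) := Real.exp_le_exp.2 (by linarith)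
  rw [qker]
  exact add_nonneg (mul_nonneg (by positivity) (by linarith)) (mul_nonneg (by linarith) (by linarith))

theorem qker_of_nonpos {v : ℝ} (hv : v ≤ 0) : qker v = 0 := by simp [qker, max_eq_right hv]

theorem qker_continuous : Continuous qker := by unfold qker; fun_prop

/-- The remainder `1_{v ≥ 0} - mconv 1 qker`. -/
noncomputable def rker (v : ℝ) : ℝ := (if 0 ≤ v then 1 else 0) - mconv (fun _ => (1 : ℝ)) qker v

theorem mconv_qker (v : ℝ) : mconv (fun _ => (1 : ℝ)) qker v =
    6 * kTheta * (powS 2 v - powS 3 v) + 20 * (1 - kTheta) * (powS 4 v - powS 5 v) := by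
  simp only [mconv, powS]
  rw [← Finset.sum_sub_distrib, ← Finset.sum_sub_distrib, Finset.mul_sum, Finset.mul_sum, ← Finset.sum_add_distrib]
  refine Finset.sum_congr rfl fun n hn => ?_
  have := (mem_Icc_floor_exp.1 hn).2
  rw [qker, max_eq_left this]
  push_cast
  ring

theorem rker_neg {v : ℝ} (hv : v < 0) : rker v = 0 := by
  rw [rker, if_neg (not_le.2 hv), mconv_neg _ _ hv, sub_zero]

theorem rker_bound (v : ℝ) (hv : 0 ≤ v) : |rker v| ≤ 1000 * Real.exp (-v) := by
  rw [rker, if_pos hv, mconv_qker]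
  have a2 := abs_le.1 (powS_bound 1 (by norm_num) v hv)
  have a3 := abs_le.1 (powS_bound 2 (by norm_num) v hv)
  have a4 := abs_le.1 (powS_bound 3 (by norm_num) v hv)
  have a5 := abs_le.1 (powS_bound 4 (by norm_num) v hv)
  norm_num at a2 a3 a4 a5
  have h := kTheta_pos
  have h' := kTheta_lt
  set e := Real.exp (-v)
  have he : 0 < e := Real.exp_pos _
  have b1 : |1 - 6 * (powS 2 v - powS 3 v)| ≤ 1000 * e := by rw [abs_le]; constructor <;> linarith
  have b2 : |1 - 20 * (powS 4 v - powS 5 v)| ≤ 1000 * e := by rw [abs_le]; constructor <;> linarith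
  calc _ = |kTheta * (1 - 6 * (powS 2 v - powS 3 v)) + (1 - kTheta) * (1 - 20 * (powS 4 v - powS 5 v))| := by ring_nf
    _ ≤ |kTheta * (1 - 6 * (powS 2 v - powS 3 v))| + |(1 - kTheta) * (1 - 20 * (powS 4 v - powS 5 v))| := abs_add_le _ _
    _ ≤ kTheta * (1000 * e) + (1 - kTheta) * (1000 * e) := by
      rw [abs_mul, abs_mul, abs_of_pos h, abs_of_pos (sub_pos.2 h')]
      gcongr
    _ = _ := by ring

theorem mconv_qker_eq (v : ℝ) (M : ℕ) (hM : Real.exp v ≤ M) : mconv (fun _ => (1 : ℝ)) qker v =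
    ∑ n ∈ Icc 1 M, (1 : ℝ) / n * qker (v - Real.log n) := by
  rw [mconv]
  refine Finset.sum_subset (Icc_subset_Icc_right (Nat.floor_le_of_le hM)) fun n hn hn' => ?_
  rw [mem_Icc_floor_exp, not_and] at hn'
  rw [qker_of_nonpos (not_le.1 (hn' (mem_Icc.1 hn).1)).le, mul_zero]

/-- The convolution `mconv 1 qker` has derivative `O(e^{-v})`: its one-sided derivative is again a combination of
the sums `powS`, whose main terms cancel. -/
theorem mconv_qker_lip (v w : ℝ) (hv : 0 ≤ v) (hvw : v ≤ w) :
    |mconv (fun _ => (1 : ℝ)) qker w - mconv (fun _ => (1 : ℝ)) qker v| ≤ 10000 * Real.exp (-v) * (w - v) := by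
  have hder : ∀ x ∈ Set.Ico v w, HasDerivWithinAt (mconv (fun _ => (1 : ℝ)) qker)
      (6 * kTheta * (-2 * powS 2 x - -3 * powS 3 x) + 20 * (1 - kTheta) * (-4 * powS 4 x - -5 * powS 5 x)) (Set.Ici x) x := by
    intro x hx
    -- the truncation point is locally constant to the right of `x`
    have hev : ∀ᶠ y in nhdsWithin x (Set.Ici x), ⌊Real.exp y⌋₊ = ⌊Real.exp x⌋₊ := by
      have hlt : Real.exp x < ⌊Real.exp x⌋₊ + 1 := Nat.lt_floor_add_one _
      have h1 : ∀ᶠ y in nhds x, Real.exp y < ⌊Real.exp x⌋₊ + 1 :=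
        (Real.continuous_exp.tendsto x).eventually (gt_mem_nhds hlt)
      filter_upwards [nhdsWithin_le_nhds h1, self_mem_nhdsWithin] with y hy hy'
      rw [Nat.floor_eq_iff (Real.exp_pos y).le]
      exact ⟨(Nat.floor_le (Real.exp_pos x).le).trans (Real.exp_le_exp.2 hy'), hy⟩
    have hS : ∀ j : ℕ, HasDerivWithinAt (powS j) (-j * powS j x) (Set.Ici x) x := by
      intro j
      have hd : HasDerivAt (fun y => ∑ n ∈ Icc 1 ⌊Real.exp x⌋₊, (1 : ℝ) / n * Real.exp (-(j * (y - Real.log n))))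
          (∑ n ∈ Icc 1 ⌊Real.exp x⌋₊, (1 : ℝ) / n * (Real.exp (-(j * (x - Real.log n))) * -j)) x := by
        refine HasDerivAt.fun_sum fun n _ => ?_
        refine HasDerivAt.const_mul _ ?_
        have := ((((hasDerivAt_id x).sub_const (Real.log n)).const_mul (j : ℝ)).neg).exp
        simpa using this
      have he : (∑ n ∈ Icc 1 ⌊Real.exp x⌋₊, (1 : ℝ) / n * (Real.exp (-(j * (x - Real.log n))) * -j)) = -j * powS j x := by
        rw [powS, Finset.mul_sum]
        exact Finset.sum_congr rfl fun n _ => by ring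
      rw [he] at hd
      refine hd.hasDerivWithinAt.congr_of_eventuallyEq ?_ rfl
      filter_upwards [hev] with y hy
      rw [powS, hy]
    have := (((hS 2).sub (hS 3)).const_mul (6 * kTheta)).add (((hS 4).sub (hS 5)).const_mul (20 * (1 - kTheta)))
    push_cast at this
    exact this.congr_of_eventuallyEq (Eventually.of_forall fun y => mconv_qker y) (mconv_qker x)
  have hcont : ContinuousOn (mconv (fun _ => (1 : ℝ)) qker) (Set.Icc v w) := by
    obtain ⟨M, hM⟩ := exists_nat_ge (Real.exp w)
    have : Continuous fun x => ∑ n ∈ Icc 1 M, (1 : ℝ) / n * qker (x - Real.log n) :=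
      continuous_finsetSum _ fun n _ => continuous_const.mul (qker_continuous.comp (continuous_id.sub continuous_const))
    refine this.continuousOn.congr fun x hx => mconv_qker_eq x M ((Real.exp_le_exp.2 hx.2).trans hM)
  refine norm_image_sub_le_of_norm_deriv_right_le_segment hcont hder (fun x hx => ?_) w ⟨hvw, le_rfl⟩
  have hx0 : 0 ≤ x := hv.trans hx.1
  have a2 := abs_le.1 (powS_bound 1 (by norm_num) x hx0)
  have a3 := abs_le.1 (powS_bound 2 (by norm_num) x hx0)
  have a4 := abs_le.1 (powS_bound 3 (by norm_num) x hx0)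
  have a5 := abs_le.1 (powS_bound 4 (by norm_num) x hx0)
  norm_num at a2 a3 a4 a5
  have h := kTheta_pos
  have h' := kTheta_lt
  have hex : Real.exp (-x) ≤ Real.exp (-v) := Real.exp_le_exp.2 (by linarith [hx.1])
  set e := Real.exp (-v)
  have he : 0 < e := Real.exp_pos _
  have b1 : |(-2 * powS 2 x - -3 * powS 3 x)| ≤ 100 * e := by rw [abs_le]; constructor <;> linarith
  have b2 : |(-4 * powS 4 x - -5 * powS 5 x)| ≤ 100 * e := by rw [abs_le]; constructor <;> linarith
  rw [Real.norm_eq_abs]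
  refine (abs_add_le _ _).trans ?_
  rw [abs_mul (6 * kTheta), abs_mul (20 * (1 - kTheta)), abs_of_pos (by linarith : 0 < 6 * kTheta), abs_of_pos (by linarith : 0 < 20 * (1 - kTheta))]
  calc _ ≤ 6 * 1 * (100 * e) + 20 * 1 * (100 * e) := by
        gcongr
        linarith
    _ ≤ _ := by linarith

theorem rker_lip (v w : ℝ) (hv : 0 ≤ v) (hvw : v ≤ w) :
    |rker w - rker v| ≤ 10000 * Real.exp (-v) * (w - v) := by
  have := mconv_qker_lip v w hv hvw
  rw [abs_sub_comm] at this
  rw [rker, rker, if_pos hv, if_pos (hv.trans hvw)]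
  convert this using 2
  ring

theorem rker_measurable : Measurable rker := by
  refine Measurable.sub (Measurable.ite measurableSet_Ici measurable_const measurable_const) ?_
  exact mconv_measurable _ _ qker_continuous.measurable

end

/-! ### The transform of the remainder -/

section
open Finset Complex Filter MeasureTheory

/-- The one-sided exponential `e^{-jv} 1_{v ≥ 0}`. -/
noncomputable def hexp (j : ℕ) (v : ℝ) : ℂ := if 0 ≤ v then ((Real.exp (-(j * v)) : ℝ) : ℂ) else 0

theorem hexp_measurable (j : ℕ) : Measurable (hexp j) :=
  Measurable.ite measurableSet_Ici (by fun_prop) measurable_const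

theorem hexp_neg (j : ℕ) : ∀ v < 0, hexp j v = 0 := fun v hv => by rw [hexp, if_neg (not_le.2 hv)]

theorem norm_hexp_le (j : ℕ) (v : ℝ) (hv : 0 ≤ v) : ‖hexp j v‖ ≤ 1 := by
  rw [hexp, if_pos hv, Complex.norm_real, Real.norm_eq_abs, abs_of_pos (Real.exp_pos _), Real.exp_le_one_iff]
  have : 0 ≤ (j : ℝ) * v := by positivity
  linarith

theorem hexp_integrable (j : ℕ) (s : ℂ) (hs : 0 < s.re) : Integrable fun v : ℝ => hexp j v * Complex.exp (-(s * v)) :=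
  integrable_bdd_exp (hexp j) (hexp_measurable j) (hexp_neg j) 1
    (fun v hv => (norm_hexp_le j v hv).trans (by linarith)) s hs

theorem lap_hexp (j : ℕ) (s : ℂ) (hs : 0 < s.re) : lap (hexp j) s = 1 / (s + j) := by
  have hne : s + j ≠ 0 := fun h => by
    have := congrArg Complex.re h
    simp at this
    have : (0 : ℝ) ≤ j := by positivity
    linarith
  have e : ∀ v : ℝ, hexp j v * Complex.exp (-(s * v)) =
      Set.indicator (Set.Ici 0) (fun v : ℝ => Complex.exp (-(s + j) * v)) v := by
    intro v
    by_cases hv : 0 ≤ v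
    · rw [Set.indicator_of_mem (Set.mem_Ici.2 hv), hexp, if_pos hv, Complex.ofReal_exp, ← Complex.exp_add]
      congr 1; push_cast; ring
    · rw [Set.indicator_of_notMem (by simpa using hv), hexp, if_neg hv, zero_mul]
  rw [lap, funext e, integral_indicator measurableSet_Ici, integral_Ici_eq_integral_Ioi,
    integral_exp_mul_complex_Ioi]
  · simp only [Complex.ofReal_zero, mul_zero, Complex.exp_zero]
    rw [neg_div_neg_eq]
  · have : (0 : ℝ) ≤ j := by positivity
    simp
    linarith

/-- The Laplace transform of `qker` in closed form. -/
noncomputable def qhat (s : ℂ) : ℂ :=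
  kTheta * (6 / ((s + 2) * (s + 3))) + (1 - kTheta) * (20 / ((s + 4) * (s + 5)))

theorem qker_hexp (v : ℝ) : (qker v : ℂ) = 6 * kTheta * (hexp 2 v - hexp 3 v) + 20 * (1 - kTheta) * (hexp 4 v - hexp 5 v) := by
  rcases le_or_gt 0 v with hv | hv
  · simp only [hexp, if_pos hv, qker, max_eq_left hv]
    push_cast
    ring
  · rw [qker_of_nonpos hv.le, hexp_neg _ v hv, hexp_neg _ v hv, hexp_neg _ v hv, hexp_neg _ v hv]
    simp

theorem add_nat_ne (s : ℂ) (hs : -1 < s.re) (j : ℕ) (hj : 1 ≤ j) : s + j ≠ 0 := fun h => by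
  have := congrArg Complex.re h
  simp at this
  have : (1 : ℝ) ≤ j := by exact_mod_cast hj
  linarith

theorem lap_qker (s : ℂ) (hs : 0 < s.re) : lap (fun v => (qker v : ℂ)) s = qhat s := by
  have e : ∀ v : ℝ, (qker v : ℂ) * Complex.exp (-(s * v)) =
      6 * kTheta * (hexp 2 v * Complex.exp (-(s * v)) - hexp 3 v * Complex.exp (-(s * v))) +
      20 * (1 - kTheta) * (hexp 4 v * Complex.exp (-(s * v)) - hexp 5 v * Complex.exp (-(s * v))) := by
    intro v; rw [qker_hexp]; ring
  have i := fun j => hexp_integrable j s hs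
  have i23 : Integrable fun v : ℝ => hexp 2 v * Complex.exp (-(s * v)) - hexp 3 v * Complex.exp (-(s * v)) := (i 2).sub (i 3)
  have i45 : Integrable fun v : ℝ => hexp 4 v * Complex.exp (-(s * v)) - hexp 5 v * Complex.exp (-(s * v)) := (i 4).sub (i 5)
  rw [lap, funext e, integral_add (i23.const_mul _) (i45.const_mul _),
    integral_const_mul, integral_const_mul, integral_sub (i 2) (i 3), integral_sub (i 4) (i 5)]
  have l := fun j => lap_hexp j s hs
  simp only [lap] at l
  rw [l, l, l, l, qhat]
  have n2 := add_nat_ne s (by linarith) 2 (by norm_num)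
  have n3 := add_nat_ne s (by linarith) 3 (by norm_num)
  have n4 := add_nat_ne s (by linarith) 4 (by norm_num)
  have n5 := add_nat_ne s (by linarith) 5 (by norm_num)
  push_cast at *
  field_simp
  ring

theorem norm_qker_le (v : ℝ) (hv : 0 ≤ v) : ‖(qker v : ℂ)‖ ≤ 52 * (1 + v) := by
  rw [qker_hexp]
  have h := kTheta_pos
  have h' := kTheta_lt
  have n := fun j => norm_hexp_le j v hv
  have a1 : ‖hexp 2 v - hexp 3 v‖ ≤ 2 := (norm_sub_le _ _).trans (by linarith [n 2, n 3])
  have a2 : ‖hexp 4 v - hexp 5 v‖ ≤ 2 := (norm_sub_le _ _).trans (by linarith [n 4, n 5])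
  have b1 : ‖(6 * kTheta : ℂ)‖ ≤ 6 := by
    rw [norm_mul, Complex.norm_real, Real.norm_eq_abs, abs_of_pos h]; norm_num; linarith
  have b2 : ‖(20 * (1 - kTheta) : ℂ)‖ ≤ 20 := by
    rw [norm_mul, ← Complex.ofReal_one, ← Complex.ofReal_sub, Complex.norm_real, Real.norm_eq_abs, abs_of_pos (by linarith)]
    norm_num; linarith
  calc _ ≤ ‖(6 * kTheta : ℂ)‖ * ‖hexp 2 v - hexp 3 v‖ + ‖(20 * (1 - kTheta) : ℂ)‖ * ‖hexp 4 v - hexp 5 v‖ := by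
        rw [← norm_mul, ← norm_mul]; exact norm_add_le _ _
    _ ≤ 6 * 2 + 20 * 2 := by gcongr
    _ ≤ _ := by linarith

theorem re_sI (σ t : ℝ) : (σ + I * t : ℂ).re = σ := by simp

theorem lap_rker (σ t : ℝ) (hσ : 0 < σ) :
    lap (fun v => (rker v : ℂ)) (σ + I * t) =
      1 / (σ + I * t) - riemannZeta (1 + σ + I * t) * qhat (σ + I * t) := by
  set s : ℂ := σ + I * t with hs
  have hre : 0 < s.re := by rw [hs, re_sI]; exact hσ
  have hq0 : ∀ v < 0, (qker v : ℂ) = 0 := fun v hv => by rw [qker_of_nonpos hv.le]; simp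
  have hqm : Measurable fun v => (qker v : ℂ) := Complex.measurable_ofReal.comp qker_continuous.measurable
  have h1 := lap_mconv (fun _ => ((1 : ℝ) : ℂ)) (fun v => (qker v : ℂ)) hqm hq0 52 norm_qker_le σ t hσ (by
    simpa using summable_rpow σ hσ)
  rw [dsum_one _ (by simpa using hσ), ← hs, lap_qker s hre] at h1
  rw [← h1]
  have e0 := lap_hexp 0 s hre
  rw [Nat.cast_zero, add_zero] at e0
  rw [← e0]
  have e : ∀ v : ℝ, (rker v : ℂ) = hexp 0 v - mconv (fun _ => ((1 : ℝ) : ℂ)) (fun v => (qker v : ℂ)) v := by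
    intro v
    rw [rker, Complex.ofReal_sub, mconv_ofReal, hexp]
    congr 1
    split_ifs <;> simp
  have i0 := hexp_integrable 0 s hre
  have ir : Integrable fun v : ℝ => (rker v : ℂ) * Complex.exp (-(s * v)) := by
    refine integrable_bdd_exp (fun v => (rker v : ℂ)) (Complex.measurable_ofReal.comp rker_measurable) (fun v hv => by rw [rker_neg hv]; simp) 1000 (fun v hv => ?_) s hre
    rw [Complex.norm_real, Real.norm_eq_abs]
    refine (rker_bound v hv).trans ?_
    have : Real.exp (-v) ≤ 1 := Real.exp_le_one_iff.2 (by linarith)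
    nlinarith
  have hm : ∀ v : ℝ, mconv (fun _ => ((1 : ℝ) : ℂ)) (fun v => (qker v : ℂ)) v * Complex.exp (-(s * v)) =
      hexp 0 v * Complex.exp (-(s * v)) - (rker v : ℂ) * Complex.exp (-(s * v)) := by
    intro v; rw [e v]; ring
  rw [lap, lap, lap, funext hm, integral_sub i0 ir]
  ring

/-- Near `s = 0` the transform of the remainder is `O(|s|)`, by the choice of `kTheta`. This compensates the factor
`|t|^{-2/π}` in `dsum_bound`. -/
theorem lap_rker_small : ∃ C : ℝ, 0 < C ∧ ∀ σ t : ℝ, 0 < σ → σ ≤ 1 → |t| ≤ 1 →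
    ‖lap (fun v => (rker v : ℂ)) (σ + I * t)‖ ≤ C * ‖(σ + I * t : ℂ)‖ := by
  let Hf : ℂ → ℂ := fun s => kTheta * ((s + 5) / ((s + 2) * (s + 3))) + (1 - kTheta) * ((s + 9) / ((s + 4) * (s + 5)))
    - riemannZeta₀ (1 + s) * qhat s
  let U : Set ℂ := {s | -1 < s.re}
  have hU : IsOpen U := isOpen_lt continuous_const Complex.continuous_re
  have hne : ∀ s ∈ U, s + 2 ≠ 0 ∧ s + 3 ≠ 0 ∧ s + 4 ≠ 0 ∧ s + 5 ≠ 0 := fun s hs => by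
    have := fun j hj => add_nat_ne s hs j hj
    exact ⟨by exact_mod_cast this 2 (by norm_num), by exact_mod_cast this 3 (by norm_num),
      by exact_mod_cast this 4 (by norm_num), by exact_mod_cast this 5 (by norm_num)⟩
  have hd : DifferentiableOn ℂ Hf U := by
    intro s hs
    obtain ⟨n2, n3, n4, n5⟩ := hne s hs
    refine DifferentiableAt.differentiableWithinAt ?_
    have hz : DifferentiableAt ℂ (fun s => riemannZeta₀ (1 + s)) s :=
      (differentiable_riemannZeta₀.comp (differentiable_const (1 : ℂ) |>.add differentiable_id)) s
    have hq : DifferentiableAt ℂ qhat s := by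
      unfold qhat
      fun_prop (disch := exact mul_ne_zero ‹_› ‹_›)
    have h1 : DifferentiableAt ℂ (fun s : ℂ => (kTheta : ℂ) * ((s + 5) / ((s + 2) * (s + 3))) + (1 - kTheta) * ((s + 9) / ((s + 4) * (s + 5)))) s := by
      fun_prop (disch := exact mul_ne_zero ‹_› ‹_›)
    exact h1.sub (hz.mul hq)
  have h00 : (0 : ℂ) ∈ U := by simp [U]
  have hz0 : Hf 0 = 0 := by
    simp only [Hf, qhat, add_zero, riemannZeta₀_one]
    have : (kTheta : ℂ) = ((Real.eulerMascheroniConstant - 9 / 20) / (23 / 60) : ℂ) := by rw [kTheta]; push_cast; rfl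
    rw [this]
    ring
  have hc : ContinuousOn (dslope Hf 0) U :=
    (continuousOn_dslope (hU.mem_nhds h00)).2 ⟨hd.continuousOn, hd.differentiableAt (hU.mem_nhds h00)⟩
  have hK : IsCompact (Metric.closedBall (0 : ℂ) 2 ∩ {s : ℂ | 0 ≤ s.re}) :=
    (isCompact_closedBall _ _).inter_right (isClosed_le continuous_const Complex.continuous_re)
  have hKU : (Metric.closedBall (0 : ℂ) 2 ∩ {s : ℂ | 0 ≤ s.re}) ⊆ U := fun s hs => by
    have : 0 ≤ s.re := hs.2
    change -1 < s.re
    linarith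
  obtain ⟨C, hC⟩ := hK.exists_bound_of_continuousOn (hc.mono hKU)
  refine ⟨max C 1, lt_max_of_lt_right one_pos, fun σ t h0 h1 ht => ?_⟩
  set s : ℂ := σ + I * t with hs
  have hre : s.re = σ := re_sI σ t
  have hs0 : s ≠ 0 := fun h => by rw [h] at hre; simp at hre; linarith
  have hsn : ‖s‖ ≤ 2 := by
    calc ‖s‖ ≤ ‖(σ : ℂ)‖ + ‖I * t‖ := norm_add_le _ _
      _ = |σ| + |t| := by simp
      _ ≤ 2 := by rw [abs_of_pos h0]; linarith
  have hmem : s ∈ Metric.closedBall (0 : ℂ) 2 ∩ {s : ℂ | 0 ≤ s.re} := ⟨by simpa using hsn, by rw [Set.mem_ofPred, hre]; exact h0.le⟩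
  have hb := hC s hmem
  have hsl : Hf s = s * dslope Hf 0 s := by
    have := sub_smul_dslope Hf 0 s
    rw [hz0, sub_zero, sub_zero, smul_eq_mul] at this
    exact this.symm
  have hlap : lap (fun v => (rker v : ℂ)) s = Hf s := by
    rw [hs, lap_rker σ t h0, add_assoc, ← hs, riemannZeta_eq_inv_sub_add (by simpa using hs0)]
    obtain ⟨n2, n3, n4, n5⟩ := hne s (hKU hmem)
    simp only [Hf, qhat, add_sub_cancel_left]
    field_simp
    ring
  rw [hlap, hsl, norm_mul, mul_comm]
  gcongr
  exact hb.trans (le_max_left _ _)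

theorem norm_qhat_le (σ t : ℝ) (ht : 1 ≤ |t|) : ‖qhat (σ + I * t)‖ ≤ 26 / t ^ 2 := by
  have h := kTheta_pos
  have h' := kTheta_lt
  have ht0 : 0 < |t| := by linarith
  have hn : ∀ j : ℝ, |t| ≤ ‖(σ + I * t + j : ℂ)‖ := fun j => by
    have := Complex.abs_im_le_norm (σ + I * t + j : ℂ)
    simpa using this
  have hf : ∀ a b : ℝ, ∀ c : ℝ, 0 ≤ c → ‖(c : ℂ) / ((σ + I * t + a) * (σ + I * t + b))‖ ≤ c / t ^ 2 := fun a b c hc => by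
    rw [norm_div, norm_mul, Complex.norm_real, Real.norm_eq_abs, abs_of_nonneg hc, ← sq_abs, sq]
    have := hn a
    have := hn b
    gcongr
  have f1 := hf 2 3 6 (by norm_num)
  have f2 := hf 4 5 20 (by norm_num)
  push_cast at f1 f2
  rw [qhat]
  refine (norm_add_le _ _).trans ?_
  rw [norm_mul, norm_mul, ← Complex.ofReal_one, ← Complex.ofReal_sub, Complex.norm_real, Complex.norm_real, Real.norm_eq_abs,
    Real.norm_eq_abs, abs_of_pos h, abs_of_pos (by linarith)]
  have e : (26 : ℝ) / t ^ 2 = 1 * (6 / t ^ 2) + 1 * (20 / t ^ 2) := by ring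
  rw [e]
  gcongr
  linarith

theorem lap_rker_large : ∃ C : ℝ, 0 < C ∧ ∀ σ t : ℝ, 0 < σ → σ ≤ 1 → 1 ≤ |t| →
    ‖lap (fun v => (rker v : ℂ)) (σ + I * t)‖ ≤ C / |t| := by
  obtain ⟨C, hC, h⟩ := log_zeta_bound
  refine ⟨1 + Real.exp C * 26, by positivity, fun σ t h0 h1 ht => ?_⟩
  have ht0 : 0 < |t| := by linarith
  have hz := (le_abs_self _).trans (h σ t h0 h1 (abs_pos.1 ht0))
  rw [Real.posLog_eq_log (x := |t|) (by rwa [abs_abs]), Real.posLog_eq_zero_iff (1 / |t|) |>.2 (by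
    rw [abs_of_pos (by positivity), div_le_one ht0]; exact ht)] at hz
  have hz2 : ‖riemannZeta (1 + σ + I * t)‖ ≤ Real.exp C * |t| := by
    refine (Real.le_exp_log _).trans ?_
    calc _ ≤ Real.exp (C + Real.log |t|) := Real.exp_le_exp.2 (by linarith [Real.log_nonneg ht])
      _ = _ := by rw [Real.exp_add, Real.exp_log ht0]
  rw [lap_rker σ t h0]
  refine (norm_sub_le _ _).trans ?_
  rw [norm_mul, norm_div, norm_one, add_div]
  have h2 : |t| ≤ ‖(σ + I * t : ℂ)‖ := by simpa using Complex.abs_im_le_norm (σ + I * t : ℂ)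
  gcongr
  calc _ ≤ (Real.exp C * |t|) * (26 / t ^ 2) := by
        gcongr
        exact norm_qhat_le σ t ht
    _ = _ := by rw [← sq_abs t]; field_simp

end

section
open Finset Complex Filter MeasureTheory

/-- The transform of `mconv f rker`. For `|t| ≤ σ` the trivial bound `F(1+s) ≪ 1/σ` is used, elsewhere
`dsum_bound`; the exponent `1 - 3/(2π)` exceeds `1/2`. -/
theorem transform_bound : ∃ C : ℝ, 0 < C ∧ ∀ f : ℕ → ℝ, (∀ n, f n ∈ Set.Icc (-1 : ℝ) 1) → IsCM f →
    ∀ σ t : ℝ, 0 < σ → σ ≤ 1 →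
      ‖dsum (fun n => f n) (1 + σ + I * t) * lap (fun v => (rker v : ℂ)) (σ + I * t)‖ ≤
        C * σ ^ (-(2 / Real.pi)) * (1 + |t|) ^ (-(1 - 3 / (2 * Real.pi))) := by
  obtain ⟨A, hA, hd⟩ := dsum_bound
  obtain ⟨B, hB, hn⟩ := dsum_norm_le
  obtain ⟨S, hS, hs⟩ := lap_rker_small
  obtain ⟨L, hL, hl⟩ := lap_rker_large
  have hpi := Real.pi_gt_three
  have hp : 0 < Real.pi := Real.pi_pos
  have hb0 : 0 ≤ 1 - 3 / (2 * Real.pi) := by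
    rw [sub_nonneg, div_le_one (by positivity)]; linarith
  have hb1 : 1 - 3 / (2 * Real.pi) ≤ 1 := by
    have : 0 ≤ 3 / (2 * Real.pi) := by positivity
    linarith
  have h2p : 2 / Real.pi ≤ 1 := by rw [div_le_one hp]; linarith
  have h2p0 : 0 ≤ 2 / Real.pi := by positivity
  -- comparison of `(1 + |t|)` with `1` and with `|t|`
  have hsmall : ∀ t : ℝ, |t| ≤ 1 → 1 / 2 ≤ (1 + |t|) ^ (-(1 - 3 / (2 * Real.pi))) := by
    intro t ht
    have h0 := abs_nonneg t
    rw [Real.rpow_neg (by linarith), one_div]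
    apply inv_anti₀ (by positivity)
    calc (1 + |t|) ^ (1 - 3 / (2 * Real.pi)) ≤ (1 + |t|) ^ (1 : ℝ) :=
          Real.rpow_le_rpow_of_exponent_le (by linarith) hb1
      _ ≤ 2 := by rw [Real.rpow_one]; linarith
  have hlarge : ∀ t : ℝ, 1 ≤ |t| → |t| ^ (-(1 - 3 / (2 * Real.pi))) ≤ 2 * (1 + |t|) ^ (-(1 - 3 / (2 * Real.pi))) := by
    intro t ht
    have h0 : 0 < |t| := by linarith
    have e : (2 * |t|) ^ (-(1 - 3 / (2 * Real.pi))) ≤ (1 + |t|) ^ (-(1 - 3 / (2 * Real.pi))) :=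
      Real.rpow_le_rpow_of_nonpos (by linarith) (by linarith) (by linarith)
    rw [Real.mul_rpow (by norm_num) h0.le] at e
    have e2 : (1 : ℝ) / 2 ≤ 2 ^ (-(1 - 3 / (2 * Real.pi))) := by
      have := hsmall 1 (by simp)
      rwa [abs_one, one_add_one_eq_two] at this
    have e3 : 0 ≤ |t| ^ (-(1 - 3 / (2 * Real.pi))) := by positivity
    nlinarith
  have hσ1 : ∀ σ : ℝ, 0 < σ → σ ≤ 1 → 1 ≤ σ ^ (-(2 / Real.pi)) := fun σ h0 h1 =>
    Real.one_le_rpow_of_pos_of_le_one_of_nonpos h0 h1 (by linarith)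
  have hexp2 : ∀ σ u : ℝ, 0 < σ → Real.exp (A + 2 / Real.pi * (Real.log (1 / σ) + u)) =
      Real.exp A * σ ^ (-(2 / Real.pi)) * Real.exp (2 / Real.pi * u) := by
    intro σ u h0
    rw [Real.rpow_def_of_pos h0, ← Real.exp_add, ← Real.exp_add, one_div, Real.log_inv]
    congr 1; ring
  refine ⟨2 * (Real.exp A * L) + 4 * (Real.exp A * S) + 4 * (B * S), by positivity, fun f hf hcm σ t h0 h1 => ?_⟩
  have hB0 : 0 < B := by linarith
  have hσp := hσ1 σ h0 h1
  have hw : 0 < (1 + |t|) ^ (-(1 - 3 / (2 * Real.pi))) := by positivity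
  have hns : ‖(σ + I * t : ℂ)‖ ≤ σ + |t| := by
    calc _ ≤ ‖(σ : ℂ)‖ + ‖I * t‖ := norm_add_le _ _
      _ = _ := by simp [abs_of_pos h0]
  rw [norm_mul]
  suffices h : ‖dsum (fun n => f n) (1 + σ + I * t)‖ * ‖lap (fun v => (rker v : ℂ)) (σ + I * t)‖ ≤
      2 * (Real.exp A * L) * σ ^ (-(2 / Real.pi)) * (1 + |t|) ^ (-(1 - 3 / (2 * Real.pi))) ∨
      ‖dsum (fun n => f n) (1 + σ + I * t)‖ * ‖lap (fun v => (rker v : ℂ)) (σ + I * t)‖ ≤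
      4 * (Real.exp A * S) * σ ^ (-(2 / Real.pi)) * (1 + |t|) ^ (-(1 - 3 / (2 * Real.pi))) ∨
      ‖dsum (fun n => f n) (1 + σ + I * t)‖ * ‖lap (fun v => (rker v : ℂ)) (σ + I * t)‖ ≤
      4 * (B * S) * σ ^ (-(2 / Real.pi)) * (1 + |t|) ^ (-(1 - 3 / (2 * Real.pi))) by
    have p1 : 0 ≤ 2 * (Real.exp A * L) * σ ^ (-(2 / Real.pi)) * (1 + |t|) ^ (-(1 - 3 / (2 * Real.pi))) := by positivity
    have p2 : 0 ≤ 4 * (Real.exp A * S) * σ ^ (-(2 / Real.pi)) * (1 + |t|) ^ (-(1 - 3 / (2 * Real.pi))) := by positivity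
    have p3 : 0 ≤ 4 * (B * S) * σ ^ (-(2 / Real.pi)) * (1 + |t|) ^ (-(1 - 3 / (2 * Real.pi))) := by positivity
    rw [add_mul, add_mul, add_mul, add_mul]
    rcases h with h | h | h <;> linarith
  rcases le_total 1 |t| with ht | ht
  · left
    have ht0 : 0 < |t| := by linarith
    have hb := hd f hf hcm σ t h0 h1 (abs_pos.1 ht0)
    rw [Real.posLog_eq_log (x := |t|) (by rwa [abs_abs]), Real.posLog_eq_zero_iff (1 / |t|) |>.2 (by
      rw [abs_of_pos (by positivity), div_le_one ht0]; exact ht), add_zero, hexp2 σ _ h0] at hb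
    have hb2 := hl σ t h0 h1 ht
    have e : Real.exp (2 / Real.pi * (3 / 4 * Real.log |t|)) / |t| = |t| ^ (-(1 - 3 / (2 * Real.pi))) := by
      rw [Real.rpow_def_of_pos ht0]
      nth_rewrite 2 [← Real.exp_log ht0]
      rw [← Real.exp_sub]
      congr 1; field_simp; ring
    calc _ ≤ (Real.exp A * σ ^ (-(2 / Real.pi)) * Real.exp (2 / Real.pi * (3 / 4 * Real.log |t|))) * (L / |t|) := by gcongr
      _ = Real.exp A * L * σ ^ (-(2 / Real.pi)) * (Real.exp (2 / Real.pi * (3 / 4 * Real.log |t|)) / |t|) := by ring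
      _ ≤ Real.exp A * L * σ ^ (-(2 / Real.pi)) * (2 * (1 + |t|) ^ (-(1 - 3 / (2 * Real.pi)))) := by
          rw [e]; gcongr; exact hlarge t ht
      _ = _ := by ring
  · right
    have hw2 := hsmall t ht
    have hb2 := hs σ t h0 h1 ht
    rcases le_total σ |t| with hst | hst
    · left
      have ht0 : 0 < |t| := by linarith
      have hb := hd f hf hcm σ t h0 h1 (abs_pos.1 ht0)
      rw [Real.posLog_eq_log (x := 1 / |t|) (by
          rw [abs_of_pos (by positivity), le_div_iff₀ ht0]; linarith),
        Real.posLog_eq_zero_iff |t| |>.2 (by rwa [abs_abs]), mul_zero, add_zero, hexp2 σ _ h0] at hb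
      have e : Real.exp (2 / Real.pi * Real.log (1 / |t|)) * |t| ≤ 1 := by
        nth_rewrite 2 [← Real.exp_log ht0]
        rw [← Real.exp_add, Real.exp_le_one_iff, one_div, Real.log_inv]
        have := Real.log_nonpos ht0.le ht
        nlinarith
      calc _ ≤ (Real.exp A * σ ^ (-(2 / Real.pi)) * Real.exp (2 / Real.pi * Real.log (1 / |t|))) * (S * (2 * |t|)) := by
            gcongr
            refine hb2.trans ?_
            gcongr
            linarith
        _ = 4 * (Real.exp A * S) * σ ^ (-(2 / Real.pi)) * ((Real.exp (2 / Real.pi * Real.log (1 / |t|)) * |t|) * (1 / 2)) := by ring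
        _ ≤ 4 * (Real.exp A * S) * σ ^ (-(2 / Real.pi)) * (1 * (1 + |t|) ^ (-(1 - 3 / (2 * Real.pi)))) := by gcongr
        _ = _ := by ring
    · right
      have hb := hn f hf σ t h0 h1
      calc _ ≤ B / σ * (S * (2 * σ)) := by
            gcongr
            refine hb2.trans ?_
            gcongr
            linarith
        _ = 4 * (B * S) * 1 * (1 / 2) := by field_simp; ring
        _ ≤ _ := by gcongr

end

/-! ### The smoothed sum and its functional equation -/

section
open Finset Complex Filter MeasureTheory ArithmeticFunction
open scoped ArithmeticFunction.zeta

theorem IsCM.pow {f : ℕ → ℝ} (h : IsCM f) (p k : ℕ) : f (p ^ k) = f p ^ k := by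
  induction k with
  | zero => simpa using h.1
  | succ k ih => rw [pow_succ, h.2, ih, pow_succ]

theorem geom_nonneg (r : ℝ) (h : r ∈ Set.Icc (-1 : ℝ) 1) (k : ℕ) : 0 ≤ ∑ i ∈ range (k + 1), r ^ i := by
  rcases h.1.eq_or_lt with h1 | h1
  · rw [← h1, neg_one_geom_sum]; split_ifs <;> norm_num
  · exact (geom_sum_pos' (by linarith) (by omega)).le

/-- `1 * f ≥ 0`: by multiplicativity it is a product of geometric sums `1 + f(p) + ⋯ + f(p)^k ≥ 0`. -/
theorem one_star_nonneg {f : ℕ → ℝ} (hf : ∀ n, f n ∈ Set.Icc (-1 : ℝ) 1) (h : IsCM f) (n : ℕ) :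
    0 ≤ ∑ p ∈ n.divisorsAntidiagonal, f p.1 * 1 := by
  let F : ArithmeticFunction ℝ := ⟨fun n => if n = 0 then 0 else f n, by simp⟩
  have hF : ∀ n, n ≠ 0 → F n = f n := fun n hn => by
    change (if n = 0 then 0 else f n) = f n
    rw [if_neg hn]
  have hFm : F.IsMultiplicative := by
    refine IsMultiplicative.iff_ne_zero.2 ⟨by rw [hF 1 one_ne_zero, h.1], fun {m n} hm hn _ => ?_⟩
    rw [hF _ hm, hF _ hn, hF _ (mul_ne_zero hm hn), h.2]
  have hG : (F * (ζ : ArithmeticFunction ℝ)).IsMultiplicative := hFm.mul isMultiplicative_zeta.natCast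
  have e : ∀ n, ∑ p ∈ n.divisorsAntidiagonal, f p.1 * 1 = (F * (ζ : ArithmeticFunction ℝ)) n := fun n => by
    rw [ArithmeticFunction.mul_apply]
    refine Finset.sum_congr rfl fun p hp => ?_
    obtain ⟨h1, h2⟩ := Nat.ne_zero_of_mem_divisorsAntidiagonal hp
    rw [hF _ h1, natCoe_apply, zeta_apply_ne h2, Nat.cast_one]
  rw [e]
  induction n using Nat.recOnPosPrimePosCoprime with
  | zero => simp
  | one => rw [hG.1]; norm_num
  | prime_pow p k hp hk =>
    rw [coe_mul_zeta_apply, Nat.sum_divisors_prime_pow hp]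
    have : ∀ i, F (p ^ i) = f p ^ i := fun i => by rw [hF _ (pow_ne_zero _ hp.ne_zero), h.pow]
    simp only [this]
    exact geom_nonneg _ (hf p) k
  | coprime a b ha hb hab iha ihb =>
    rw [hG.2 hab]; exact mul_nonneg iha ihb

/-- The difference of the two sides is `mconv (1 * f) qker X ≥ 0`. -/
theorem Lsum_ge {f : ℕ → ℝ} (hf : ∀ n, f n ∈ Set.Icc (-1 : ℝ) 1) (h : IsCM f) (X : ℝ) :
    mconv f rker X ≤ Lsum f (Real.exp X) := by
  have e : mconv f rker X = Lsum f (Real.exp X) - mconv f (mconv (fun _ => (1 : ℝ)) qker) X := by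
    rw [mconv, mconv, Lsum, ← Finset.sum_sub_distrib]
    refine Finset.sum_congr rfl fun n hn => ?_
    rw [rker, if_pos (mem_Icc_floor_exp.1 hn).2]
    ring
  rw [e, mconv_assoc]
  have : 0 ≤ mconv (fun n => ∑ p ∈ n.divisorsAntidiagonal, f p.1 * 1) qker X := by
    refine Finset.sum_nonneg fun n _ => ?_
    have := one_star_nonneg hf h n
    have := qker_nonneg (X - Real.log n)
    positivity
  linarith

theorem exp_neg_sub_log (v : ℝ) (d : ℕ) (hd : 1 ≤ d) : Real.exp (-(v - Real.log d)) = d / Real.exp v := by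
  rw [Real.exp_neg, exp_sub_log v d hd, inv_div]

theorem abs_le_of_mem {f : ℕ → ℝ} (hf : ∀ n, f n ∈ Set.Icc (-1 : ℝ) 1) (n : ℕ) : |f n| ≤ 1 := abs_le.2 (hf n)

theorem card_floor_exp (v : ℝ) : ((#(Icc 1 ⌊Real.exp v⌋₊) : ℕ) : ℝ) ≤ Real.exp v := by
  rw [Nat.card_Icc, Nat.add_sub_cancel]
  exact Nat.floor_le (Real.exp_pos v).le

theorem E_bound {f : ℕ → ℝ} (hf : ∀ n, f n ∈ Set.Icc (-1 : ℝ) 1) (v : ℝ) : |mconv f rker v| ≤ 1000 := by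
  have h0 := Real.exp_pos v
  calc |mconv f rker v| ≤ ∑ n ∈ Icc 1 ⌊Real.exp v⌋₊, |f n / n * rker (v - Real.log n)| := abs_sum_le_sum_abs _ _
    _ ≤ ∑ n ∈ Icc 1 ⌊Real.exp v⌋₊, 1000 / Real.exp v := by
        refine Finset.sum_le_sum fun n hn => ?_
        obtain ⟨h1, h2⟩ := mem_Icc_floor_exp.1 hn
        have hn0 : (0 : ℝ) < n := by exact_mod_cast h1
        rw [abs_mul, abs_div, Nat.abs_cast]
        calc |f n| / n * |rker (v - Real.log n)| ≤ 1 / n * (1000 * (n / Real.exp v)) := by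
              have := rker_bound _ h2
              rw [exp_neg_sub_log v n h1] at this
              have := abs_le_of_mem hf n
              gcongr
          _ = _ := by field_simp
    _ = #(Icc 1 ⌊Real.exp v⌋₊) * (1000 / Real.exp v) := by rw [Finset.sum_const, nsmul_eq_mul]
    _ ≤ Real.exp v * (1000 / Real.exp v) := by have := card_floor_exp v; gcongr
    _ = 1000 := by field_simp

/-- Lipschitz property of `E = mconv f rker` down to the scale `e^{-w}` on which `E` has jumps. -/
theorem E_lip {f : ℕ → ℝ} (hf : ∀ n, f n ∈ Set.Icc (-1 : ℝ) 1) (v w : ℝ) (hvw : v ≤ w) :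
    |mconv f rker w - mconv f rker v| ≤ 11000 * ((w - v) + Real.exp (-w)) := by
  have hle : ⌊Real.exp v⌋₊ ≤ ⌊Real.exp w⌋₊ := Nat.floor_le_floor (Real.exp_le_exp.2 hvw)
  have hv0 := Real.exp_pos v
  have hw0 := Real.exp_pos w
  have hsplit : ∀ F : ℕ → ℝ, ∑ n ∈ Icc 1 ⌊Real.exp w⌋₊, F n =
      ∑ n ∈ Icc 1 ⌊Real.exp v⌋₊, F n + ∑ n ∈ Ioc ⌊Real.exp v⌋₊ ⌊Real.exp w⌋₊, F n := fun F =>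
    (Finset.sum_Ioc_consecutive F (Nat.zero_le _) hle).symm
  have e : mconv f rker w - mconv f rker v =
      ∑ n ∈ Icc 1 ⌊Real.exp v⌋₊, f n / n * (rker (w - Real.log n) - rker (v - Real.log n)) +
      ∑ n ∈ Ioc ⌊Real.exp v⌋₊ ⌊Real.exp w⌋₊, f n / n * rker (w - Real.log n) := by
    rw [mconv, mconv, hsplit, add_sub_right_comm, ← Finset.sum_sub_distrib]
    congr 1
    refine Finset.sum_congr rfl fun n _ => ?_
    ring
  have b1 : |∑ n ∈ Icc 1 ⌊Real.exp v⌋₊, f n / n * (rker (w - Real.log n) - rker (v - Real.log n))| ≤ 10000 * (w - v) := by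
    have hd : 0 ≤ w - v := by linarith
    calc _ ≤ ∑ n ∈ Icc 1 ⌊Real.exp v⌋₊, |f n / n * (rker (w - Real.log n) - rker (v - Real.log n))| := abs_sum_le_sum_abs _ _
      _ ≤ ∑ n ∈ Icc 1 ⌊Real.exp v⌋₊, 10000 * (w - v) / Real.exp v := by
          refine Finset.sum_le_sum fun n hn => ?_
          obtain ⟨h1, h2⟩ := mem_Icc_floor_exp.1 hn
          have hn0 : (0 : ℝ) < n := by exact_mod_cast h1
          rw [abs_mul, abs_div, Nat.abs_cast]
          calc |f n| / n * |rker (w - Real.log n) - rker (v - Real.log n)|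
                ≤ 1 / n * (10000 * (n / Real.exp v) * (w - v)) := by
                have := rker_lip _ (w - Real.log n) h2 (by linarith)
                rw [exp_neg_sub_log v n h1, sub_sub_sub_cancel_right] at this
                have := abs_le_of_mem hf n
                gcongr
            _ = _ := by field_simp
      _ = #(Icc 1 ⌊Real.exp v⌋₊) * (10000 * (w - v) / Real.exp v) := by rw [Finset.sum_const, nsmul_eq_mul]
      _ ≤ Real.exp v * (10000 * (w - v) / Real.exp v) := by have := card_floor_exp v; gcongr
      _ = _ := by field_simp
  have b2 : |∑ n ∈ Ioc ⌊Real.exp v⌋₊ ⌊Real.exp w⌋₊, f n / n * rker (w - Real.log n)| ≤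
      1000 * ((w - v) + Real.exp (-w)) := by
    calc _ ≤ ∑ n ∈ Ioc ⌊Real.exp v⌋₊ ⌊Real.exp w⌋₊, |f n / n * rker (w - Real.log n)| := abs_sum_le_sum_abs _ _
      _ ≤ ∑ n ∈ Ioc ⌊Real.exp v⌋₊ ⌊Real.exp w⌋₊, 1000 / Real.exp w := by
          refine Finset.sum_le_sum fun n hn => ?_
          obtain ⟨h1, h2⟩ := mem_Icc_floor_exp.1 (show n ∈ Icc 1 ⌊Real.exp w⌋₊ from
            mem_Icc.2 ⟨by have := (mem_Ioc.1 hn).1; omega, (mem_Ioc.1 hn).2⟩)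
          have hn0 : (0 : ℝ) < n := by exact_mod_cast h1
          rw [abs_mul, abs_div, Nat.abs_cast]
          calc |f n| / n * |rker (w - Real.log n)| ≤ 1 / n * (1000 * (n / Real.exp w)) := by
                have := rker_bound _ h2
                rw [exp_neg_sub_log w n h1] at this
                have := abs_le_of_mem hf n
                gcongr
            _ = _ := by field_simp
      _ = #(Ioc ⌊Real.exp v⌋₊ ⌊Real.exp w⌋₊) * (1000 / Real.exp w) := by rw [Finset.sum_const, nsmul_eq_mul]
      _ ≤ (Real.exp w - Real.exp v + 1) * (1000 / Real.exp w) := by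
          gcongr
          rw [Nat.card_Ioc, Nat.cast_sub hle]
          have := Nat.floor_le hw0.le
          have := Nat.lt_floor_add_one (Real.exp v)
          linarith
      _ = 1000 * ((1 - Real.exp (v - w)) + Real.exp (-w)) := by
          rw [Real.exp_sub, Real.exp_neg]; field_simp
      _ ≤ _ := by
          have := Real.add_one_le_exp (v - w)
          linarith
  rw [e]
  refine (abs_add_le _ _).trans ?_
  have := Real.exp_pos (-w)
  linarith

/-- The error term in `mul_E_eq` is bounded. -/
theorem E2_bound {f : ℕ → ℝ} (hf : ∀ n, f n ∈ Set.Icc (-1 : ℝ) 1) (v : ℝ) :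
    |mconv f (fun u => u * rker u) v| ≤ 4000 := by
  set S := Real.exp (v / 2) with hS
  have hS0 : 0 < S := Real.exp_pos _
  have hSS : Real.exp v = S ^ 2 := by rw [hS, sq, ← Real.exp_add]; congr 1; ring
  calc |mconv f (fun u => u * rker u) v| ≤
        ∑ n ∈ Icc 1 ⌊Real.exp v⌋₊, |f n / n * ((v - Real.log n) * rker (v - Real.log n))| := abs_sum_le_sum_abs _ _
    _ ≤ ∑ n ∈ Icc 1 ⌊Real.exp v⌋₊, 2000 / S * (1 / √(n : ℝ)) := by
        refine Finset.sum_le_sum fun n hn => ?_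
        obtain ⟨h1, h2⟩ := mem_Icc_floor_exp.1 hn
        have hn0 : (0 : ℝ) < n := by exact_mod_cast h1
        have hq : 0 < √(n : ℝ) := Real.sqrt_pos.2 hn0
        have hqq : √(n : ℝ) ^ 2 = n := Real.sq_sqrt hn0.le
        rw [abs_mul, abs_div, Nat.abs_cast, abs_mul, abs_of_nonneg h2]
        have hr := rker_bound _ h2
        set u := v - Real.log n with hu
        have hu1 : Real.exp (-u) = Real.exp (-(u / 2)) * Real.exp (-(u / 2)) := by
          rw [← Real.exp_add]; congr 1; ring
        have hu2 : Real.exp (-(u / 2)) = √(n : ℝ) / S := by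
          have : Real.exp (-u) = (√(n : ℝ) / S) ^ 2 := by
            rw [hu, exp_neg_sub_log v n h1, hSS, div_pow, hqq]
          rw [hu1, ← sq] at this
          exact (sq_eq_sq₀ (Real.exp_pos _).le (by positivity)).1 this
        have hu3 : u * Real.exp (-(u / 2)) ≤ 2 := by
          have := Real.add_one_le_exp (u / 2)
          rw [Real.exp_neg]
          rw [← div_eq_mul_inv, div_le_iff₀ (Real.exp_pos _)]
          linarith
        have : |f n| ≤ 1 := abs_le_of_mem hf n
        calc |f n| / n * (u * |rker u|) ≤ 1 / n * (u * (1000 * Real.exp (-u))) := by gcongr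
          _ = 1000 * (1 / n) * (u * Real.exp (-(u / 2))) * (√(n : ℝ) / S) := by rw [hu1, hu2]; ring
          _ ≤ 1000 * (1 / n) * 2 * (√(n : ℝ) / S) := by gcongr
          _ = 2000 / S * (√(n : ℝ) / √(n : ℝ) ^ 2) := by rw [hqq]; ring
          _ = _ := by rw [sq, div_mul_cancel_left₀ hq.ne', one_div]
    _ = 2000 / S * ∑ n ∈ Icc 1 ⌊Real.exp v⌋₊, 1 / √(n : ℝ) := by rw [Finset.mul_sum]
    _ ≤ 2000 / S * (2 * S) := by
        have h3 : √((⌊Real.exp v⌋₊ : ℕ) : ℝ) ≤ S := by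
          rw [Real.sqrt_le_left hS0.le, ← hSS]
          exact Nat.floor_le (Real.exp_pos v).le
        have := sum_inv_sqrt_le ⌊Real.exp v⌋₊
        gcongr
        linarith
    _ = 4000 := by field_simp; norm_num

/-- `(Λ f) * f = f log`, from `Λ * 1 = log`. -/
theorem log_star {f : ℕ → ℝ} (h : IsCM f) (n : ℕ) :
    ∑ p ∈ n.divisorsAntidiagonal, (Λ p.1 * f p.1) * f p.2 = f n * Real.log n := by
  rw [← vonMangoldt_sum, Finset.mul_sum, ← Nat.sum_divisorsAntidiagonal (fun i _ => f n * Λ i)]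
  refine Finset.sum_congr rfl fun p hp => ?_
  rw [← (Nat.mem_divisorsAntidiagonal.1 hp).1, h.2]
  ring

/-- Splitting `v = log n + (v - log n)` and using `f log = (Λ f) * f`. -/
theorem mul_E_eq {f : ℕ → ℝ} (h : IsCM f) (v : ℝ) :
    v * mconv f rker v = mconv (fun n => Λ n * f n) (mconv f rker) v + mconv f (fun u => u * rker u) v := by
  rw [mconv_assoc]
  simp only [log_star h]
  rw [mconv, mconv, mconv, ← Finset.sum_add_distrib, Finset.mul_sum]
  refine Finset.sum_congr rfl fun n _ => ?_
  ring

end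

/-! ### Mean squares -/

section
open Finset Complex Filter MeasureTheory ArithmeticFunction

/-- An integral over the line is estimated window by window, `[k, k + 1]`, with a dominating function for each window. -/
theorem window_sum (G : ℝ → ℝ) (hG : Integrable G) (F : ℤ → ℝ → ℝ) (hF : ∀ k, Integrable (F k))
    (hF0 : ∀ k t, 0 ≤ F k t) (B : ℝ) (hB : ∀ k, ∫ t, F k t ≤ B) (w : ℤ → ℝ) (hw0 : ∀ k, 0 ≤ w k)
    (hw : Summable w) (h : ∀ (k : ℤ) (t : ℝ), (k : ℝ) ≤ t → t ≤ k + 1 → G t ≤ w k * F k t) :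
    ∫ t, G t ≤ (∑' k, w k) * B := by
  have hs := hG.hasSum_intervalIntegral 0
  refine hasSum_le (fun k => ?_) hs (hw.hasSum.mul_right B)
  rw [zero_add]
  calc ∫ x in (k : ℝ)..k + 1, G x ≤ ∫ x in (k : ℝ)..k + 1, w k * F k x :=
        intervalIntegral.integral_mono_on (by linarith) hG.intervalIntegrable
          ((hF k).const_mul _).intervalIntegrable fun t ht => h k t ht.1 ht.2
    _ = w k * ∫ x in (k : ℝ)..k + 1, F k x := intervalIntegral.integral_const_mul _ _
    _ ≤ w k * ∫ x, F k x := by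
        rw [intervalIntegral.integral_of_le (by linarith)]
        exact mul_le_mul_of_nonneg_left (setIntegral_le_integral (hF k) (.of_forall (hF0 k))) (hw0 k)
    _ ≤ w k * B := mul_le_mul_of_nonneg_left (hB k) (hw0 k)

theorem summable_weights (b : ℝ) (hb : 1 < b) : Summable fun k : ℤ => (1 + |(k : ℝ)|) ^ (-b) := by
  have h1 : Summable fun k : ℤ => |(k : ℝ)| ^ (-b) + if k = 0 then (1 : ℝ) else 0 :=
    (Real.summable_abs_int_rpow hb).add (hasSum_ite_eq 0 1).summable
  refine Summable.of_nonneg_of_le (fun k => by positivity) (fun k => ?_) h1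
  rcases eq_or_ne k 0 with rfl | hk
  · simp only [Int.cast_zero, abs_zero, add_zero, Real.one_rpow, if_true]
    have : (0 : ℝ) ≤ 0 ^ (-b) := by positivity
    linarith
  · rw [if_neg hk, add_zero]
    have : 0 < |(k : ℝ)| := abs_pos.2 (by exact_mod_cast hk)
    exact Real.rpow_le_rpow_of_nonpos this (by linarith) (by linarith)

theorem summable_vonMangoldt_rpow (σ : ℝ) (hσ : 0 < σ) : Summable fun n : ℕ => Λ n * (n : ℝ) ^ (-(1 + σ)) := by
  have h := (LSeriesSummable_vonMangoldt (s := 1 + σ) (by simpa using hσ)).norm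
  refine h.congr fun n => ?_
  rw [LSeries.norm_term_eq]
  split_ifs with hn
  · simp [hn]
  · rw [Complex.norm_real, Real.norm_eq_abs, abs_of_nonneg vonMangoldt_nonneg, Real.rpow_neg (by positivity), div_eq_mul_inv]
    simp

theorem summable_of_norm_le (a : ℕ → ℂ) (ha : ∀ n, ‖a n‖ ≤ Λ n) (σ : ℝ) (hσ : 0 < σ) :
    Summable fun n : ℕ => ‖a n‖ * (n : ℝ) ^ (-(1 + σ)) :=
  Summable.of_nonneg_of_le (fun n => by positivity) (fun n => by gcongr; exact ha n) (summable_vonMangoldt_rpow σ hσ)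

/-- Mean square of a Dirichlet series with coefficients dominated by `Λ`, weighted by `1 / |s + 1|²`: by Plancherel it is
the mean square of `mconv a (e^{-v})`, which Chebyshev's estimate bounds. -/
theorem window_bound : ∃ C : ℝ, 0 < C ∧ ∀ a : ℕ → ℂ, (∀ n, ‖a n‖ ≤ Λ n) → ∀ σ : ℝ, 0 < σ →
    Integrable (fun t : ℝ => ‖dsum a (1 + σ + I * t) * (1 / (σ + I * t + 1))‖ ^ 2) ∧
    ∫ t : ℝ, ‖dsum a (1 + σ + I * t) * (1 / (σ + I * t + 1))‖ ^ 2 ≤ C / σ := by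
  obtain ⟨C, hC, hpsi⟩ := psi_bound
  have hC0 : 0 < C := by linarith
  have hpi := Real.pi_pos
  refine ⟨Real.pi * C ^ 2, by positivity, fun a ha σ hσ => ?_⟩
  have hb : ∀ v : ℝ, ‖mconv a (hexp 1) v‖ ≤ C := fun v => by
    calc ‖mconv a (hexp 1) v‖ ≤ ∑ n ∈ Icc 1 ⌊Real.exp v⌋₊, ‖a n / n * hexp 1 (v - Real.log n)‖ := norm_sum_le _ _
      _ ≤ ∑ n ∈ Icc 1 ⌊Real.exp v⌋₊, Λ n / Real.exp v := by
          refine Finset.sum_le_sum fun n hn => ?_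
          obtain ⟨h1, h2⟩ := mem_Icc_floor_exp.1 hn
          have hn0 : (0 : ℝ) < n := by exact_mod_cast h1
          have hev := Real.exp_pos v
          rw [norm_mul, norm_div, Complex.norm_natCast, hexp, if_pos h2, Complex.norm_real, Real.norm_eq_abs,
            abs_of_pos (Real.exp_pos _), Nat.cast_one, one_mul, exp_neg_sub_log v n h1]
          calc ‖a n‖ / n * (n / Real.exp v) ≤ Λ n / n * (n / Real.exp v) := by gcongr; exact ha n
            _ = _ := by field_simp
      _ = Chebyshev.psi (Real.exp v) / Real.exp v := by rw [← Finset.sum_div]; rfl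
      _ ≤ C := by
          rw [div_le_iff₀ (Real.exp_pos v)]
          exact hpsi _ (Real.exp_pos v).le
  obtain ⟨i1, i2, e⟩ := lap_plancherel (mconv a (hexp 1)) (mconv_measurable a _ (hexp_measurable 1))
    (fun v hv => mconv_neg a _ hv) C (fun v hv => (hb v).trans (by nlinarith)) σ hσ
  have el : ∀ t : ℝ, lap (mconv a (hexp 1)) (σ + I * t) = dsum a (1 + σ + I * t) * (1 / (σ + I * t + 1)) := fun t => by
    rw [lap_mconv a (hexp 1) (hexp_measurable 1) (hexp_neg 1) 1 (fun v hv => (norm_hexp_le 1 v hv).trans (by linarith))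
      σ t hσ (summable_of_norm_le a ha σ hσ), lap_hexp 1 _ (by rw [re_sI]; exact hσ), Nat.cast_one]
  simp only [el] at i2 e
  refine ⟨i2, ?_⟩
  rw [e]
  have hle : ∫ v, ‖mconv a (hexp 1) v‖ ^ 2 * Real.exp (-(2 * σ * v)) ≤ C ^ 2 * (1 / (2 * σ)) := by
    have hz : ∫ v, ‖mconv a (hexp 1) v‖ ^ 2 * Real.exp (-(2 * σ * v)) =
        ∫ v in Set.Ici 0, ‖mconv a (hexp 1) v‖ ^ 2 * Real.exp (-(2 * σ * v)) := by
      refine (setIntegral_eq_integral_of_forall_compl_eq_zero fun v hv => ?_).symm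
      rw [mconv_neg a _ (by simpa using hv)]; simp
    rw [hz, integral_Ici_eq_integral_Ioi]
    calc _ ≤ ∫ v in Set.Ioi (0 : ℝ), C ^ 2 * Real.exp (-(2 * σ) * v) := by
          refine setIntegral_mono_on i1.integrableOn ((integrableOn_exp_mul_Ioi (by linarith) 0).const_mul _)
            measurableSet_Ioi fun v _ => ?_
          rw [neg_mul]
          have := hb v
          gcongr
      _ = _ := by
          rw [integral_const_mul, integral_exp_mul_Ioi (by linarith)]
          simp [neg_div_neg_eq]
  calc 2 * Real.pi * _ ≤ 2 * Real.pi * (C ^ 2 * (1 / (2 * σ))) := by gcongr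
    _ = _ := by field_simp

/-- Twisting by `n^{-ik}` shifts the Dirichlet series vertically, so that `window_bound` applies around any height. -/
theorem dsum_twist (a : ℕ → ℂ) (h0 : a 0 = 0) (k : ℤ) (σ t : ℝ) :
    dsum (fun n => a n * (n : ℂ) ^ (-(I * k))) (1 + σ + I * (t - k : ℝ)) = dsum a (1 + σ + I * t) := by
  refine tsum_congr fun n => ?_
  rcases Nat.eq_zero_or_pos n with rfl | hn
  · simp [h0]
  · rw [mul_assoc, ← Complex.cpow_add _ _ (by exact_mod_cast hn.ne')]
    congr 2
    push_cast; ring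

theorem norm_natCast_cpow_I (n : ℕ) (hn : 0 < n) (k : ℤ) : ‖(n : ℂ) ^ (-(I * k))‖ = 1 := by
  rw [Complex.norm_natCast_cpow_of_pos hn]; simp

theorem Cf_bound : ∃ K : ℝ, 0 < K ∧ ∀ f : ℕ → ℝ, (∀ n, f n ∈ Set.Icc (-1 : ℝ) 1) → ∀ v, 0 ≤ v →
    |mconv (fun n => Λ n * f n) (mconv f rker) v| ≤ K * (1 + v) := by
  obtain ⟨M, hM, hm⟩ := mertens
  refine ⟨1000 * (1 + M), by positivity, fun f hf v hv => ?_⟩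
  have h1 := hm (Real.exp v) (Real.one_le_exp hv)
  rw [Real.log_exp] at h1
  have h2 := (abs_le.1 h1).2
  calc _ ≤ ∑ n ∈ Icc 1 ⌊Real.exp v⌋₊, |Λ n * f n / n * mconv f rker (v - Real.log n)| := abs_sum_le_sum_abs _ _
    _ ≤ ∑ n ∈ Icc 1 ⌊Real.exp v⌋₊, Λ n / n * 1000 := by
        refine Finset.sum_le_sum fun n hn => ?_
        rw [abs_mul, abs_div, abs_mul, Nat.abs_cast, abs_of_nonneg vonMangoldt_nonneg]
        have := E_bound hf (v - Real.log n)
        have := abs_le_of_mem hf n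
        have h3 : Λ n * |f n| ≤ Λ n := mul_le_of_le_one_right vonMangoldt_nonneg this
        have : 0 ≤ Λ n := vonMangoldt_nonneg
        gcongr
    _ ≤ (v + M) * 1000 := by rw [← Finset.sum_mul]; gcongr; linarith
    _ ≤ _ := by nlinarith

/-- Weighted mean square of `mconv (Λ f) (mconv f rker)`. -/
theorem L2_bound : ∃ C : ℝ, 0 < C ∧ ∀ f : ℕ → ℝ, (∀ n, f n ∈ Set.Icc (-1 : ℝ) 1) → IsCM f → ∀ σ, 0 < σ → σ ≤ 1 →
    Integrable (fun v => (mconv (fun n => Λ n * f n) (mconv f rker) v) ^ 2 * Real.exp (-(2 * σ * v))) ∧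
    ∫ v, (mconv (fun n => Λ n * f n) (mconv f rker) v) ^ 2 * Real.exp (-(2 * σ * v)) ≤
      C * σ ^ (-(4 / Real.pi) - 1) := by
  obtain ⟨W, hW, hwin⟩ := window_bound
  obtain ⟨T, hT, htr⟩ := transform_bound
  obtain ⟨K, hK, hCf⟩ := Cf_bound
  have hpi := Real.pi_pos
  have hb : 1 < 2 - 3 / Real.pi := by
    have : 3 / Real.pi < 1 := by rw [div_lt_one hpi]; exact Real.pi_gt_three
    linarith
  have hb2 : 2 - 3 / Real.pi ≤ 2 := by
    have : 0 ≤ 3 / Real.pi := by positivity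
    linarith
  have hsw := summable_weights _ hb
  set S := ∑' k : ℤ, (1 + |(k : ℝ)|) ^ (-(2 - 3 / Real.pi)) with hS
  have hS0 : 0 ≤ S := tsum_nonneg fun k => by positivity
  refine ⟨36 * T ^ 2 * (S * W) + 1, by positivity, fun f hf hcm σ h0 h1 => ?_⟩
  set Φ : ℝ → ℂ := fun v => ((mconv (fun n => Λ n * f n) (mconv f rker) v : ℝ) : ℂ) with hΦ
  have hEm : Measurable (mconv f rker) := mconv_measurable f rker rker_measurable
  have hΦm : Measurable Φ := Complex.measurable_ofReal.comp (mconv_measurable _ _ hEm)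
  obtain ⟨i1, i2, e⟩ := lap_plancherel Φ hΦm (fun v hv => by simp only [hΦ]; rw [mconv_neg _ _ hv]; simp) K (fun v hv => by
    simp only [hΦ]; rw [Complex.norm_real]; exact hCf f hf v hv) σ h0
  have hn : ∀ v, ‖Φ v‖ ^ 2 = (mconv (fun n => Λ n * f n) (mconv f rker) v) ^ 2 := fun v => by
    simp only [hΦ]; rw [Complex.norm_real, Real.norm_eq_abs, sq_abs]
  simp only [hn] at i1 e
  refine ⟨i1, ?_⟩
  set a : ℕ → ℂ := fun n => ((Λ n * f n : ℝ) : ℂ) with ha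
  have han : ∀ n, ‖a n‖ ≤ Λ n := fun n => by
    simp only [ha]
    rw [Complex.norm_real, Real.norm_eq_abs, abs_mul, abs_of_nonneg vonMangoldt_nonneg]
    exact mul_le_of_le_one_right vonMangoldt_nonneg (abs_le_of_mem hf n)
  have hlap : ∀ t : ℝ, lap Φ (σ + I * t) = dsum a (1 + σ + I * t) *
      (dsum (fun n => f n) (1 + σ + I * t) * lap (fun v => (rker v : ℂ)) (σ + I * t)) := fun t => by
    have e1 : Φ = mconv a (fun v => ((mconv f rker v : ℝ) : ℂ)) := by
      funext v; simp only [hΦ, ha]; rw [mconv_ofReal]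
    have e2 : (fun v => ((mconv f rker v : ℝ) : ℂ)) = mconv (fun n => (f n : ℂ)) (fun v => (rker v : ℂ)) := by
      funext v; rw [mconv_ofReal]
    rw [e1, lap_mconv a (fun v => ((mconv f rker v : ℝ) : ℂ)) (Complex.measurable_ofReal.comp hEm) (fun v hv => by rw [mconv_neg _ _ hv]; simp) 1000
      (fun v hv => by
        rw [Complex.norm_real, Real.norm_eq_abs]
        exact (E_bound hf v).trans (by linarith)) σ t h0 (summable_of_norm_le a han σ h0), e2,
      lap_mconv (fun n => (f n : ℂ)) (fun v => (rker v : ℂ)) (Complex.measurable_ofReal.comp rker_measurable) (fun v hv => by rw [rker_neg hv]; simp) 1000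
      (fun v hv => by
        rw [Complex.norm_real, Real.norm_eq_abs]
        have : Real.exp (-v) ≤ 1 := Real.exp_le_one_iff.2 (by linarith)
        exact (rker_bound v hv).trans (by nlinarith)) σ t h0]
    refine Summable.of_nonneg_of_le (fun n => by positivity) (fun n => ?_) (summable_rpow σ h0)
    rw [Complex.norm_real, Real.norm_eq_abs]
    exact mul_le_of_le_one_left (by positivity) (abs_le_of_mem hf n)
  -- local mean squares of the twisted series
  set F : ℤ → ℝ → ℝ := fun k t => ‖dsum a (1 + σ + I * t) * (1 / (σ + I * (t - k : ℝ) + 1))‖ ^ 2 with hF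
  have hFk : ∀ k : ℤ, Integrable (F k) ∧ ∫ t, F k t ≤ W / σ := fun k => by
    obtain ⟨j1, j2⟩ := hwin (fun n => a n * (n : ℂ) ^ (-(I * k))) (fun n => by
      rcases Nat.eq_zero_or_pos n with rfl | hn
      · simp [ha]
      · rw [norm_mul, norm_natCast_cpow_I n hn, mul_one]; exact han n) σ h0
    have ee : F k = fun t : ℝ => (fun u : ℝ => ‖dsum (fun n => a n * (n : ℂ) ^ (-(I * k))) (1 + σ + I * u) *
        (1 / (σ + I * u + 1))‖ ^ 2) (t - k) := by
      funext t
      simp only [hF]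
      rw [dsum_twist a (by simp [ha]) k σ t]
    rw [ee]
    refine ⟨j1.comp_sub_right (k : ℝ), ?_⟩
    rw [integral_sub_right_eq_self (fun u : ℝ => ‖dsum (fun n => a n * (n : ℂ) ^ (-(I * k))) (1 + σ + I * u) *
        (1 / (σ + I * u + 1))‖ ^ 2) (k : ℝ)]
    exact j2
  have hmain := window_sum (fun t : ℝ => ‖lap Φ (σ + I * t)‖ ^ 2) i2 F (fun k => (hFk k).1) (fun k t => by positivity)
    (W / σ) (fun k => (hFk k).2)
    (fun k => 36 * (T * σ ^ (-(2 / Real.pi))) ^ 2 * (1 + |(k : ℝ)|) ^ (-(2 - 3 / Real.pi)))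
    (fun k => by positivity) (hsw.mul_left _) (fun k t hk1 hk2 => by
      simp only [hF]
      rw [hlap t, norm_mul, norm_mul (dsum a _), mul_pow, mul_pow ‖dsum a _‖ ‖1 / _‖]
      have hA : (1 : ℝ) / 9 ≤ ‖(1 / (σ + I * (t - k : ℝ) + 1) : ℂ)‖ ^ 2 := by
        rw [norm_div, norm_one, div_pow, one_pow]
        have hne : (0 : ℝ) < ‖(σ + I * (t - k : ℝ) + 1 : ℂ)‖ := by
          have := Complex.re_le_norm (σ + I * (t - k : ℝ) + 1 : ℂ)
          have hre : (σ + I * (t - k : ℝ) + 1 : ℂ).re = σ + 1 := by simp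
          rw [hre] at this
          linarith
        have hle : ‖(σ + I * (t - k : ℝ) + 1 : ℂ)‖ ≤ 3 := by
          calc _ ≤ ‖(σ : ℂ)‖ + ‖I * (t - k : ℝ)‖ + ‖(1 : ℂ)‖ := norm_add₃_le
            _ = |σ| + |t - k| + 1 := by
                rw [norm_mul, Complex.norm_I, Complex.norm_real, Complex.norm_real]; simp
            _ ≤ 3 := by
                rw [abs_of_pos h0, abs_of_nonneg (by linarith)]; linarith
        have : ‖(σ + I * (t - k : ℝ) + 1 : ℂ)‖ ^ 2 ≤ 3 ^ 2 := by gcongr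
        rw [show (9 : ℝ) = 3 ^ 2 by norm_num]
        gcongr
      have hD := htr f hf hcm σ t h0 h1
      have hw : ((1 + |t|) ^ (-(1 - 3 / (2 * Real.pi)))) ^ 2 ≤ 4 * (1 + |(k : ℝ)|) ^ (-(2 - 3 / Real.pi)) := by
        have t0 : 0 < 1 + |t| := by positivity
        have e1 : ((1 + |t|) ^ (-(1 - 3 / (2 * Real.pi)))) ^ 2 = (1 + |t|) ^ (-(2 - 3 / Real.pi)) := by
          rw [← Real.rpow_natCast, ← Real.rpow_mul t0.le]
          congr 1; push_cast; field_simp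
        have hkt : (1 + |(k : ℝ)|) / 2 ≤ 1 + |t| := by
          have : |(k : ℝ)| ≤ |t| + 1 := by
            have := abs_sub_abs_le_abs_sub (k : ℝ) t
            rw [abs_of_nonpos (by linarith : (k : ℝ) - t ≤ 0)] at this
            linarith
          have := abs_nonneg t
          linarith
        have e2 : (1 + |t|) ^ (-(2 - 3 / Real.pi)) ≤ ((1 + |(k : ℝ)|) / 2) ^ (-(2 - 3 / Real.pi)) :=
          Real.rpow_le_rpow_of_nonpos (by positivity) hkt (by linarith)
        have e3 : ((1 + |(k : ℝ)|) / 2) ^ (-(2 - 3 / Real.pi)) =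
            2 ^ (2 - 3 / Real.pi) * (1 + |(k : ℝ)|) ^ (-(2 - 3 / Real.pi)) := by
          rw [Real.div_rpow (by positivity) (by norm_num), Real.rpow_neg (by norm_num : (0 : ℝ) ≤ 2), div_inv_eq_mul, mul_comm]
        have e4 : (2 : ℝ) ^ (2 - 3 / Real.pi) ≤ 4 := by
          calc (2 : ℝ) ^ (2 - 3 / Real.pi) ≤ 2 ^ (2 : ℝ) := Real.rpow_le_rpow_of_exponent_le (by norm_num) hb2
            _ = 4 := by norm_num
        rw [e1]
        refine e2.trans ?_
        rw [e3]
        gcongr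
      calc _ ≤ ‖dsum a (1 + σ + I * t)‖ ^ 2 * (T * σ ^ (-(2 / Real.pi)) * (1 + |t|) ^ (-(1 - 3 / (2 * Real.pi)))) ^ 2 := by gcongr
        _ = ‖dsum a (1 + σ + I * t)‖ ^ 2 * ((T * σ ^ (-(2 / Real.pi))) ^ 2 * ((1 + |t|) ^ (-(1 - 3 / (2 * Real.pi)))) ^ 2) := by ring
        _ ≤ ‖dsum a (1 + σ + I * t)‖ ^ 2 * ((T * σ ^ (-(2 / Real.pi))) ^ 2 * (4 * (1 + |(k : ℝ)|) ^ (-(2 - 3 / Real.pi)))) := by gcongr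
        _ = 36 * (T * σ ^ (-(2 / Real.pi))) ^ 2 * (1 + |(k : ℝ)|) ^ (-(2 - 3 / Real.pi)) * (‖dsum a (1 + σ + I * t)‖ ^ 2 * (1 / 9)) := by ring
        _ ≤ _ := mul_le_mul_of_nonneg_left (mul_le_mul_of_nonneg_left hA (by positivity)) (by positivity))
  rw [e, tsum_mul_left, ← hS] at hmain
  have hσ4 : (σ ^ (-(2 / Real.pi))) ^ 2 / σ = σ ^ (-(4 / Real.pi) - 1) := by
    rw [Real.rpow_sub_one h0.ne', ← Real.rpow_natCast, ← Real.rpow_mul h0.le]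
    congr 2; push_cast; ring
  have hI0 : 0 ≤ ∫ v, (mconv (fun n => Λ n * f n) (mconv f rker) v) ^ 2 * Real.exp (-(2 * σ * v)) :=
    integral_nonneg fun v => by positivity
  have h2pi : 1 ≤ 2 * Real.pi := by linarith [Real.pi_gt_three]
  have hσ5 : 0 < σ ^ (-(4 / Real.pi) - 1) := by positivity
  calc _ ≤ 2 * Real.pi * ∫ v, (mconv (fun n => Λ n * f n) (mconv f rker) v) ^ 2 * Real.exp (-(2 * σ * v)) :=
        le_mul_of_one_le_left hI0 h2pi
    _ ≤ _ := hmain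
    _ = 36 * T ^ 2 * (S * W) * ((σ ^ (-(2 / Real.pi))) ^ 2 / σ) := by ring
    _ ≤ _ := by rw [hσ4, add_mul]; linarith

end

/-! ### First moment of the smoothed sum -/

section
open Finset Filter MeasureTheory ArithmeticFunction

theorem E_measurable (f : ℕ → ℝ) : Measurable (mconv f rker) := mconv_measurable f rker rker_measurable

theorem E_integrableOn {f : ℕ → ℝ} (hf : ∀ n, f n ∈ Set.Icc (-1 : ℝ) 1) (a b : ℝ) :
    IntegrableOn (fun v => |mconv f rker v|) (Set.Ioc a b) :=
  IntegrableOn.of_bound measure_Ioc_lt_top (E_measurable f).abs.aestronglyMeasurable 1000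
    (.of_forall fun v => by rw [Real.norm_eq_abs, abs_abs]; exact E_bound hf v)

theorem E_intervalIntegrable {f : ℕ → ℝ} (hf : ∀ n, f n ∈ Set.Icc (-1 : ℝ) 1) (a b : ℝ) :
    IntervalIntegrable (fun v => |mconv f rker v|) volume a b :=
  ⟨E_integrableOn hf a b, E_integrableOn hf b a⟩

/-- `L2_bound` with `σ = 1 / V` and `mul_E_eq` give the second moment on `[V, 2V]`; the first moment follows from
`|E| ≤ l E² / 2 + 1 / l` with `l = V^{1-2/π}`. -/
theorem dyadic_bound : ∃ C : ℝ, 0 < C ∧ ∀ f : ℕ → ℝ, (∀ n, f n ∈ Set.Icc (-1 : ℝ) 1) → IsCM f → ∀ V, 1 ≤ V →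
    ∫ v in V..2 * V, |mconv f rker v| ≤ C * V ^ (2 / Real.pi) := by
  obtain ⟨C, hC, h⟩ := L2_bound
  have hpi := Real.pi_pos
  refine ⟨C * Real.exp 4 + 4000 ^ 2 + 1, by positivity, fun f hf hcm V hV => ?_⟩
  have hV0 : 0 < V := by linarith
  obtain ⟨i, hi⟩ := h f hf hcm (1 / V) (by positivity) (by rw [div_le_one hV0]; exact hV)
  set Cf := mconv (fun n => Λ n * f n) (mconv f rker) with hCf
  set l := V ^ (1 - 2 / Real.pi) with hl
  have hl0 : 0 < l := by positivity
  set p := V ^ (2 / Real.pi) with hp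
  have hp0 : 0 < p := by positivity
  have hp1 : 1 ≤ p := Real.one_le_rpow hV (by positivity)
  have hlp : l * p = V := by rw [hl, hp, ← Real.rpow_add hV0]; simp
  have hle : V ≤ 2 * V := by linarith
  have hInt : ∫ v in V..2 * V, Real.exp 4 * (Cf v ^ 2 * Real.exp (-(2 * (1 / V) * v))) ≤ Real.exp 4 * (C * (p ^ 2 * V)) := by
    rw [intervalIntegral.integral_const_mul]
    gcongr
    calc _ ≤ ∫ v, Cf v ^ 2 * Real.exp (-(2 * (1 / V) * v)) := by
          rw [intervalIntegral.integral_of_le hle]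
          exact setIntegral_le_integral i (.of_forall fun v => by positivity)
      _ ≤ C * (1 / V) ^ (-(4 / Real.pi) - 1) := hi
      _ = _ := by
          rw [one_div, Real.inv_rpow hV0.le, ← Real.rpow_neg hV0.le, hp, ← Real.rpow_natCast, ← Real.rpow_mul hV0.le,
            ← Real.rpow_add_one hV0.ne']
          congr 2; push_cast; ring
  have hpt : ∀ v ∈ Set.Icc V (2 * V), |mconv f rker v| ≤
      (l / V ^ 2) * (Real.exp 4 * (Cf v ^ 2 * Real.exp (-(2 * (1 / V) * v)))) + ((l / V ^ 2) * 4000 ^ 2 + 1 / l) := by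
    intro v hv
    have hv0 : 0 < v := by linarith [hv.1]
    have e := mul_E_eq hcm v
    have b := E2_bound hf v
    rw [← hCf] at e
    set e2 := mconv f (fun u => u * rker u) v
    set E := mconv f rker v
    have h1 : 1 ≤ Real.exp 4 * Real.exp (-(2 * (1 / V) * v)) := by
      rw [← Real.exp_add]
      apply Real.one_le_exp
      have : 1 / V * v ≤ 2 := by
        rw [one_div, inv_mul_le_iff₀ hV0]; linarith [hv.2]
      linarith
    have h2 : (v * E) ^ 2 ≤ 2 * Cf v ^ 2 + 2 * 4000 ^ 2 := by
      have h3 : e2 ^ 2 ≤ 4000 ^ 2 := sq_le_sq' (by linarith [(abs_le.1 b).1]) (by linarith [(abs_le.1 b).2])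
      rw [e]
      nlinarith [sq_nonneg (Cf v - e2)]
    have h4 : V ^ 2 * E ^ 2 ≤ (v * E) ^ 2 := by
      rw [mul_pow]
      have : V ≤ v := hv.1
      gcongr
    have h5 : Cf v ^ 2 ≤ Real.exp 4 * (Cf v ^ 2 * Real.exp (-(2 * (1 / V) * v))) := by
      nlinarith [sq_nonneg (Cf v)]
    have h6 : E ^ 2 ≤ 2 * (1 / V ^ 2 * (Real.exp 4 * (Cf v ^ 2 * Real.exp (-(2 * (1 / V) * v))) + 4000 ^ 2)) := by
      rw [← mul_le_mul_iff_right₀ (show 0 < V ^ 2 by positivity)]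
      calc V ^ 2 * E ^ 2 ≤ 2 * (Real.exp 4 * (Cf v ^ 2 * Real.exp (-(2 * (1 / V) * v))) + 4000 ^ 2) := by linarith
        _ = _ := by field_simp
    have h7 : |E| ≤ l / 2 * E ^ 2 + 1 / l := by
      have : 0 ≤ (l * |E| - 1) ^ 2 := sq_nonneg _
      have e3 : l / 2 * E ^ 2 + 1 / l - |E| = ((l * |E| - 1) ^ 2 + 1) / (2 * l) := by
        rw [← sq_abs E]; field_simp; ring
      have : 0 ≤ ((l * |E| - 1) ^ 2 + 1) / (2 * l) := by positivity
      linarith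
    calc |E| ≤ l / 2 * E ^ 2 + 1 / l := h7
      _ ≤ l / 2 * (2 * (1 / V ^ 2 * (Real.exp 4 * (Cf v ^ 2 * Real.exp (-(2 * (1 / V) * v))) + 4000 ^ 2))) + 1 / l := by gcongr
      _ = _ := by ring
  have ii : IntervalIntegrable (fun v => Real.exp 4 * (Cf v ^ 2 * Real.exp (-(2 * (1 / V) * v)))) volume V (2 * V) :=
    (i.const_mul _).intervalIntegrable
  calc ∫ v in V..2 * V, |mconv f rker v| ≤ ∫ v in V..2 * V, ((l / V ^ 2) *
        (Real.exp 4 * (Cf v ^ 2 * Real.exp (-(2 * (1 / V) * v)))) + ((l / V ^ 2) * 4000 ^ 2 + 1 / l)) :=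
        intervalIntegral.integral_mono_on hle (E_intervalIntegrable hf _ _)
          ((ii.const_mul _).add intervalIntegrable_const) hpt
    _ = (l / V ^ 2) * (∫ v in V..2 * V, Real.exp 4 * (Cf v ^ 2 * Real.exp (-(2 * (1 / V) * v)))) +
        V * ((l / V ^ 2) * 4000 ^ 2 + 1 / l) := by
        rw [intervalIntegral.integral_add (ii.const_mul _) intervalIntegrable_const, intervalIntegral.integral_const_mul,
          intervalIntegral.integral_const, smul_eq_mul]
        congr 2; ring
    _ ≤ (l / V ^ 2) * (Real.exp 4 * (C * (p ^ 2 * V))) + V * ((l / V ^ 2) * 4000 ^ 2 + 1 / l) := by gcongr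
    _ = C * Real.exp 4 * p + 4000 ^ 2 * (1 / p) + p := by
        rw [← hlp]; field_simp; ring
    _ ≤ C * Real.exp 4 * p + 4000 ^ 2 * p + p := by
        have : 1 / p ≤ p := by rw [div_le_iff₀ hp0]; nlinarith
        gcongr
    _ = _ := by ring

/-- Summation of `dyadic_bound` over dyadic blocks. -/
theorem L1_bound : ∃ C : ℝ, 0 < C ∧ ∀ f : ℕ → ℝ, (∀ n, f n ∈ Set.Icc (-1 : ℝ) 1) → IsCM f → ∀ X, 1 ≤ X →
    ∫ v in (0 : ℝ)..X, |mconv f rker v| ≤ C * X ^ (2 / Real.pi) := by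
  obtain ⟨C, hC, h⟩ := dyadic_bound
  have hpi := Real.pi_pos
  have hpi4 := Real.pi_lt_four
  have h2 : (1.4 : ℝ) ≤ 2 ^ (2 / Real.pi) := by
    calc (1.4 : ℝ) ≤ √2 := Real.le_sqrt_of_sq_le (by norm_num)
      _ = 2 ^ (1 / 2 : ℝ) := Real.sqrt_eq_rpow 2
      _ ≤ _ := Real.rpow_le_rpow_of_exponent_le (by norm_num) (by
          rw [div_le_div_iff₀ (by norm_num) hpi]; linarith)
  refine ⟨3 * C + 2000, by positivity, fun f hf hcm => ?_⟩
  have hind : ∀ n : ℕ, ∀ X : ℝ, 1 ≤ X → X ≤ 2 ^ n →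
      ∫ v in (0 : ℝ)..X, |mconv f rker v| ≤ (3 * C + 2000) * X ^ (2 / Real.pi) := by
    intro n
    have base : ∀ X : ℝ, 1 ≤ X → X ≤ 2 → ∫ v in (0 : ℝ)..X, |mconv f rker v| ≤ (3 * C + 2000) * X ^ (2 / Real.pi) := by
      intro X h1 h2
      have hX : 1 ≤ X ^ (2 / Real.pi) := Real.one_le_rpow h1 (by positivity)
      calc _ ≤ ∫ v in (0 : ℝ)..X, (1000 : ℝ) :=
            intervalIntegral.integral_mono_on (by linarith) (E_intervalIntegrable hf _ _) intervalIntegrable_const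
              fun v _ => E_bound hf v
        _ = X * 1000 := by rw [intervalIntegral.integral_const, smul_eq_mul, sub_zero]
        _ ≤ (3 * C + 2000) * 1 := by nlinarith
        _ ≤ _ := by gcongr
    induction n with
    | zero => intro X h1 h2; exact base X h1 (by norm_num at h2; linarith)
    | succ n ih =>
      intro X h1 hX
      rcases le_total X 2 with hX2 | hX2
      · exact base X h1 hX2
      · have a1 := ih (X / 2) (by linarith) (by rw [pow_succ] at hX; linarith)
        have a2 := h f hf hcm (X / 2) (by linarith)
        rw [mul_div_cancel₀ X two_ne_zero] at a2
        rw [← intervalIntegral.integral_add_adjacent_intervals (E_intervalIntegrable hf 0 (X / 2))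
          (E_intervalIntegrable hf (X / 2) X)]
        have e : X ^ (2 / Real.pi) = 2 ^ (2 / Real.pi) * (X / 2) ^ (2 / Real.pi) := by
          rw [← Real.mul_rpow (by norm_num) (by linarith)]; congr 1; ring
        rw [e]
        have q : 0 < (X / 2) ^ (2 / Real.pi) := Real.rpow_pos_of_pos (by linarith) _
        have : (3 * C + 2000) * (1.4 * (X / 2) ^ (2 / Real.pi)) ≤
            (3 * C + 2000) * (2 ^ (2 / Real.pi) * (X / 2) ^ (2 / Real.pi)) := by gcongr
        nlinarith
  intro X hX
  obtain ⟨n, hn⟩ := pow_unbounded_of_one_lt X (one_lt_two : (1 : ℝ) < 2)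
  exact hind n X hX hn.le

end

/-! ### Pointwise decay -/

section
open Finset Filter MeasureTheory ArithmeticFunction

/-- `E` at a point is its average over the window of length `η` to the right, up to `E_lip`. -/
theorem E_local {f : ℕ → ℝ} (hf : ∀ n, f n ∈ Set.Icc (-1 : ℝ) 1) (u η : ℝ) (hη : 0 < η) :
    |mconv f rker u| ≤ 1 / η * (∫ v in Set.Ioc u (u + η), |mconv f rker v|) + 11000 * (η + Real.exp (-u)) := by
  have h : ∫ v in Set.Ioc u (u + η), |mconv f rker u| ≤
      ∫ v in Set.Ioc u (u + η), (|mconv f rker v| + 11000 * (η + Real.exp (-u))) := by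
    refine setIntegral_mono_on (integrableOn_const (by simp)) ((E_integrableOn hf _ _).add (integrableOn_const (by simp)))
      measurableSet_Ioc fun v hv => ?_
    have h1 := E_lip hf u v hv.1.le
    have h2 : Real.exp (-v) ≤ Real.exp (-u) := Real.exp_le_exp.2 (by linarith [hv.1])
    have h3 := abs_sub_abs_le_abs_sub (mconv f rker u) (mconv f rker v)
    rw [abs_sub_comm] at h3
    linarith [hv.2]
  rw [integral_add (E_integrableOn hf _ _) (integrableOn_const (by simp)), setIntegral_const, setIntegral_const,
    measureReal_def, Real.volume_Ioc, add_sub_cancel_left, ENNReal.toReal_ofReal hη.le, smul_eq_mul, smul_eq_mul] at h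
  rw [← mul_le_mul_iff_right₀ hη]
  refine h.trans (le_of_eq ?_)
  field_simp

/-- For fixed `v`, the integers `d` with `v` in the window of length `η` after `X - log d` form a short interval, to which
`brun_titchmarsh` applies since `log d > W + 1`. -/
theorem short_window : ∃ C : ℝ, 0 < C ∧ ∀ X W η : ℝ, 1 ≤ W → 1 / W ≤ η → η ≤ 1 → ∀ v : ℝ,
    ∑ d ∈ (Icc 1 ⌊Real.exp X⌋₊).filter (fun d : ℕ => W + 1 < Real.log d),
      (if X - Real.log d < v ∧ v ≤ X - Real.log d + η then Λ d / d else 0) ≤ C * η := by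
  obtain ⟨C, hC, h⟩ := brun_titchmarsh
  refine ⟨C, hC, fun X W η hW hWη hη v => ?_⟩
  have hη0 : 0 < η := lt_of_lt_of_le (by positivity) hWη
  rcases lt_or_ge (X - v) W with hw | hw
  · rw [Finset.sum_eq_zero]
    · positivity
    · intro d hd
      rw [if_neg]
      rintro ⟨_, h2⟩
      linarith [(mem_filter.1 hd).2]
  · have hD : 1 < Real.exp (X - v) := Real.one_lt_exp_iff.2 (by linarith)
    refine le_trans ?_ (h (Real.exp (X - v)) η hD (by
      rw [Real.log_exp]
      exact (one_div_le_one_div_of_le (by linarith) hw).trans hWη) hη)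
    rw [← Finset.sum_filter]
    refine Finset.sum_le_sum_of_subset_of_nonneg (fun d hd => ?_) fun d _ _ => div_nonneg vonMangoldt_nonneg (by positivity)
    obtain ⟨hd1, h1, h2⟩ := mem_filter.1 hd
    have hd0 : (0 : ℝ) < d := by exact_mod_cast (mem_Icc.1 (mem_filter.1 hd1).1).1
    rw [mem_Ioc, Nat.floor_lt (Real.exp_pos _).le, ← Real.exp_add, Nat.le_floor_iff (Real.exp_pos _).le,
      ← Real.lt_log_iff_exp_lt hd0, ← Real.log_le_iff_le_exp hd0]
    constructor <;> linarith

theorem E_decay : ∃ C : ℝ, 0 < C ∧ ∀ f : ℕ → ℝ, (∀ n, f n ∈ Set.Icc (-1 : ℝ) 1) → IsCM f → ∀ X, 1 ≤ X →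
    X * |mconv f rker X| ≤ C * X ^ (2 / Real.pi) := by
  obtain ⟨B, hB, hbt⟩ := short_window
  obtain ⟨L, hL, hl⟩ := L1_bound
  obtain ⟨M, hM, hm⟩ := mertens
  obtain ⟨P, hP, hpsi⟩ := psi_bound
  have hpi := Real.pi_pos
  have hpi4 := Real.pi_lt_four
  refine ⟨1000 * (2 + M) + (B * L + 11000 * (1 + M + P)) + 4000, by positivity, fun f hf hcm X hX => ?_⟩
  have hX0 : 0 < X := by linarith
  set W := X ^ (2 / Real.pi) with hW
  set η := X ^ (-(1 - 2 / Real.pi)) with hη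
  have h2pi : 0 ≤ 1 - 2 / Real.pi := by
    rw [sub_nonneg, div_le_one hpi]; linarith [Real.pi_gt_three]
  have hW1 : 1 ≤ W := Real.one_le_rpow hX (by positivity)
  have hη0 : 0 < η := by positivity
  have hη1 : η ≤ 1 := Real.rpow_le_one_of_one_le_of_nonpos hX (by linarith)
  have hWη : 1 / W ≤ η := by
    rw [one_div, hW, ← Real.rpow_neg hX0.le]
    refine Real.rpow_le_rpow_of_exponent_le hX ?_
    have : 1 / 2 ≤ 2 / Real.pi := by rw [div_le_div_iff₀ (by norm_num) hpi]; linarith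
    linarith
  have hηX : η * X = W := by
    rw [hη, hW, ← Real.rpow_add_one hX0.ne']; congr 1; ring
  set E := mconv f rker with hE
  set I := Icc 1 ⌊Real.exp X⌋₊ with hI
  have hΛ : ∀ d : ℕ, 0 ≤ Λ d / d := fun d => div_nonneg vonMangoldt_nonneg (by positivity)
  have hmert : ∀ Y : ℝ, 0 ≤ Y → ∑ d ∈ Icc 1 ⌊Real.exp Y⌋₊, Λ d / d ≤ Y + M := fun Y hY => by
    have := (abs_le.1 (hm (Real.exp Y) (Real.one_le_exp hY))).2
    rw [Real.log_exp] at this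
    linarith
  have hsmall : ∑ d ∈ I.filter (fun d : ℕ => ¬ W + 1 < Real.log d), Λ d / d * |E (X - Real.log d)| ≤
      1000 * (2 + M) * W := by
    calc _ ≤ ∑ d ∈ Icc 1 ⌊Real.exp (W + 1)⌋₊, Λ d / d * 1000 := by
          calc _ ≤ ∑ d ∈ I.filter (fun d : ℕ => ¬ W + 1 < Real.log d), Λ d / d * 1000 :=
                Finset.sum_le_sum fun d _ => mul_le_mul_of_nonneg_left (E_bound hf _) (hΛ d)
            _ ≤ _ := by
                refine Finset.sum_le_sum_of_subset_of_nonneg (fun d hd => ?_) fun d _ _ => mul_nonneg (hΛ d) (by norm_num)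
                obtain ⟨h1, h2⟩ := mem_filter.1 hd
                exact mem_Icc_floor_exp.2 ⟨(mem_Icc.1 h1).1, by linarith⟩
      _ ≤ (W + 1 + M) * 1000 := by
          rw [← Finset.sum_mul]
          gcongr
          exact hmert _ (by linarith)
      _ ≤ _ := by nlinarith
  -- large `d`, after averaging over a window of length `η`
  have hlarge : ∑ d ∈ I.filter (fun d : ℕ => W + 1 < Real.log d), Λ d / d * |E (X - Real.log d)| ≤
      (B * L + 11000 * (1 + M + P)) * W := by
    set S := I.filter (fun d : ℕ => W + 1 < Real.log d) with hS
    have hSI : S ⊆ I := filter_subset _ _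
    have hmain : ∑ d ∈ S, Λ d / d * ∫ v in Set.Ioc (X - Real.log d) (X - Real.log d + η), |E v| ≤ B * η * (L * W) := by
      have e1 : ∀ d ∈ S, Λ d / d * ∫ v in Set.Ioc (X - Real.log d) (X - Real.log d + η), |E v| =
          ∫ v in Set.Ioc 0 X, Λ d / d * Set.indicator (Set.Ioc (X - Real.log d) (X - Real.log d + η)) (fun v => |E v|) v := by
        intro d hd
        have h1 := (mem_Icc_floor_exp.1 (hSI hd)).2
        have h2 := (mem_filter.1 hd).2
        rw [integral_const_mul, setIntegral_indicator measurableSet_Ioc, Set.inter_eq_right.2]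
        intro v hv
        exact ⟨by linarith [hv.1], by linarith [hv.2]⟩
      have i1 : ∀ d : ℕ, IntegrableOn (fun v => Λ d / d *
          Set.indicator (Set.Ioc (X - Real.log d) (X - Real.log d + η)) (fun v => |E v|) v) (Set.Ioc 0 X) := fun d =>
        ((E_integrableOn hf 0 X).indicator measurableSet_Ioc).const_mul _
      rw [Finset.sum_congr rfl e1, ← integral_finsetSum _ fun d _ => i1 d]
      calc _ ≤ ∫ v in Set.Ioc 0 X, B * η * |E v| := by
            refine setIntegral_mono_on (integrable_finsetSum _ fun d _ => i1 d) ((E_integrableOn hf 0 X).const_mul _)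
              measurableSet_Ioc fun v _ => ?_
            refine le_trans (le_of_eq ?_) (mul_le_mul_of_nonneg_right (hbt X W η hW1 hWη hη1 v) (abs_nonneg (E v)))
            rw [Finset.sum_mul]
            refine Finset.sum_congr rfl fun d _ => ?_
            by_cases hv : X - Real.log d < v ∧ v ≤ X - Real.log d + η
            · rw [if_pos hv, Set.indicator_of_mem (show v ∈ Set.Ioc _ _ from hv)]
            · rw [if_neg hv, Set.indicator_of_notMem (show v ∉ Set.Ioc _ _ from hv), mul_zero, zero_mul]
        _ = B * η * ∫ v in (0 : ℝ)..X, |E v| := by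
            rw [integral_const_mul, intervalIntegral.integral_of_le hX0.le]
        _ ≤ _ := by
            have := hl f hf hcm X hX
            gcongr
    have herr : ∑ d ∈ S, Λ d / d * (11000 * (η + Real.exp (-(X - Real.log d)))) ≤ 11000 * (1 + M + P) * W := by
      calc _ ≤ ∑ d ∈ I, Λ d / d * (11000 * (η + Real.exp (-(X - Real.log d)))) :=
            Finset.sum_le_sum_of_subset_of_nonneg hSI fun d _ _ => mul_nonneg (hΛ d) (by positivity)
        _ = 11000 * (η * ∑ d ∈ I, Λ d / d + (∑ d ∈ I, Λ d) / Real.exp X) := by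
            rw [Finset.mul_sum, Finset.sum_div, ← Finset.sum_add_distrib, Finset.mul_sum]
            refine Finset.sum_congr rfl fun d hd => ?_
            have h1 := (mem_Icc.1 hd).1
            have hd0 : (0 : ℝ) < d := by exact_mod_cast h1
            rw [exp_neg_sub_log X d h1]
            field_simp
        _ ≤ 11000 * (η * (X + M) + P) := by
            have h1 := hmert X hX0.le
            have h2 : (∑ d ∈ I, Λ d) / Real.exp X ≤ P := by
              rw [div_le_iff₀ (Real.exp_pos X)]
              exact hpsi _ (Real.exp_pos X).le
            gcongr
        _ ≤ _ := by
            have h1 : η * M ≤ M * W := by nlinarith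
            have h2 : P ≤ P * W := le_mul_of_one_le_right (by linarith) hW1
            rw [mul_add η, hηX]
            nlinarith
    calc _ ≤ ∑ d ∈ S, Λ d / d * (1 / η * (∫ v in Set.Ioc (X - Real.log d) (X - Real.log d + η), |E v|) +
            11000 * (η + Real.exp (-(X - Real.log d)))) :=
          Finset.sum_le_sum fun d _ => mul_le_mul_of_nonneg_left (E_local hf _ η hη0) (hΛ d)
      _ = 1 / η * (∑ d ∈ S, Λ d / d * ∫ v in Set.Ioc (X - Real.log d) (X - Real.log d + η), |E v|) +
          ∑ d ∈ S, Λ d / d * (11000 * (η + Real.exp (-(X - Real.log d)))) := by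
          rw [Finset.mul_sum, ← Finset.sum_add_distrib]
          refine Finset.sum_congr rfl fun d _ => ?_
          ring
      _ ≤ 1 / η * (B * η * (L * W)) + 11000 * (1 + M + P) * W := by gcongr
      _ = _ := by field_simp
  have hCf : |mconv (fun n => Λ n * f n) E X| ≤ ∑ d ∈ I, Λ d / d * |E (X - Real.log d)| := by
    refine (abs_sum_le_sum_abs _ _).trans (Finset.sum_le_sum fun d _ => ?_)
    rw [abs_mul, abs_div, abs_mul, Nat.abs_cast, abs_of_nonneg vonMangoldt_nonneg]
    have : Λ d * |f d| ≤ Λ d := mul_le_of_le_one_right vonMangoldt_nonneg (abs_le_of_mem hf d)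
    gcongr
  rw [← Finset.sum_filter_add_sum_filter_not I (fun d : ℕ => W + 1 < Real.log d)] at hCf
  have hXE : X * |E X| ≤ |mconv (fun n => Λ n * f n) E X| + 4000 := by
    have e := mul_E_eq hcm X
    rw [← hE] at e
    calc X * |E X| = |X * E X| := by rw [abs_mul, abs_of_pos hX0]
      _ ≤ _ := by
          rw [e]
          exact (abs_add_le _ _).trans (by linarith [E2_bound hf X])
  nlinarith

end

/-! ### Conclusion -/

theorem stmt5 :
    ∃ c : ℝ, 0 < c ∧
      ∀ f : ℕ → ℝ, (∀ n, f n ∈ Set.Icc (-1 : ℝ) 1) → IsCM f →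
        ∀ x : ℝ, 3 ≤ x →
          -(c / (Real.log x) ^ ((1 : ℝ) - 2 / Real.pi)) ≤ Lsum f x := by
  obtain ⟨C, hC, h⟩ := E_decay
  refine ⟨C, hC, fun f hf hcm x hx => ?_⟩
  have hx0 : 0 < x := by linarith
  have hX : 1 ≤ Real.log x := by
    rw [Real.le_log_iff_exp_le hx0]
    linarith [Real.exp_one_lt_three]
  have hX0 : 0 < Real.log x := by linarith
  have h1 := Lsum_ge hf hcm (Real.log x)
  rw [Real.exp_log hx0] at h1
  refine le_trans ?_ h1
  refine (abs_le.1 ?_).1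
  have h2 := h f hf hcm (Real.log x) hX
  rw [Real.rpow_sub hX0, Real.rpow_one, div_div_eq_mul_div, le_div_iff₀ hX0]
  linarith
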